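/- arXiv:1606.08122 — 6 statements merged into one kernel-verified Lean document; each statement's English description precedes it below -/
import Mathlib

section
/- Let n ≥ 2 be an integer such that either n = ab + bc + ca + 1 for some integers a, b, c ≥ 1, or n is one of 7, 11, 19, 23, 31, 43, 59, 71, 79, 103, 131, 191, 211, 331, 463. Then there exists a spherical latin bitrade whose canonical group is isomorphic to Z_n ⊕ Z_n. -/
/-- A partial latin square on row set `R`, column set `C` and symbol set `S` (given as
pairwise disjoint types): a finite set of triples such that any two distinct triples agree
in at most one coordinate, and every row, column and symbol occurs in some triple. -/
def IsPartialLatinSquare {R C S : Type} (P : Finset (R × C × S)) : Prop :=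
  (∀ t₁ ∈ P, ∀ t₂ ∈ P, t₁ ≠ t₂ →
      ¬(t₁.1 = t₂.1 ∧ t₁.2.1 = t₂.2.1) ∧
      ¬(t₁.1 = t₂.1 ∧ t₁.2.2 = t₂.2.2) ∧
      ¬(t₁.2.1 = t₂.2.1 ∧ t₁.2.2 = t₂.2.2)) ∧
  (∀ r : R, ∃ t ∈ P, t.1 = r) ∧
  (∀ c : C, ∃ t ∈ P, t.2.1 = c) ∧
  (∀ s : S, ∃ t ∈ P, t.2.2 = s)

/-- The latin bitrade condition: for each triple `(r,c,s) ∈ W` there are unique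
`r' ≠ r`, `c' ≠ c`, `s' ≠ s` with `(r',c,s), (r,c',s), (r,c,s') ∈ B`. -/
def TradeCond {R C S : Type} (W B : Finset (R × C × S)) : Prop :=
  ∀ t ∈ W,
    (∃! r' : R, r' ≠ t.1 ∧ (r', t.2.1, t.2.2) ∈ B) ∧
    (∃! c' : C, c' ≠ t.2.1 ∧ (t.1, c', t.2.2) ∈ B) ∧
    (∃! s' : S, s' ≠ t.2.2 ∧ (t.1, t.2.1, s') ∈ B)

/-- A spherical latin bitrade: a connected latin bitrade `(W,B)` on finite row, column and
symbol sets `R`, `C`, `S` with `|R| + |C| + |S| = |W| + 2`.  (Connectedness says there is no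
latin bitrade `(W',B')` with `W' ⊊ W` and `B' ⊊ B`; for subsets of `W` and `B` the
"agree in at most one coordinate" condition is inherited, and the occurrence condition is
automatic on the sets of rows, columns and symbols actually occupied, so the substantive
conditions on a sub-bitrade are nonemptiness and the two trade conditions.) -/
structure SphericalLatinBitrade where
  R : Type
  C : Type
  S : Type
  instR : Fintype R
  instC : Fintype C
  instS : Fintype S
  W : Finset (R × C × S)
  B : Finset (R × C × S)
  W_nonempty : W.Nonempty
  B_nonempty : B.Nonempty
  W_pls : IsPartialLatinSquare W
  B_pls : IsPartialLatinSquare B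
  tradeWB : TradeCond W B
  tradeBW : TradeCond B W
  connected : ¬ ∃ (W' B' : Finset (R × C × S)), W' ⊂ W ∧ B' ⊂ B ∧
      W'.Nonempty ∧ B'.Nonempty ∧ TradeCond W' B' ∧ TradeCond B' W'
  spherical : @Fintype.card R instR + @Fintype.card C instC + @Fintype.card S instS
      = W.card + 2

/-- The subgroup of relations `r + c + s = 0`, for `(r,c,s) ∈ W`, in the free abelian group
on `R ⊔ C ⊔ S`. -/
def bitradeRelations (T : SphericalLatinBitrade) :
    AddSubgroup (FreeAbelianGroup (T.R ⊕ T.C ⊕ T.S)) :=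
  AddSubgroup.closure
    ((fun t : T.R × T.C × T.S =>
        FreeAbelianGroup.of (Sum.inl t.1) +
        FreeAbelianGroup.of (Sum.inr (Sum.inl t.2.1)) +
        FreeAbelianGroup.of (Sum.inr (Sum.inr t.2.2))) '' (T.W : Set (T.R × T.C × T.S)))

/-- The group `A_W`: the free abelian group on `R ⊔ C ⊔ S` modulo the relations
`r + c + s = 0` for `(r,c,s) ∈ W`. -/
abbrev groupAW (T : SphericalLatinBitrade) : Type :=
  FreeAbelianGroup (T.R ⊕ T.C ⊕ T.S) ⧸ bitradeRelations T

/-- The canonical group of a spherical latin bitrade: the torsion subgroup of `A_W`. -/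
abbrev CanonicalGroup (T : SphericalLatinBitrade) : Type :=
  AddCommGroup.torsion (groupAW T)


/-- Combinatorial data of a plane graph: `vert e b`, `face e b` are the ends and sides of the
edge `e`; `next` links the half edges sharing a corner. -/
structure PlaneData (V E F : Type) where
  vert : E → Bool → V
  face : E → Bool → F
  next : E → Bool → E × Bool
  vne : ∀ e b, vert e b ≠ vert e (!b)
  fne : ∀ e b, face e b ≠ face e (!b)
  nv : ∀ e b, vert (next e b).1 (!(next e b).2) = vert e b
  nf : ∀ e b, face (next e b).1 (next e b).2 = face e b
  inj : ∀ e b e' b', vert e b = vert e' b' → face e b = face e' b' → e = e' ∧ b = b'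
  vsurj : ∀ v, ∃ e b, vert e b = v
  fsurj : ∀ f, ∃ e b, face e b = f
  conn : ∀ Q : E → Prop, (∀ e b, Q e ↔ Q (next e b).1) → ∀ e e', Q e → Q e'
  inh : Nonempty E

namespace PlaneData

variable {V E F : Type} (D : PlaneData V E F)

/-- White triangle of a half edge. -/
def wt (h : E × Bool) : V × E × F := (D.vert h.1 h.2, h.1, D.face h.1 h.2)

/-- Black triangle of a half edge. -/
def bt (h : E × Bool) : V × E × F := (D.vert h.1 (!h.2), h.1, D.face h.1 h.2)

theorem next_inj (e : E) (b : Bool) (e' : E) (b' : Bool) (h : D.next e b = D.next e' b') :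
    e = e' ∧ b = b' := by
  apply D.inj
  · rw [← D.nv e b, ← D.nv e' b', h]
  · rw [← D.nf e b, ← D.nf e' b', h]

theorem next_surj [Finite E] (e : E) (b : Bool) : ∃ e' b', D.next e' b' = (e, b) := by
  have hi : Function.Injective (fun h : E × Bool => D.next h.1 h.2) := by
    rintro ⟨e, b⟩ ⟨e', b'⟩ h
    have := D.next_inj e b e' b' h
    simp [this.1, this.2]
  obtain ⟨⟨e', b'⟩, h⟩ := (Finite.injective_iff_surjective.mp hi) (e, b)
  exact ⟨e', b', h⟩

theorem binj [Finite E] (e : E) (b : Bool) (e' : E) (b' : Bool)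
    (hv : D.vert e (!b) = D.vert e' (!b'))
    (hf : D.face e b = D.face e' b') : e = e' ∧ b = b' := by
  obtain ⟨e₁, b₁, h₁⟩ := D.next_surj e b
  obtain ⟨e₂, b₂, h₂⟩ := D.next_surj e' b'
  have a1 := D.nv e₁ b₁
  have a2 := D.nf e₁ b₁
  have a3 := D.nv e₂ b₂
  have a4 := D.nf e₂ b₂
  rw [h₁] at a1 a2
  rw [h₂] at a3 a4
  simp only at a1 a2 a3 a4
  obtain ⟨rfl, rfl⟩ := D.inj e₁ b₁ e₂ b₂ (by rw [← a1, ← a3, hv]) (by rw [← a2, ← a4, hf])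
  rw [h₁] at h₂
  simpa using h₂

theorem wt_inj : Function.Injective D.wt := by
  rintro ⟨e, b⟩ ⟨e', b'⟩ h
  simp only [wt, Prod.mk.injEq] at h
  have := D.inj e b e' b' h.1 h.2.2
  simp [this.1, this.2]

theorem bt_inj [Finite E] : Function.Injective D.bt := by
  rintro ⟨e, b⟩ ⟨e', b'⟩ h
  simp only [bt, Prod.mk.injEq] at h
  have := D.binj e b e' b' h.1 h.2.2
  simp [this.1, this.2]

set_option linter.unusedSectionVars false

variable [Fintype E]

/-- The white partial latin square. -/
def W : Finset (V × E × F) := Finset.univ.map ⟨D.wt, D.wt_inj⟩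

/-- The black partial latin square. -/
def B : Finset (V × E × F) := Finset.univ.map ⟨D.bt, D.bt_inj⟩

theorem mem_W (t : V × E × F) : t ∈ D.W ↔ ∃ e b, (D.vert e b, e, D.face e b) = t := by
  simp [W, wt]

theorem mem_B (t : V × E × F) : t ∈ D.B ↔ ∃ e b, (D.vert e (!b), e, D.face e b) = t := by
  simp only [B, bt, Finset.mem_map, Finset.mem_univ, true_and, Function.Embedding.coeFn_mk,
    Prod.exists]

theorem bool_cases (b b' : Bool) : b' = b ∨ b' = !b := by cases b <;> cases b' <;> simp

theorem vert_inj (e : E) (b b' : Bool) (h : D.vert e b = D.vert e b') : b = b' := by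
  rcases bool_cases b b' with rfl | rfl
  · rfl
  · exact absurd h (D.vne e b)

theorem face_inj (e : E) (b b' : Bool) (h : D.face e b = D.face e b') : b = b' := by
  rcases bool_cases b b' with rfl | rfl
  · rfl
  · exact absurd h (D.fne e b)

theorem W_pls : IsPartialLatinSquare D.W := by
  refine ⟨?_, ?_, ?_, ?_⟩
  · intro t₁ h₁ t₂ h₂ hne
    obtain ⟨e, b, rfl⟩ := (D.mem_W _).1 h₁
    obtain ⟨e', b', rfl⟩ := (D.mem_W _).1 h₂
    refine ⟨?_, ?_, ?_⟩
    · rintro ⟨h1, h2⟩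
      simp only at h1 h2
      subst h2
      have := D.vert_inj _ _ _ h1
      subst this
      exact hne rfl
    · rintro ⟨h1, h2⟩
      obtain ⟨rfl, rfl⟩ := D.inj _ _ _ _ h1 h2
      exact hne rfl
    · rintro ⟨h1, h2⟩
      simp only at h1 h2
      subst h1
      have := D.face_inj _ _ _ h2
      subst this
      exact hne rfl
  · intro r
    obtain ⟨e, b, rfl⟩ := D.vsurj r
    exact ⟨_, (D.mem_W _).2 ⟨e, b, rfl⟩, rfl⟩
  · intro e
    exact ⟨_, (D.mem_W _).2 ⟨e, true, rfl⟩, rfl⟩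
  · intro f
    obtain ⟨e, b, rfl⟩ := D.fsurj f
    exact ⟨_, (D.mem_W _).2 ⟨e, b, rfl⟩, rfl⟩

theorem B_pls : IsPartialLatinSquare D.B := by
  refine ⟨?_, ?_, ?_, ?_⟩
  · intro t₁ h₁ t₂ h₂ hne
    obtain ⟨e, b, rfl⟩ := (D.mem_B _).1 h₁
    obtain ⟨e', b', rfl⟩ := (D.mem_B _).1 h₂
    refine ⟨?_, ?_, ?_⟩
    · rintro ⟨h1, h2⟩
      simp only at h1 h2
      subst h2
      have := D.vert_inj _ _ _ h1
      have : b = b' := by cases b <;> cases b' <;> simp_all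
      subst this
      exact hne rfl
    · rintro ⟨h1, h2⟩
      obtain ⟨rfl, rfl⟩ := D.binj _ _ _ _ h1 h2
      exact hne rfl
    · rintro ⟨h1, h2⟩
      simp only at h1 h2
      subst h1
      have := D.face_inj _ _ _ h2
      subst this
      exact hne rfl
  · intro r
    obtain ⟨e, b, rfl⟩ := D.vsurj r
    exact ⟨_, (D.mem_B _).2 ⟨e, !b, rfl⟩, by simp⟩
  · intro e
    exact ⟨_, (D.mem_B _).2 ⟨e, true, rfl⟩, rfl⟩
  · intro f
    obtain ⟨e, b, rfl⟩ := D.fsurj f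
    exact ⟨_, (D.mem_B _).2 ⟨e, b, rfl⟩, rfl⟩

theorem next_ne (e : E) (b : Bool) : (D.next e b).1 ≠ e := by
  intro h
  have h1 := D.nv e b
  have h2 := D.nf e b
  rw [h] at h1 h2
  have h1 := D.vert_inj _ _ _ h1
  have h2 := D.face_inj _ _ _ h2
  rw [h2] at h1
  cases b <;> simp at h1

theorem tradeWB : TradeCond D.W D.B := by
  intro t ht
  obtain ⟨e, b, rfl⟩ := (D.mem_W _).1 ht
  refine ⟨⟨D.vert e (!b), ⟨(D.vne e b).symm, (D.mem_B _).2 ⟨e, b, rfl⟩⟩, ?_⟩,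
    ⟨(D.next e b).1, ⟨D.next_ne e b, (D.mem_B _).2 ⟨(D.next e b).1, (D.next e b).2, ?_⟩⟩, ?_⟩,
    ⟨D.face e (!b), ⟨(D.fne e b).symm, (D.mem_B _).2 ⟨e, !b, by simp⟩⟩, ?_⟩⟩
  · rintro r' ⟨hr, hm⟩
    obtain ⟨e', b', h⟩ := (D.mem_B _).1 hm
    simp only [Prod.mk.injEq] at h
    obtain ⟨h1, rfl, h3⟩ := h
    rw [D.face_inj _ _ _ h3] at h1
    exact h1.symm
  · simp [D.nv, D.nf]
  · rintro c' ⟨hr, hm⟩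
    obtain ⟨e', b', h⟩ := (D.mem_B _).1 hm
    simp only [Prod.mk.injEq] at h
    obtain ⟨h1, rfl, h3⟩ := h
    exact (D.binj _ _ _ _ (h1.trans (D.nv e b).symm) (h3.trans (D.nf e b).symm)).1
  · rintro s' ⟨hr, hm⟩
    obtain ⟨e', b', h⟩ := (D.mem_B _).1 hm
    simp only [Prod.mk.injEq] at h
    obtain ⟨h1, rfl, h3⟩ := h
    have := D.vert_inj _ _ _ h1
    subst this
    simpa using h3.symm

theorem tradeBW : TradeCond D.B D.W := by
  intro t ht
  obtain ⟨e, b, rfl⟩ := (D.mem_B _).1 ht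
  obtain ⟨e₁, b₁, h₁⟩ := D.next_surj e b
  have a1 := D.nv e₁ b₁
  have a2 := D.nf e₁ b₁
  have a3 := D.next_ne e₁ b₁
  rw [h₁] at a1 a2 a3
  simp only at a1 a2 a3
  refine ⟨⟨D.vert e b, ⟨D.vne e b, (D.mem_W _).2 ⟨e, b, rfl⟩⟩, ?_⟩,
    ⟨e₁, ⟨a3.symm, (D.mem_W _).2 ⟨e₁, b₁, by simp [a1, a2]⟩⟩, ?_⟩,
    ⟨D.face e (!b), ⟨(D.fne e b).symm, (D.mem_W _).2 ⟨e, !b, by simp⟩⟩, ?_⟩⟩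
  · rintro r' ⟨hr, hm⟩
    obtain ⟨e', b', h⟩ := (D.mem_W _).1 hm
    simp only [Prod.mk.injEq] at h
    obtain ⟨h1, rfl, h3⟩ := h
    rw [D.face_inj _ _ _ h3] at h1
    exact h1.symm
  · rintro c' ⟨hr, hm⟩
    obtain ⟨e', b', h⟩ := (D.mem_W _).1 hm
    simp only [Prod.mk.injEq] at h
    obtain ⟨h1, rfl, h3⟩ := h
    exact (D.inj _ _ _ _ (h1.trans a1) (h3.trans a2)).1
  · rintro s' ⟨hr, hm⟩
    obtain ⟨e', b', h⟩ := (D.mem_W _).1 hm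
    simp only [Prod.mk.injEq] at h
    obtain ⟨h1, rfl, h3⟩ := h
    have := D.vert_inj _ _ _ h1
    subst this
    exact h3.symm

theorem connected' (W' B' : Finset (V × E × F)) (hW : W' ⊆ D.W) (hB : B' ⊆ D.B)
    (hn : W'.Nonempty) (h1 : TradeCond W' B') (h2 : TradeCond B' W') : W' = D.W := by
  -- white to black, same edge and same side
  have wb : ∀ e b, D.wt (e, b) ∈ W' → D.bt (e, b) ∈ B' := by
    intro e b h
    obtain ⟨r, ⟨hr, hm⟩, -⟩ := (h1 _ h).1
    obtain ⟨e', b', h⟩ := (D.mem_B _).1 (hB hm)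
    simp only [Prod.mk.injEq, wt] at h
    obtain ⟨h1, rfl, h3⟩ := h
    have := D.face_inj _ _ _ h3
    subst this
    simpa [bt, wt, h1] using hm
  have wb' : ∀ e b, D.wt (e, b) ∈ W' → D.bt (e, !b) ∈ B' := by
    intro e b h
    obtain ⟨r, ⟨hr, hm⟩, -⟩ := (h1 _ h).2.2
    obtain ⟨e', b', h⟩ := (D.mem_B _).1 (hB hm)
    simp only [Prod.mk.injEq, wt] at h
    obtain ⟨h1, rfl, h3⟩ := h
    have := D.vert_inj _ _ _ h1
    subst this
    simpa [bt, wt, h3] using hm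
  have bw : ∀ e b, D.bt (e, b) ∈ B' → D.wt (e, b) ∈ W' := by
    intro e b h
    obtain ⟨r, ⟨hr, hm⟩, -⟩ := (h2 _ h).1
    obtain ⟨e', b', h⟩ := (D.mem_W _).1 (hW hm)
    simp only [Prod.mk.injEq, bt] at h
    obtain ⟨h1, rfl, h3⟩ := h
    have := D.face_inj _ _ _ h3
    subst this
    simpa [bt, wt, h1] using hm
  have wn : ∀ e b, D.wt (e, b) ∈ W' → D.bt (D.next e b) ∈ B' := by
    intro e b h
    obtain ⟨c, ⟨hr, hm⟩, -⟩ := (h1 _ h).2.1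
    obtain ⟨e', b', h⟩ := (D.mem_B _).1 (hB hm)
    simp only [Prod.mk.injEq, wt] at h
    obtain ⟨h1, rfl, h3⟩ := h
    obtain ⟨h4, h5⟩ := D.binj _ _ _ _ (h1.trans (D.nv e b).symm) (h3.trans (D.nf e b).symm)
    have : D.next e b = (e', b') := by rw [h4, h5]
    rw [this]
    simpa [bt, wt, h1, h3] using hm
  have nw : ∀ e b, D.bt (D.next e b) ∈ B' → D.wt (e, b) ∈ W' := by
    intro e b h
    obtain ⟨c, ⟨hr, hm⟩, -⟩ := (h2 _ h).2.1
    obtain ⟨e', b', h⟩ := (D.mem_W _).1 (hW hm)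
    simp only [Prod.mk.injEq, bt] at h
    obtain ⟨h1, rfl, h3⟩ := h
    obtain ⟨rfl, rfl⟩ := D.inj _ _ _ _ (h1.trans (D.nv e b)) (h3.trans (D.nf e b))
    simpa [bt, wt, D.nv, D.nf] using hm
  have ww : ∀ e b, D.wt (e, b) ∈ W' → ∀ b', D.wt (e, b') ∈ W' := by
    intro e b h b'
    rcases bool_cases b b' with rfl | rfl
    · exact h
    · exact bw _ _ (wb' _ _ h)
  have key := D.conn (fun e => ∀ b, D.wt (e, b) ∈ W') (by
    intro e b
    constructor
    · intro h
      exact ww _ _ (bw _ _ (wn e b (h b)))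
    · intro h
      exact ww _ _ (nw e b (wb _ _ (h _))))
  obtain ⟨t, ht⟩ := hn
  obtain ⟨e, b, rfl⟩ := (D.mem_W _).1 (hW ht)
  apply Finset.Subset.antisymm hW
  intro t' ht'
  obtain ⟨e', b', rfl⟩ := (D.mem_W _).1 ht'
  exact key e e' (ww e b ht) b'

/-- The spherical bitrade of a plane graph. -/
def toBitrade [Fintype V] [Fintype F]
    (hc : Fintype.card V + Fintype.card F = Fintype.card E + 2) : SphericalLatinBitrade where
  R := V
  C := E
  S := F
  instR := inferInstance
  instC := inferInstance
  instS := inferInstance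
  W := D.W
  B := D.B
  W_nonempty := by
    obtain ⟨e⟩ := D.inh
    exact ⟨_, (D.mem_W _).2 ⟨e, true, rfl⟩⟩
  B_nonempty := by
    obtain ⟨e⟩ := D.inh
    exact ⟨_, (D.mem_B _).2 ⟨e, true, rfl⟩⟩
  W_pls := D.W_pls
  B_pls := D.B_pls
  tradeWB := D.tradeWB
  tradeBW := D.tradeBW
  connected := by
    rintro ⟨W', B', hW, hB, hn, -, h1, h2⟩
    exact hW.ne (D.connected' W' B' hW.1 hB.1 hn h1 h2)
  spherical := by
    simp only [W, Finset.card_map, Finset.card_univ, Fintype.card_prod, Fintype.card_bool]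
    omega

end PlaneData

/-- The model group. -/
abbrev Model (n : ℕ) : Type := (ℤ × ℤ) × (ZMod n × ZMod n)

/-- The torsion of the model group. -/
theorem torsion_model {n : ℕ} (hn : 2 ≤ n) {A : Type} [AddCommGroup A] (e : A ≃+ Model n) :
    Nonempty (AddCommGroup.torsion A ≃+ (ZMod n × ZMod n)) := by
  have h0 : ∀ x : A, x ∈ AddCommGroup.torsion A → (e x).1 = 0 := by
    intro x hx
    obtain ⟨m, hm, hx⟩ := isOfFinAddOrder_iff_nsmul_eq_zero.1 hx
    have h2 : m • e x = 0 := by rw [← map_nsmul, hx, map_zero]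
    have h3 : m • (e x).1 = 0 := by
      have := congrArg Prod.fst h2
      simpa using this
    exact (smul_eq_zero.1 h3).resolve_left hm.ne'
  have h1 : ∀ y : ZMod n × ZMod n, e.symm (0, y) ∈ AddCommGroup.torsion A := by
    intro y
    refine isOfFinAddOrder_iff_nsmul_eq_zero.2 ⟨n, by omega, ?_⟩
    rw [← map_nsmul]
    have : n • ((0, y) : Model n) = 0 := by
      ext <;> simp
    rw [this, map_zero]
  refine ⟨{ toFun := fun x => (e x.1).2, invFun := fun y => ⟨e.symm (0, y), h1 y⟩,
            left_inv := ?_, right_inv := ?_, map_add' := ?_ }⟩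
  · intro x
    apply Subtype.ext
    simp only
    rw [← h0 x.1 x.2]
    simp
  · intro y
    simp
  · intro x y
    simp

/-- Homomorphisms out of the model group. -/
theorem model_hom {n : ℕ} {A : Type} [AddCommGroup A] (s t p q : A)
    (hp : (n : ℤ) • p = 0) (hq : (n : ℤ) • q = 0) :
    ∃ θ : Model n →+ A, ∀ i j k l : ℤ,
      θ ((i, j), ((k : ZMod n), (l : ZMod n))) = i • s + j • t + k • p + l • q := by
  let P : ZMod n →+ A := ZMod.lift n ⟨zmultiplesHom A p, by simpa using hp⟩
  let Q : ZMod n →+ A := ZMod.lift n ⟨zmultiplesHom A q, by simpa using hq⟩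
  refine ⟨((zmultiplesHom A s).coprod (zmultiplesHom A t)).coprod (P.coprod Q), ?_⟩
  intro i j k l
  simp [P, Q, add_assoc]

/-- Recognising `A_W` as the model group. -/
theorem groupAW_model (T : SphericalLatinBitrade) {n : ℕ} (γ : T.R ⊕ T.C ⊕ T.S → Model n)
    (hrel : ∀ t ∈ T.W, γ (Sum.inl t.1) + γ (Sum.inr (Sum.inl t.2.1)) +
      γ (Sum.inr (Sum.inr t.2.2)) = 0)
    (hgen : ∀ H : AddSubgroup (Model n), (∀ z, γ z ∈ H) → H = ⊤)
    (huniv : ∀ x : T.R ⊕ T.C ⊕ T.S → groupAW T,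
      (∀ t ∈ T.W, x (Sum.inl t.1) + x (Sum.inr (Sum.inl t.2.1)) +
        x (Sum.inr (Sum.inr t.2.2)) = 0) →
      ∃ θ : Model n →+ groupAW T, ∀ z, θ (γ z) = x z) :
    Nonempty (groupAW T ≃+ Model n) := by
  let φ0 : FreeAbelianGroup (T.R ⊕ T.C ⊕ T.S) →+ Model n := FreeAbelianGroup.lift γ
  have hφ : bitradeRelations T ≤ φ0.ker := by
    unfold bitradeRelations
    rw [AddSubgroup.closure_le]
    rintro _ ⟨t, ht, rfl⟩
    have := hrel t ht
    simpa [φ0] using this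
  let φ : groupAW T →+ Model n := QuotientAddGroup.lift _ φ0 hφ
  let x : T.R ⊕ T.C ⊕ T.S → groupAW T := fun z => QuotientAddGroup.mk (FreeAbelianGroup.of z)
  obtain ⟨θ, hθ⟩ := huniv x (fun t ht => (QuotientAddGroup.eq_zero_iff _).2
    (AddSubgroup.subset_closure ⟨t, ht, rfl⟩))
  have hφx : ∀ z, φ (x z) = γ z := by
    intro z
    show φ0 (FreeAbelianGroup.of z) = γ z
    simp [φ0]
  refine ⟨AddMonoidHom.toAddEquiv φ θ ?_ ?_⟩
  · apply QuotientAddGroup.addMonoidHom_ext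
    apply FreeAbelianGroup.lift_ext
    intro z
    show θ (φ (x z)) = x z
    rw [hφx, hθ]
  · have := hgen (AddMonoidHom.eqLocus (φ.comp θ) (AddMonoidHom.id _)) (by
      intro z
      show φ (θ (γ z)) = γ z
      rw [hθ, hφx])
    refine DFunLike.ext _ _ fun z => ?_
    have hz : z ∈ AddMonoidHom.eqLocus (φ.comp θ) (AddMonoidHom.id _) := by
      rw [this]; trivial
    exact hz

/-- The canonical group of the bitrade of a plane graph. -/
theorem PlaneData.canonical {V E F : Type} [Fintype V] [Fintype E] [Fintype F]
    (D : PlaneData V E F) (hc : Fintype.card V + Fintype.card F = Fintype.card E + 2)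
    {n : ℕ} (hn : 2 ≤ n) (α : V → Model n) (β : F → Model n)
    (hrel : ∀ e, α (D.vert e false) + β (D.face e false) =
      α (D.vert e true) + β (D.face e true))
    (hgen : ∀ H : AddSubgroup (Model n), (∀ v, α v ∈ H) → (∀ f, β f ∈ H) → H = ⊤)
    (huniv : ∀ (A : Type) [AddCommGroup A] (x : V → A) (y : F → A),
      (∀ e, x (D.vert e false) + y (D.face e false) =
        x (D.vert e true) + y (D.face e true)) →
      ∃ θ : Model n →+ A, (∀ v, θ (α v) = x v) ∧ (∀ f, θ (β f) = y f)) :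
    ∃ T : SphericalLatinBitrade, Nonempty (CanonicalGroup T ≃+ (ZMod n × ZMod n)) := by
  refine ⟨D.toBitrade hc, ?_⟩
  obtain ⟨e⟩ : Nonempty (groupAW (D.toBitrade hc) ≃+ Model n) := by
    refine groupAW_model (D.toBitrade hc) (Sum.elim α (Sum.elim
      (fun e => - (α (D.vert e false) + β (D.face e false))) β)) ?_ ?_ ?_
    · intro t ht
      obtain ⟨e, b, rfl⟩ := (D.mem_W t).1 ht
      show α _ + -(α _ + β _) + β _ = 0
      cases b
      · abel
      · rw [hrel e]; abel
    · intro H hH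
      exact hgen H (fun v => hH (Sum.inl v)) (fun f => hH (Sum.inr (Sum.inr f)))
    · intro x hx
      have hx' : ∀ e b, x (Sum.inl (D.vert e b)) + x (Sum.inr (Sum.inr (D.face e b))) =
          - x (Sum.inr (Sum.inl e)) := by
        intro e b
        have a := hx _ ((D.mem_W _).2 ⟨e, b, rfl⟩)
        rw [eq_neg_iff_add_eq_zero, ← a]
        abel
      obtain ⟨θ, h1, h2⟩ := huniv (groupAW (D.toBitrade hc)) (fun v => x (Sum.inl v))
        (fun f => x (Sum.inr (Sum.inr f))) (fun e => (hx' e false).trans (hx' e true).symm)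
      refine ⟨θ, ?_⟩
      rintro (v | e | f)
      · exact h1 v
      · have a := hx' e false
        show θ (-(α _ + β _)) = _
        rw [map_neg, map_add, h1, h2, a, neg_neg]
      · exact h2 f
  exact torsion_model hn e


theorem model_gen {n : ℕ} (H : AddSubgroup (Model n)) (h1 : ((1, 0), (0, 0)) ∈ H)
    (h2 : ((0, 1), (0, 0)) ∈ H) (h3 : ((0, 0), (1, 0)) ∈ H) (h4 : ((0, 0), (0, 1)) ∈ H) :
    H = ⊤ := by
  rw [eq_top_iff]
  rintro ⟨⟨i, j⟩, ⟨k, l⟩⟩ -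
  obtain ⟨k, rfl⟩ := ZMod.intCast_surjective k
  obtain ⟨l, rfl⟩ := ZMod.intCast_surjective l
  have := H.add_mem (H.add_mem (H.zsmul_mem h1 i) (H.zsmul_mem h2 j))
    (H.add_mem (H.zsmul_mem h3 k) (H.zsmul_mem h4 l))
  simpa using this

namespace Family

variable (m : Fin 3 → ℕ)

/-- Positions along the three paths. -/
abbrev X : Type := (i : Fin 3) × Fin (m i + 1)

variable {m}

/-- The predecessor of a position. -/
def low : X m → Option (X m)
  | ⟨_, ⟨0, _⟩⟩ => none
  | ⟨i, ⟨k + 1, h⟩⟩ => some ⟨i, ⟨k, by omega⟩⟩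

/-- The end of a path. -/
def top (i : Fin 3) : Option (X m) := some ⟨i, ⟨m i, by omega⟩⟩

theorem top_inj {i j : Fin 3} (h : (top i : Option (X m)) = top j) : i = j := by
  simp only [top, Option.some.injEq, Sigma.mk.injEq] at h
  exact h.1

theorem low_eq_some {x y : X m} (h : low x = some y) : x.1 = y.1 := by
  rcases x with ⟨i, ⟨_ | k, hk⟩⟩
  · simp [low] at h
  · simp only [low, Option.some.injEq] at h
    rw [← h]

theorem some_eq_top {x : X m} {j : Fin 3} (h : some x = top j) : x.1 = j := by
  simp only [top, Option.some.injEq] at h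
  rw [h]

theorem low_ne_top (x : X m) (j : Fin 3) : low x ≠ top j := by
  rcases x with ⟨i, ⟨_ | k, hk⟩⟩
  · simp [low, top]
  · intro h
    have : i = j := low_eq_some h
    subst this
    simp [low, top] at h
    omega

theorem low_ne_some (x : X m) : low x ≠ some x := by
  rcases x with ⟨i, ⟨_ | k, hk⟩⟩ <;> simp [low]

theorem low_inj {x y : X m} (h : low x = low y) (hi : x.1 = y.1) : x = y := by
  rcases x with ⟨i, ⟨_ | k, hk⟩⟩ <;> rcases y with ⟨j, ⟨_ | l, hl⟩⟩ <;>
    simp only at hi <;> subst hi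
  · rfl
  · simp [low] at h
  · simp [low] at h
  · simp [low] at h
    subst h
    rfl

/-- Ends of the edges. -/
def vert : X m ⊕ X m → Bool → Option (X m)
  | Sum.inl x, false => low x
  | Sum.inl x, true => some x
  | Sum.inr x, false => top (x.1 + 1)
  | Sum.inr x, true => top (x.1 + 2)

/-- Sides of the edges. -/
def face : X m ⊕ X m → Bool → Option (X m)
  | Sum.inr x, false => low x
  | Sum.inr x, true => some x
  | Sum.inl x, false => top (x.1 + 1)
  | Sum.inl x, true => top (x.1 + 2)

/-- The corner permutation. -/
def next : X m ⊕ X m → Bool → (X m ⊕ X m) × Bool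
  | Sum.inl ⟨i, ⟨0, _⟩⟩, false => (Sum.inl ⟨i + 2, ⟨0, by omega⟩⟩, true)
  | Sum.inl ⟨i, ⟨k + 1, h⟩⟩, false => (Sum.inl ⟨i, ⟨k, by omega⟩⟩, false)
  | Sum.inl ⟨i, ⟨k, _⟩⟩, true =>
      if h : k < m i then (Sum.inl ⟨i, ⟨k + 1, by omega⟩⟩, true)
      else (Sum.inr ⟨i + 2, ⟨m (i + 2), by omega⟩⟩, true)
  | Sum.inr ⟨i, ⟨0, _⟩⟩, false => (Sum.inr ⟨i + 2, ⟨0, by omega⟩⟩, false)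
  | Sum.inr ⟨i, ⟨k + 1, h⟩⟩, false => (Sum.inr ⟨i, ⟨k, by omega⟩⟩, true)
  | Sum.inr ⟨i, ⟨k, _⟩⟩, true =>
      if h : k < m i then (Sum.inr ⟨i, ⟨k + 1, by omega⟩⟩, false)
      else (Sum.inl ⟨i + 2, ⟨m (i + 2), by omega⟩⟩, false)

theorem i1 : ∀ i : Fin 3, i + 2 + 1 = i := by decide
theorem i2 : ∀ i : Fin 3, i + 2 + 2 = i + 1 := by decide
theorem i3 : ∀ i : Fin 3, i + 1 ≠ i + 2 := by decide

theorem nvnf (e : X m ⊕ X m) (b : Bool) :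
    vert (next e b).1 (!(next e b).2) = vert e b ∧ face (next e b).1 (next e b).2 = face e b := by
  rcases e with ⟨i, ⟨k, hk⟩⟩ | ⟨i, ⟨k, hk⟩⟩ <;> cases b
  · rcases k with _ | k
    · refine ⟨?_, ?_⟩
      all_goals first | rfl | exact congrArg top (i2 i)
    · exact ⟨rfl, rfl⟩
  · by_cases h : k < m i
    · simp only [next, h, dite_true]
      exact ⟨rfl, rfl⟩
    · have : k = m i := by omega
      subst this
      simp only [next, h, dite_false]
      refine ⟨?_, ?_⟩
      all_goals first | rfl | exact congrArg top (i1 i)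
  · rcases k with _ | k
    · refine ⟨?_, ?_⟩
      all_goals first | rfl | exact congrArg top (i2 i)
    · exact ⟨rfl, rfl⟩
  · by_cases h : k < m i
    · simp only [next, h, dite_true]
      exact ⟨rfl, rfl⟩
    · have : k = m i := by omega
      subst this
      simp only [next, h, dite_false]
      refine ⟨?_, ?_⟩
      all_goals first | rfl | exact congrArg top (i1 i)

theorem inj (e : X m ⊕ X m) (b : Bool) (e' : X m ⊕ X m) (b' : Bool)
    (hv : vert e b = vert e' b') (hf : face e b = face e' b') : e = e' ∧ b = b' := by
  rcases e with x | x <;> rcases e' with y | y <;> cases b <;> cases b' <;>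
    simp only [vert, face] at hv hf <;>
    try first
      | exact absurd hv (low_ne_top _ _)
      | exact absurd hv.symm (low_ne_top _ _)
      | exact absurd hf (low_ne_top _ _)
      | exact absurd hf.symm (low_ne_top _ _)
  · have := low_inj hv (by simpa using top_inj hf)
    simp [this]
  · have h1 := low_eq_some hv
    have h2 := top_inj hf
    rw [h1] at h2
    exact absurd h2 (i3 _)
  · have h1 := low_eq_some hv.symm
    have h2 := top_inj hf
    rw [h1] at h2
    exact absurd h2.symm (i3 _)
  · simpa using hv
  · have h1 := some_eq_top hv
    have h2 := some_eq_top hf.symm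
    rw [h2] at h1
    exfalso
    revert h1
    generalize x.1 = i
    revert i
    decide
  · have h1 := some_eq_top hv.symm
    have h2 := some_eq_top hf
    rw [h2] at h1
    exfalso
    revert h1
    generalize y.1 = i
    revert i
    decide
  · have := low_inj hf (by simpa using top_inj hv)
    simp [this]
  · have h1 := low_eq_some hf
    have h2 := top_inj hv
    rw [h1] at h2
    exact absurd h2 (i3 _)
  · have h1 := low_eq_some hf.symm
    have h2 := top_inj hv
    rw [h1] at h2
    exact absurd h2.symm (i3 _)
  · simpa using hf

theorem conn (Q : X m ⊕ X m → Prop) (h : ∀ e b, Q e ↔ Q (next e b).1) (e e' : X m ⊕ X m)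
    (he : Q e) : Q e' := by
  have l0 : ∀ i k hk, Q (Sum.inl ⟨i, ⟨k, hk⟩⟩) ↔ Q (Sum.inl ⟨i, ⟨0, by omega⟩⟩) := by
    intro i k
    induction k with
    | zero => intro hk; rfl
    | succ k ih =>
      intro hk
      rw [← ih (by omega)]
      exact h (Sum.inl ⟨i, ⟨k + 1, hk⟩⟩) false
  have r0 : ∀ i k hk, Q (Sum.inr ⟨i, ⟨k, hk⟩⟩) ↔ Q (Sum.inr ⟨i, ⟨0, by omega⟩⟩) := by
    intro i k
    induction k with
    | zero => intro hk; rfl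
    | succ k ih =>
      intro hk
      rw [← ih (by omega)]
      exact h (Sum.inr ⟨i, ⟨k + 1, hk⟩⟩) false
  have l1 : ∀ i : Fin 3, Q (Sum.inl ⟨i, ⟨0, by omega⟩⟩) ↔ Q (Sum.inl ⟨i + 2, ⟨0, by omega⟩⟩) :=
    fun i => h (Sum.inl ⟨i, ⟨0, by omega⟩⟩) false
  have r1 : ∀ i : Fin 3, Q (Sum.inr ⟨i, ⟨0, by omega⟩⟩) ↔ Q (Sum.inr ⟨i + 2, ⟨0, by omega⟩⟩) :=
    fun i => h (Sum.inr ⟨i, ⟨0, by omega⟩⟩) false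
  have l2 : ∀ i : Fin 3, Q (Sum.inl ⟨i, ⟨0, by omega⟩⟩) ↔ Q (Sum.inl ⟨0, ⟨0, by omega⟩⟩) := by
    have a := l1 0
    have b := l1 2
    intro i
    fin_cases i
    · exact Iff.rfl
    · exact b.symm.trans a.symm |> fun h => h
    · exact a.symm
  have r2 : ∀ i : Fin 3, Q (Sum.inr ⟨i, ⟨0, by omega⟩⟩) ↔ Q (Sum.inr ⟨0, ⟨0, by omega⟩⟩) := by
    have a := r1 0
    have b := r1 2
    intro i
    fin_cases i
    · exact Iff.rfl
    · exact b.symm.trans a.symm |> fun h => h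
    · exact a.symm
  have lr : Q (Sum.inl ⟨0, ⟨0, by omega⟩⟩) ↔ Q (Sum.inr ⟨0, ⟨0, by omega⟩⟩) := by
    have a := h (Sum.inl ⟨0, ⟨m 0, by omega⟩⟩) true
    simp only [next, lt_irrefl, dite_false] at a
    rw [l0, r0, r2] at a
    exact a
  have all : ∀ e, Q e ↔ Q (Sum.inl ⟨0, ⟨0, by omega⟩⟩) := by
    rintro (⟨i, ⟨k, hk⟩⟩ | ⟨i, ⟨k, hk⟩⟩)
    · rw [l0, l2]
    · rw [r0, r2, lr]
  rw [all] at he ⊢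
  exact he

/-- The plane graph of the family. -/
def data (m : Fin 3 → ℕ) : PlaneData (Option (X m)) (X m ⊕ X m) (Option (X m)) where
  vert := vert
  face := face
  next := next
  vne := by
    rintro (x | x) (_ | _)
    · exact low_ne_some x
    · exact (low_ne_some x).symm
    · exact fun h => i3 _ (top_inj h)
    · exact fun h => i3 _ (top_inj h).symm
  fne := by
    rintro (x | x) (_ | _)
    · exact fun h => i3 _ (top_inj h)
    · exact fun h => i3 _ (top_inj h).symm
    · exact low_ne_some x
    · exact (low_ne_some x).symm
  nv := fun e b => (nvnf e b).1
  nf := fun e b => (nvnf e b).2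
  inj := inj
  vsurj := by
    rintro (_ | x)
    · exact ⟨Sum.inl ⟨0, ⟨0, by omega⟩⟩, false, rfl⟩
    · exact ⟨Sum.inl x, true, rfl⟩
  fsurj := by
    rintro (_ | x)
    · exact ⟨Sum.inr ⟨0, ⟨0, by omega⟩⟩, false, rfl⟩
    · exact ⟨Sum.inr x, true, rfl⟩
  conn := conn
  inh := ⟨Sum.inl ⟨0, ⟨0, by omega⟩⟩⟩

/-- Arithmetic progressions along the paths. -/
theorem path {A : Type} [AddCommGroup A] (z : Option (X m) → A) (i : Fin 3) (d : A)
    (h : ∀ k, z (some ⟨i, k⟩) = z (low ⟨i, k⟩) + d) (k : ℕ) (hk : k < m i + 1) :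
    z (some ⟨i, ⟨k, hk⟩⟩) = z none + ((k : ℤ) + 1) • d := by
  induction k with
  | zero => rw [h]; simp [low]
  | succ k ih =>
    rw [h]
    simp only [low]
    rw [ih]
    push_cast
    module

/-- Slopes of the face potentials. -/
def eps : Fin 3 → ℤ × ℤ := ![(0, 1), (-1, 0), (1, -1)]

/-- Slopes of the vertex potentials. -/
def del (m : Fin 3 → ℕ) (i : Fin 3) : ℤ × ℤ :=
  ((m (i + 1) : ℤ) + 1) • eps (i + 1) - ((m (i + 2) : ℤ) + 1) • eps (i + 2)

/-- A potential in the model group with given slopes. -/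
def pot (n : ℕ) (o : ℤ × ℤ) (d : Fin 3 → ℤ × ℤ) : Option (X m) → Model n
  | none => (o, (((0 : ℤ) : ZMod n), ((0 : ℤ) : ZMod n)))
  | some x => (o, (((((x.2.1 : ℤ) + 1) * (d x.1).1 : ℤ) : ZMod n),
      ((((x.2.1 : ℤ) + 1) * (d x.1).2 : ℤ) : ZMod n)))

theorem pot_low (n : ℕ) (o : ℤ × ℤ) (d : Fin 3 → ℤ × ℤ) (x : X m) :
    pot n o d (some x) = pot n o d (low x) + (0, (((d x.1).1 : ZMod n), ((d x.1).2 : ZMod n))) := by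
  rcases x with ⟨i, ⟨_ | k, hk⟩⟩
  · simp [pot, low]
  · simp only [pot, low, Prod.mk_add_mk, Prod.mk.injEq, add_zero, true_and]
    constructor <;> push_cast <;> ring

theorem main (n : ℕ) (m : Fin 3 → ℕ) (hn2 : 2 ≤ n)
    (hn : n = (m 0 + 1) * (m 1 + 1) + (m 1 + 1) * (m 2 + 1) + (m 2 + 1) * (m 0 + 1) + 1) :
    ∃ T : SphericalLatinBitrade, Nonempty (CanonicalGroup T ≃+ (ZMod n × ZMod n)) := by
  have hz : ((m 0 + 1) * (m 1 + 1) + (m 1 + 1) * (m 2 + 1) + (m 2 + 1) * (m 0 + 1) + 1 : ZMod n)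
      = 0 := by
    have := ZMod.natCast_self n
    conv at this => lhs; arg 1; rw [hn]
    push_cast at this
    exact this
  have hN : (n : ℤ) = (m 0 + 1) * (m 1 + 1) + (m 1 + 1) * (m 2 + 1) +
      (m 2 + 1) * (m 0 + 1) + 1 := by rw [hn]; push_cast; rfl
  clear hn
  refine (data m).canonical ?_ hn2 (pot n (1, 0) (del m)) (pot n (0, 1) eps) ?_ ?_ ?_
  · simp only [Fintype.card_option, Fintype.card_sum]
    omega
  · rintro (x | x)
    · show pot n (1, 0) (del m) (low x) + pot n (0, 1) eps (top (x.1 + 1)) =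
        pot n (1, 0) (del m) (some x) + pot n (0, 1) eps (top (x.1 + 2))
      rw [pot_low, add_assoc]
      congr 1
      simp only [top, pot, del, Prod.mk_add_mk, Prod.mk.injEq, zero_add, Prod.fst_sub,
        Prod.smul_fst, Prod.snd_sub, Prod.smul_snd, smul_eq_mul, true_and]
      constructor <;> push_cast <;> ring
    · show pot n (1, 0) (del m) (top (x.1 + 1)) + pot n (0, 1) eps (low x) =
        pot n (1, 0) (del m) (top (x.1 + 2)) + pot n (0, 1) eps (some x)
      rw [pot_low, add_comm _ (pot n (0, 1) eps (low x)), add_left_comm]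
      congr 1
      rcases x with ⟨i, k⟩
      fin_cases i <;> simp [top, pot, del, eps] <;> constructor <;>
        first | linear_combination hz | linear_combination -hz | ring
  · intro H h1 h2
    have a1 := h1 none
    have a2 := h2 none
    have a3 := h2 (some ⟨0, ⟨0, by omega⟩⟩)
    have a4 := h2 (some ⟨1, ⟨0, by omega⟩⟩)
    apply model_gen
    · simpa [pot] using a1
    · simpa [pot] using a2
    · have := H.sub_mem a2 a4
      simp only [pot, eps] at this
      simp at this
      exact this
    · have := H.sub_mem a3 a2
      simp only [pot, eps] at this
      simp at this
      exact this
  · intro A _ x y hxy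
    have hx : ∀ i k hk, x (some ⟨i, ⟨k, hk⟩⟩) =
        x none + ((k : ℤ) + 1) • (y (top (i + 1)) - y (top (i + 2))) := by
      intro i k hk
      refine path x i _ ?_ k hk
      intro k
      have : x (low ⟨i, k⟩) + y (top (i + 1)) = x (some ⟨i, k⟩) + y (top (i + 2)) :=
        hxy (Sum.inl ⟨i, k⟩)
      linear_combination (norm := module) -this
    have hy : ∀ i k hk, y (some ⟨i, ⟨k, hk⟩⟩) =
        y none + ((k : ℤ) + 1) • (x (top (i + 1)) - x (top (i + 2))) := by
      intro i k hk
      refine path y i _ ?_ k hk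
      intro k
      have : x (top (i + 1)) + y (low ⟨i, k⟩) = x (top (i + 2)) + y (some ⟨i, k⟩) :=
        hxy (Sum.inr ⟨i, k⟩)
      linear_combination (norm := module) -this
    have y0 : y (top 0) = y none + ((m 0 : ℤ) + 1) • (x (top 1) - x (top 2)) := hy 0 _ _
    have y1 : y (top 1) = y none + ((m 1 : ℤ) + 1) • (x (top 2) - x (top 0)) := hy 1 _ _
    have y2 : y (top 2) = y none + ((m 2 : ℤ) + 1) • (x (top 0) - x (top 1)) := hy 2 _ _
    have x0 : x (top 0) = x none + ((m 0 : ℤ) + 1) • (y (top 1) - y (top 2)) := hx 0 _ _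
    have x1 : x (top 1) = x none + ((m 1 : ℤ) + 1) • (y (top 2) - y (top 0)) := hx 1 _ _
    have x2 : x (top 2) = x none + ((m 2 : ℤ) + 1) • (y (top 0) - y (top 1)) := hx 2 _ _
    rw [y0, y1] at x2
    rw [y1, y2] at x0
    rw [y2, y0] at x1
    obtain ⟨θ, hθ⟩ := model_hom (n := n) (x none) (y none) (x (top 0) - x (top 2))
      (x (top 1) - x (top 2)) (by
        rw [hN]
        linear_combination (norm := module) x0 - x2) (by
        rw [hN]
        linear_combination (norm := module) x1 - x2)
    have hE : ∀ i : Fin 3, x (top (i + 1)) - x (top (i + 2)) =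
        (eps i).1 • (x (top 0) - x (top 2)) + (eps i).2 • (x (top 1) - x (top 2)) := by
      intro i
      fin_cases i
      · show x (top 1) - x (top 2) = (0 : ℤ) • _ + (1 : ℤ) • _
        module
      · show x (top 2) - x (top 0) = (-1 : ℤ) • _ + (0 : ℤ) • _
        module
      · show x (top 0) - x (top 1) = (1 : ℤ) • _ + (-1 : ℤ) • _
        module
    have hY : ∀ i : Fin 3, y (top i) = y none + ((m i : ℤ) + 1) •
        ((eps i).1 • (x (top 0) - x (top 2)) + (eps i).2 • (x (top 1) - x (top 2))) := by
      intro i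
      rw [← hE]
      exact hy i _ _
    refine ⟨θ, ?_, ?_⟩
    · rintro (_ | ⟨i, ⟨k, hk⟩⟩)
      · show θ ((1, 0), (((0 : ℤ) : ZMod n), ((0 : ℤ) : ZMod n))) = _
        rw [hθ]; simp
      · rw [hx, hY, hY]
        simp only [pot]
        rw [hθ]
        simp only [del, Prod.fst_sub, Prod.smul_fst, Prod.snd_sub, Prod.smul_snd, smul_eq_mul]
        module
    · rintro (_ | ⟨i, ⟨k, hk⟩⟩)
      · show θ ((0, 1), (((0 : ℤ) : ZMod n), ((0 : ℤ) : ZMod n))) = _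
        rw [hθ]; simp
      · rw [hy, hE]
        simp only [pot]
        rw [hθ]
        module

end Family


namespace Concrete

variable {nv nf m : ℕ}

/-- Pick a component of a pair by a boolean. -/
def pick {α : Type} (p : α × α) (b : Bool) : α := bif b then p.2 else p.1

theorem conn_of (next : Fin m → Bool → Fin m × Bool)
    (h : ∀ e : Fin m, e.1 = 0 ∨ (next e false).1 < e ∨ (next e true).1 < e)
    (Q : Fin m → Prop) (hQ : ∀ e b, Q e ↔ Q (next e b).1) (e e' : Fin m) (he : Q e) : Q e' := by
  have key : ∀ k (hk : k < m), Q ⟨k, hk⟩ ↔ Q ⟨0, by omega⟩ := by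
    intro k
    induction k using Nat.strong_induction_on with
    | _ k ih =>
      intro hk
      rcases h ⟨k, hk⟩ with h0 | h0 | h0
      · simp only at h0
        subst h0
        rfl
      · rw [hQ _ false]
        exact ih _ h0 _
      · rw [hQ _ true]
        exact ih _ h0 _
  have h1 := key e.1 e.2
  have h2 := key e'.1 e'.2
  exact h2.2 (h1.1 he)

/-- Indicator coefficient. -/
def ind {α : Type} [DecidableEq α] (a j : α) : ℤ := if j = a then 1 else 0

/-- Coefficients of an integral combination of the edge relations at a vertex. -/
def combV (ev : Fin m → Fin nv × Fin nv) (c : Fin m → ℤ) (j : Fin nv) : ℤ :=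
  ∑ e, c e * (ind (ev e).1 j - ind (ev e).2 j)

theorem sum_ind {α A : Type} [DecidableEq α] [Fintype α] [AddCommGroup A] (z : α → A) (a : α) :
    ∑ j, ind a j • z j = z a := by
  simp [ind]

theorem sum_comb {A : Type} [AddCommGroup A] (ev : Fin m → Fin nv × Fin nv) (c : Fin m → ℤ)
    (z : Fin nv → A) :
    ∑ j, combV ev c j • z j = ∑ e, c e • (z (ev e).1 - z (ev e).2) := by
  simp only [combV, Finset.sum_smul]
  rw [Finset.sum_comm]
  refine Finset.sum_congr rfl fun e _ => ?_
  simp only [mul_smul, sub_smul, ← Finset.smul_sum, Finset.sum_sub_distrib, sum_ind]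

theorem comb_zero {A : Type} [AddCommGroup A] (ev : Fin m → Fin nv × Fin nv)
    (ef : Fin m → Fin nf × Fin nf) (c : Fin m → ℤ) (x : Fin nv → A) (y : Fin nf → A)
    (h : ∀ e, x (ev e).1 + y (ef e).1 = x (ev e).2 + y (ef e).2) :
    ∑ j, combV ev c j • x j + ∑ j, combV ef c j • y j = 0 := by
  rw [sum_comb, sum_comb, ← Finset.sum_add_distrib]
  refine Finset.sum_eq_zero fun e _ => ?_
  rw [← smul_add]
  have : x (ev e).1 - x (ev e).2 + (y (ef e).1 - y (ef e).2) = 0 := by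
    linear_combination (norm := module) h e
  rw [this, smul_zero]

/-- A certified finite plane graph yields the desired bitrade. -/
theorem main (n : ℕ) (hn : 2 ≤ n) (hm : 0 < m) (hc : nv + nf = m + 2)
    (ev : Fin m → Fin nv × Fin nv) (ef : Fin m → Fin nf × Fin nf)
    (nx : Fin m → (Fin m × Bool) × (Fin m × Bool))
    (vne : ∀ e, (ev e).1 ≠ (ev e).2) (fne : ∀ e, (ef e).1 ≠ (ef e).2)
    (hnv : ∀ e b, pick (ev (pick (nx e) b).1) (!(pick (nx e) b).2) = pick (ev e) b)
    (hnf : ∀ e b, pick (ef (pick (nx e) b).1) (pick (nx e) b).2 = pick (ef e) b)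
    (inj : ∀ e e', (((ev e).1 = (ev e').1 ∧ (ef e).1 = (ef e').1) → e = e') ∧
      (((ev e).2 = (ev e').2 ∧ (ef e).2 = (ef e').2) → e = e') ∧
      ¬((ev e).1 = (ev e').2 ∧ (ef e).1 = (ef e').2))
    (vsurj : ∀ v, ∃ e, (ev e).1 = v ∨ (ev e).2 = v)
    (fsurj : ∀ f, ∃ e, (ef e).1 = f ∨ (ef e).2 = f)
    (conn : ∀ e : Fin m, e.1 = 0 ∨ (nx e).1.1 < e ∨ (nx e).2.1 < e)
    (v0 v1 v2 : Fin nv) (f0 : Fin nf) (tv : Fin nv → ℤ × ℤ) (tf : Fin nf → ℤ × ℤ)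
    (h0 : tv v0 = (0, 0) ∧ tf f0 = (0, 0) ∧ tv v1 = (1, 0) ∧ tv v2 = (0, 1))
    (hrel : ∀ e, (n : ℤ) ∣ (tv (ev e).2).1 + (tf (ef e).2).1 - ((tv (ev e).1).1 + (tf (ef e).1).1) ∧
      (n : ℤ) ∣ (tv (ev e).2).2 + (tf (ef e).2).2 - ((tv (ev e).1).2 + (tf (ef e).1).2))
    (cp cq : Fin m → ℤ) (cv : Fin nv → Fin m → ℤ) (cf : Fin nf → Fin m → ℤ)
    (hpv : ∀ j, combV ev cp j = n * ind v1 j - n * ind v0 j ∧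
      combV ev cq j = n * ind v2 j - n * ind v0 j)
    (hpf : ∀ j, combV ef cp j = 0 ∧ combV ef cq j = 0)
    (hvv : ∀ w j, combV ev (cv w) j = ind w j - (1 - (tv w).1 - (tv w).2) * ind v0 j
      - (tv w).1 * ind v1 j - (tv w).2 * ind v2 j)
    (hvf : ∀ w j, combV ef (cv w) j = 0)
    (hfv : ∀ w j, combV ev (cf w) j = ((tf w).1 + (tf w).2) * ind v0 j
      - (tf w).1 * ind v1 j - (tf w).2 * ind v2 j)
    (hff : ∀ w j, combV ef (cf w) j = ind w j - ind f0 j) :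
    ∃ T : SphericalLatinBitrade, Nonempty (CanonicalGroup T ≃+ (ZMod n × ZMod n)) := by
  let D : PlaneData (Fin nv) (Fin m) (Fin nf) :=
    { vert := fun e b => pick (ev e) b
      face := fun e b => pick (ef e) b
      next := fun e b => pick (nx e) b
      vne := by
        rintro e (_ | _)
        · exact vne e
        · exact (vne e).symm
      fne := by
        rintro e (_ | _)
        · exact fne e
        · exact (fne e).symm
      nv := hnv
      nf := hnf
      inj := by
        rintro e (_ | _) e' (_ | _) h1 h2
        · exact ⟨(inj e e').1 ⟨h1, h2⟩, rfl⟩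
        · exact absurd ⟨h1, h2⟩ (inj e e').2.2
        · exact absurd ⟨h1.symm, h2.symm⟩ (inj e' e).2.2
        · exact ⟨(inj e e').2.1 ⟨h1, h2⟩, rfl⟩
      vsurj := by
        intro v
        obtain ⟨e, h | h⟩ := vsurj v
        · exact ⟨e, false, h⟩
        · exact ⟨e, true, h⟩
      fsurj := by
        intro v
        obtain ⟨e, h | h⟩ := fsurj v
        · exact ⟨e, false, h⟩
        · exact ⟨e, true, h⟩
      conn := conn_of _ conn
      inh := ⟨⟨0, hm⟩⟩ }
  refine D.canonical (by simpa using hc) hn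
    (fun v => ((1, 0), (((tv v).1 : ZMod n), ((tv v).2 : ZMod n))))
    (fun f => ((0, 1), (((tf f).1 : ZMod n), ((tf f).2 : ZMod n)))) ?_ ?_ ?_
  · intro e
    have h1 := (ZMod.intCast_eq_intCast_iff_dvd_sub _ _ n).2 (hrel e).1
    have h2 := (ZMod.intCast_eq_intCast_iff_dvd_sub _ _ n).2 (hrel e).2
    simp only [Prod.mk_add_mk, Prod.mk.injEq, true_and]
    push_cast at h1 h2
    exact ⟨h1, h2⟩
  · intro H h1 h2
    obtain ⟨t0, t1, t2, t3⟩ := h0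
    have a0 := h1 v0
    have a1 := h2 f0
    have a2 := H.sub_mem (h1 v1) a0
    have a3 := H.sub_mem (h1 v2) a0
    rw [t0] at a0 a2 a3
    rw [t1] at a1
    rw [t2] at a2
    rw [t3] at a3
    simp only [Int.cast_zero, Int.cast_one] at a0 a1 a2 a3
    simp only [Prod.mk_sub_mk, sub_zero, sub_self] at a2 a3
    exact model_gen H a0 a1 a2 a3
  · intro A _ x y hxy
    have hz := fun c => comb_zero ev ef c x y hxy
    have zp := hz cp
    have zq := hz cq
    simp only [(hpv _).1, (hpf _).1, sub_smul, mul_smul, Finset.sum_sub_distrib,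
      ← Finset.smul_sum, sum_ind, zero_smul, Finset.sum_const_zero, add_zero] at zp
    simp only [(hpv _).2, (hpf _).2, sub_smul, mul_smul, Finset.sum_sub_distrib,
      ← Finset.smul_sum, sum_ind, zero_smul, Finset.sum_const_zero, add_zero] at zq
    obtain ⟨θ, hθ⟩ := model_hom (n := n) (x v0) (y f0) (x v1 - x v0) (x v2 - x v0)
      (by rw [smul_sub]; exact zp) (by rw [smul_sub]; exact zq)
    refine ⟨θ, ?_, ?_⟩
    · intro w
      have zw := hz (cv w)
      simp only [hvv, hvf, sub_smul, mul_smul, Finset.sum_sub_distrib,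
        ← Finset.smul_sum, sum_ind, zero_smul, Finset.sum_const_zero, add_zero] at zw
      simp only [hθ]
      linear_combination (norm := module) -zw
    · intro w
      have zw := hz (cf w)
      simp only [hfv, hff, sub_smul, mul_smul, Finset.sum_sub_distrib,
        ← Finset.smul_sum, sum_ind] at zw
      simp only [hθ]
      linear_combination (norm := module) -zw

end Concrete


theorem case7 :
    ∃ T : SphericalLatinBitrade, Nonempty (CanonicalGroup T ≃+ (ZMod 7 × ZMod 7)) :=
  Concrete.main (nv := 7) (nf := 4) (m := 9) 7 (by decide) (by decide) (by decide)
    ![(0, 4), (0, 5), (0, 6), (4, 1), (3, 1), (1, 2), (2, 3), (5, 2), (6, 3)]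
    ![(3, 1), (1, 2), (2, 3), (3, 1), (0, 3), (0, 1), (0, 2), (1, 2), (2, 3)]
    ![((2, true), (3, true)), ((0, true), (7, true)), ((1, true), (8, true)), ((0, false), (5, true)), ((6, false), (3, false)), ((4, false), (7, false)), ((5, false), (8, false)), ((1, false), (6, true)), ((2, false), (4, true))]
    (by decide +kernel) (by decide +kernel) (by decide +kernel) (by decide +kernel)
    (by decide +kernel) (by decide +kernel) (by decide +kernel) (by decide +kernel)
    0 1 2 0
    ![(0, 0), (1, 0), (0, 1), (-1, -1), (-3, 0), (0, -3), (3, 3)]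
    ![(0, 0), (1, -1), (1, 2), (-2, -1)]
    (by decide +kernel) (by decide +kernel)
    ![-3, -2, -2, -3, -2, 2, 0, -2, -2]
    ![-2, -3, -2, -2, 0, -2, 2, -3, -2]
    ![![0, 0, 0, 0, 0, 0, 0, 0, 0],
      ![0, 0, 0, 0, 0, 0, 0, 0, 0],
      ![0, 0, 0, 0, 0, 0, 0, 0, 0],
      ![-1, -1, -1, -1, 0, 0, 0, -1, -1],
      ![-2, -1, -1, -1, -1, 1, 0, -1, -1],
      ![-1, -2, -1, -1, 0, -1, 1, -1, -1],
      ![2, 2, 1, 2, 1, 0, -1, 2, 2]]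
    ![![0, 0, 0, 0, 0, 0, 0, 0, 0],
      ![0, 0, 0, 0, 0, -1, 0, 0, 0],
      ![1, 1, 1, 1, 0, 0, -1, 1, 1],
      ![-1, -1, -1, -1, -1, 0, 0, -1, -1]]
    (by decide +kernel) (by decide +kernel) (by decide +kernel) (by decide +kernel)
    (by decide +kernel) (by decide +kernel)

theorem case11 :
    ∃ T : SphericalLatinBitrade, Nonempty (CanonicalGroup T ≃+ (ZMod 11 × ZMod 11)) :=
  Concrete.main (nv := 6) (nf := 6) (m := 10) 11 (by decide) (by decide) (by decide)
    ![(0, 1), (0, 2), (0, 3), (0, 4), (0, 5), (3, 4), (4, 5), (5, 1), (1, 2), (2, 3)]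
    ![(5, 1), (1, 2), (2, 3), (3, 4), (4, 5), (0, 3), (0, 4), (0, 5), (0, 1), (0, 2)]
    ![((4, true), (8, true)), ((0, true), (9, true)), ((1, true), (5, true)), ((2, true), (6, true)), ((3, true), (7, true)), ((9, false), (3, false)), ((5, false), (4, false)), ((6, false), (0, false)), ((7, false), (1, false)), ((8, false), (2, false))]
    (by decide +kernel) (by decide +kernel) (by decide +kernel) (by decide +kernel)
    (by decide +kernel) (by decide +kernel) (by decide +kernel) (by decide +kernel)
    0 1 2 0
    ![(0, 0), (1, 0), (0, 1), (-1, 3), (-3, -3), (3, -1)]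
    ![(0, 0), (1, -1), (1, -2), (2, -5), (5, -2), (2, -1)]
    (by decide +kernel) (by decide +kernel)
    ![-5, -2, -1, -1, -2, 0, -1, -3, 3, 1]
    ![-2, -5, -2, -1, -1, 1, 0, -1, -3, 3]
    ![![0, 0, 0, 0, 0, 0, 0, 0, 0, 0],
      ![0, 0, 0, 0, 0, 0, 0, 0, 0, 0],
      ![0, 0, 0, 0, 0, 0, 0, 0, 0, 0],
      ![0, 1, 0, 0, 0, 0, 0, 0, 1, -1],
      ![-2, -2, -1, -1, -1, 0, 0, -1, 0, 1],
      ![1, 0, 0, 0, 0, 0, 0, 1, -1, 0]]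
    ![![0, 0, 0, 0, 0, 0, 0, 0, 0, 0],
      ![0, 0, 0, 0, 0, 0, 0, 0, -1, 0],
      ![0, -1, 0, 0, 0, 0, 0, 0, -1, 0],
      ![0, -2, -1, 0, 0, 0, 0, 0, -2, 1],
      ![2, 0, 0, 0, 1, 0, 0, 1, -2, 0],
      ![1, 0, 0, 0, 0, 0, 0, 0, -1, 0]]
    (by decide +kernel) (by decide +kernel) (by decide +kernel) (by decide +kernel)
    (by decide +kernel) (by decide +kernel)

theorem case19 :
    ∃ T : SphericalLatinBitrade, Nonempty (CanonicalGroup T ≃+ (ZMod 19 × ZMod 19)) :=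
  Concrete.main (nv := 8) (nf := 8) (m := 14) 19 (by decide) (by decide) (by decide)
    ![(0, 4), (0, 5), (0, 3), (4, 6), (5, 2), (6, 1), (3, 1), (3, 1), (1, 7), (2, 3), (2, 3), (2, 3), (7, 2), (0, 3)]
    ![(3, 1), (1, 2), (2, 7), (3, 1), (1, 2), (3, 1), (5, 3), (0, 5), (0, 1), (6, 2), (4, 6), (0, 4), (0, 1), (7, 3)]
    ![((13, true), (3, true)), ((0, true), (4, true)), ((1, true), (13, false)), ((0, false), (5, true)), ((1, false), (9, true)), ((3, false), (8, true)), ((7, true), (5, false)), ((11, false), (6, false)), ((7, false), (12, true)), ((10, true), (2, false)), ((11, true), (9, false)), ((12, false), (10, false)), ((8, false), (4, false)), ((2, true), (6, true))]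
    (by decide +kernel) (by decide +kernel) (by decide +kernel) (by decide +kernel)
    (by decide +kernel) (by decide +kernel) (by decide +kernel) (by decide +kernel)
    0 1 2 0
    ![(0, 0), (1, 0), (0, 1), (3, -5), (-6, 0), (0, -9), (7, 0), (-9, -9)]
    ![(0, 0), (-9, 9), (-9, -1), (4, 9), (-3, 6), (2, -5), (-6, -7), (7, 4)]
    (by decide +kernel) (by decide +kernel)
    ![-4, -3, -6, -4, -3, -4, -6, -6, 3, 0, 0, 0, 3, -6]
    ![-2, -5, -6, -2, -5, -2, 0, 0, -2, 4, 4, 4, -2, -6]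
    ![![0, 0, 0, 0, 0, 0, 0, 0, 0, 0, 0, 0, 0, 0],
      ![0, 0, 0, 0, 0, 0, 0, 0, 0, 0, 0, 0, 0, 0],
      ![0, 0, 0, 0, 0, 0, 0, 0, 0, 0, 0, 0, 0, 0],
      ![0, -1, -1, 0, -1, 0, 1, 1, -1, 1, 1, 1, -1, -1],
      ![-2, -1, -2, -1, -1, -1, -2, -2, 1, 0, 0, 0, 1, -2],
      ![-1, -3, -3, -1, -2, -1, 0, 0, -1, 2, 2, 2, -1, -3],
      ![1, 1, 2, 1, 1, 2, 2, 2, -1, 0, 0, 0, -1, 2],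
      ![-3, -4, -6, -3, -4, -3, -3, -3, 0, 2, 2, 2, 1, -6]]
    ![![0, 0, 0, 0, 0, 0, 0, 0, 0, 0, 0, 0, 0, 0],
      ![-1, 1, 0, -1, 1, -1, -3, -3, 2, -2, -2, -2, 2, 0],
      ![-2, -2, -3, -2, -2, -2, -3, -3, 1, 0, 0, 0, 1, -3],
      ![2, 3, 4, 2, 3, 2, 1, 1, 0, -2, -2, -2, 0, 4],
      ![0, 1, 1, 0, 1, 0, -1, -1, 1, -1, -1, -2, 1, 1],
      ![0, -1, -1, 0, -1, 0, 1, 0, -1, 1, 1, 1, -1, -1],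
      ![-2, -3, -4, -2, -3, -2, -2, -2, 0, 2, 1, 1, 0, -4],
      ![2, 2, 3, 2, 2, 2, 2, 2, -1, -1, -1, -1, -1, 4]]
    (by decide +kernel) (by decide +kernel) (by decide +kernel) (by decide +kernel)
    (by decide +kernel) (by decide +kernel)

theorem case23 :
    ∃ T : SphericalLatinBitrade, Nonempty (CanonicalGroup T ≃+ (ZMod 23 × ZMod 23)) :=
  Concrete.main (nv := 8) (nf := 8) (m := 14) 23 (by decide) (by decide) (by decide)
    ![(0, 1), (0, 1), (0, 5), (5, 2), (3, 1), (6, 1), (3, 6), (1, 2), (2, 4), (4, 3), (0, 5), (0, 7), (7, 3), (1, 2)]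
    ![(3, 4), (4, 1), (1, 6), (1, 2), (5, 3), (0, 5), (0, 5), (0, 7), (0, 2), (0, 2), (6, 2), (2, 3), (2, 3), (7, 1)]
    ![((11, true), (1, false)), ((0, true), (13, true)), ((1, true), (10, false)), ((2, false), (8, true)), ((6, true), (0, false)), ((6, false), (4, false)), ((9, false), (5, true)), ((5, false), (13, false)), ((7, false), (9, true)), ((8, false), (12, false)), ((2, true), (3, true)), ((10, true), (12, true)), ((11, false), (4, true)), ((7, true), (3, false))]
    (by decide +kernel) (by decide +kernel) (by decide +kernel) (by decide +kernel)
    (by decide +kernel) (by decide +kernel) (by decide +kernel) (by decide +kernel)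
    0 1 2 0
    ![(0, 0), (1, 0), (0, 1), (-4, -9), (-2, -4), (0, 8), (10, 7), (-2, 7)]
    ![(0, 0), (2, -2), (2, 5), (4, -2), (3, -2), (9, 7), (2, -10), (1, -1)]
    (by decide +kernel) (by decide +kernel)
    ![-8, -8, -2, -4, -2, -1, -1, 2, 0, 0, -2, -3, -3, 2]
    ![-6, -6, -4, -8, 0, 0, 0, -6, 3, 3, -4, -3, -3, -6]
    ![![0, 0, 0, 0, 0, 0, 0, 0, 0, 0, 0, 0, 0, 0],
      ![0, 0, 0, 0, 0, 0, 0, 0, 0, 0, 0, 0, 0, 0],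
      ![0, 0, 0, 0, 0, 0, 0, 0, 0, 0, 0, 0, 0, 0],
      ![-4, -4, -2, -4, 0, 0, 0, -2, 1, 1, -2, -2, -2, -2],
      ![-2, -2, -1, -2, 0, 0, 0, -1, 0, 1, -1, -1, -1, -1],
      ![2, 2, 1, 3, 0, 0, 0, 2, -1, -1, 1, 1, 1, 2],
      ![5, 5, 2, 4, 1, 1, 0, 1, -1, -1, 2, 2, 2, 1],
      ![1, 1, 1, 2, 0, 0, 0, 2, -1, -1, 1, 0, 1, 2]]
    ![![0, 0, 0, 0, 0, 0, 0, 0, 0, 0, 0, 0, 0, 0],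
      ![0, 0, 0, 0, 0, 0, 0, -1, 0, 0, 0, 0, 0, -1],
      ![2, 2, 1, 2, 0, 0, 0, 1, -1, -1, 1, 1, 1, 1],
      ![1, 1, 0, 0, 0, 0, 0, -1, 0, 0, 0, 0, 0, -1],
      ![0, 1, 0, 0, 0, 0, 0, -1, 0, 0, 0, 0, 0, -1],
      ![5, 5, 2, 4, 1, 0, 0, 1, -1, -1, 2, 2, 2, 1],
      ![-2, -2, -2, -3, 0, 0, 0, -3, 1, 1, -1, -1, -1, -3],
      ![0, 0, 0, 0, 0, 0, 0, -1, 0, 0, 0, 0, 0, 0]]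
    (by decide +kernel) (by decide +kernel) (by decide +kernel) (by decide +kernel)
    (by decide +kernel) (by decide +kernel)

theorem case31 :
    ∃ T : SphericalLatinBitrade, Nonempty (CanonicalGroup T ≃+ (ZMod 31 × ZMod 31)) :=
  Concrete.main (nv := 9) (nf := 9) (m := 16) 31 (by decide) (by decide) (by decide)
    ![(0, 1), (0, 6), (0, 3), (0, 4), (3, 4), (4, 5), (5, 1), (0, 5), (1, 7), (2, 3), (6, 2), (4, 5), (7, 8), (0, 4), (8, 2), (0, 4)]
    ![(5, 1), (1, 2), (2, 3), (3, 7), (0, 3), (0, 6), (0, 5), (4, 5), (0, 1), (0, 2), (1, 2), (6, 4), (0, 1), (7, 8), (0, 1), (8, 4)]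
    ![((7, true), (8, true)), ((0, true), (10, true)), ((1, true), (4, true)), ((2, true), (13, false)), ((9, false), (3, false)), ((4, false), (11, false)), ((5, false), (0, false)), ((15, true), (6, true)), ((6, false), (12, true)), ((14, false), (2, false)), ((1, false), (9, true)), ((5, true), (7, false)), ((8, false), (14, true)), ((3, true), (15, false)), ((12, false), (10, false)), ((13, true), (11, true))]
    (by decide +kernel) (by decide +kernel) (by decide +kernel) (by decide +kernel)
    (by decide +kernel) (by decide +kernel) (by decide +kernel) (by decide +kernel)
    0 1 2 0
    ![(0, 0), (1, 0), (0, 1), (10, 7), (-1, -11), (-8, 10), (0, -15), (11, -10), (-10, 11)]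
    ![(0, 0), (-10, 10), (-10, -6), (11, -13), (14, -11), (-9, 10), (7, 10), (12, -2), (13, 9)]
    (by decide +kernel) (by decide +kernel)
    ![-16, -2, -2, -2, 0, -3, -11, -5, 4, 2, -2, -3, 4, -2, 4, -2]
    ![-4, -11, -8, -2, 6, 0, -2, -2, -6, 14, -11, 0, -6, -2, -6, -2]
    ![![0, 0, 0, 0, 0, 0, 0, 0, 0, 0, 0, 0, 0, 0, 0, 0],
      ![0, 0, 0, 0, 0, 0, 0, 0, 0, 0, 0, 0, 0, 0, 0, 0],
      ![0, 0, 0, 0, 0, 0, 0, 0, 0, 0, 0, 0, 0, 0, 0, 0],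
      ![6, 3, 2, 1, -1, 1, 4, 2, 0, -4, 3, 1, 0, 1, 0, 1],
      ![-2, -4, -3, -1, 2, 0, -1, -1, -2, 5, -4, 0, -2, -1, -2, -1],
      ![-3, 3, 2, 0, -2, -1, -2, -1, 3, -4, 3, -1, 3, 0, 3, 0],
      ![-2, -6, -4, -1, 3, 0, -1, -1, -3, 7, -5, 0, -3, -1, -3, -1],
      ![4, -3, -2, 0, 2, 1, 3, 1, -4, 4, -3, 1, -3, 0, -3, 0],
      ![-4, 3, 2, 0, -2, -1, -3, -1, 3, -4, 3, -1, 3, 0, 4, 0]]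
    ![![0, 0, 0, 0, 0, 0, 0, 0, 0, 0, 0, 0, 0, 0, 0, 0],
      ![-4, 3, 2, 0, -2, -1, -3, -1, 3, -4, 3, -1, 3, 0, 3, 0],
      ![-6, -3, -2, -1, 1, -1, -4, -2, 0, 3, -3, -1, 0, -1, 0, -1],
      ![4, -4, -3, 0, 2, 1, 3, 1, -4, 5, -4, 1, -4, 0, -4, 0],
      ![6, -3, -2, 0, 2, 1, 4, 2, -4, 4, -3, 1, -4, 0, -4, 0],
      ![-3, 3, 2, 0, -2, -1, -3, -1, 3, -4, 3, -1, 3, 0, 3, 0],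
      ![5, 4, 3, 1, -2, 0, 3, 2, 1, -5, 4, 1, 1, 1, 1, 1],
      ![6, 0, 0, 0, 0, 1, 4, 2, -2, 0, 0, 1, -2, 1, -2, 1],
      ![8, 4, 3, 1, -2, 1, 5, 3, 0, -5, 4, 1, 0, 1, 0, 2]]
    (by decide +kernel) (by decide +kernel) (by decide +kernel) (by decide +kernel)
    (by decide +kernel) (by decide +kernel)

theorem case43 :
    ∃ T : SphericalLatinBitrade, Nonempty (CanonicalGroup T ≃+ (ZMod 43 × ZMod 43)) :=
  Concrete.main (nv := 9) (nf := 9) (m := 16) 43 (by decide) (by decide) (by decide)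
    ![(0, 6), (0, 2), (0, 3), (0, 4), (0, 7), (1, 2), (2, 8), (6, 1), (5, 1), (3, 4), (3, 4), (4, 5), (7, 5), (2, 3), (8, 3), (0, 7)]
    ![(5, 1), (1, 2), (2, 3), (3, 4), (4, 8), (0, 1), (0, 7), (5, 1), (0, 5), (6, 3), (0, 6), (0, 4), (4, 5), (7, 2), (0, 7), (8, 5)]
    ![((15, true), (7, true)), ((0, true), (13, true)), ((1, true), (9, true)), ((2, true), (11, true)), ((3, true), (15, false)), ((8, false), (1, false)), ((5, false), (14, true)), ((0, false), (5, true)), ((11, false), (7, false)), ((10, true), (3, false)), ((14, false), (9, false)), ((10, false), (12, false)), ((4, false), (8, true)), ((6, true), (2, false)), ((6, false), (13, false)), ((4, true), (12, true))]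
    (by decide +kernel) (by decide +kernel) (by decide +kernel) (by decide +kernel)
    (by decide +kernel) (by decide +kernel) (by decide +kernel) (by decide +kernel)
    0 1 2 0
    ![(0, 0), (1, 0), (0, 1), (-15, -12), (20, -17), (-19, -1), (-21, 0), (8, 14), (14, 16)]
    ![(0, 0), (1, -1), (1, -2), (16, 10), (-4, -16), (-20, -1), (8, 5), (-14, -15), (-12, 13)]
    (by decide +kernel) (by decide +kernel)
    ![-13, -10, -6, -6, -4, 16, 2, -13, -14, 0, 0, -6, -8, 4, 2, -4]
    ![-5, -19, -9, -6, -2, -9, 5, -5, -4, 3, 3, 0, -4, 10, 5, -2]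
    ![![0, 0, 0, 0, 0, 0, 0, 0, 0, 0, 0, 0, 0, 0, 0, 0],
      ![0, 0, 0, 0, 0, 0, 0, 0, 0, 0, 0, 0, 0, 0, 0, 0],
      ![0, 0, 0, 0, 0, 0, 0, 0, 0, 0, 0, 0, 0, 0, 0, 0],
      ![-6, -9, -5, -4, -2, 3, 2, -6, -6, 1, 1, -2, -4, 4, 2, -2],
      ![4, -3, -1, 0, 1, -11, 1, 4, 5, 1, 1, 3, 2, 2, 1, 1],
      ![-6, -5, -3, -3, -2, 7, 1, -6, -6, 0, 0, -3, -4, 2, 1, -2],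
      ![-7, -5, -3, -3, -2, 8, 1, -6, -7, 0, 0, -3, -4, 2, 1, -2],
      ![4, 8, 4, 3, 1, 0, -2, 4, 4, -1, -1, 1, 3, -4, -2, 1],
      ![6, 10, 5, 4, 2, -2, -3, 6, 6, -1, -1, 2, 4, -5, -2, 2]]
    ![![0, 0, 0, 0, 0, 0, 0, 0, 0, 0, 0, 0, 0, 0, 0, 0],
      ![0, 0, 0, 0, 0, -1, 0, 0, 0, 0, 0, 0, 0, 0, 0, 0],
      ![0, -1, 0, 0, 0, -1, 0, 0, 0, 0, 0, 0, 0, 0, 0, 0],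
      ![6, 8, 4, 4, 2, -4, -2, 6, 6, -1, -1, 2, 4, -4, -2, 2],
      ![-3, -8, -4, -3, -1, -2, 2, -3, -3, 1, 1, -1, -2, 4, 2, -1],
      ![-6, -5, -3, -3, -2, 7, 1, -6, -7, 0, 0, -3, -4, 2, 1, -2],
      ![3, 4, 2, 2, 1, -2, -1, 3, 3, 0, -1, 1, 2, -2, -1, 1],
      ![-6, -10, -5, -4, -2, 2, 2, -6, -6, 1, 1, -2, -4, 5, 2, -2],
      ![-2, 3, 1, 0, -1, 7, -1, -2, -3, -1, -1, -2, -1, -2, -1, 0]]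
    (by decide +kernel) (by decide +kernel) (by decide +kernel) (by decide +kernel)
    (by decide +kernel) (by decide +kernel)

theorem case59 :
    ∃ T : SphericalLatinBitrade, Nonempty (CanonicalGroup T ≃+ (ZMod 59 × ZMod 59)) :=
  Concrete.main (nv := 10) (nf := 10) (m := 18) 59 (by decide) (by decide) (by decide)
    ![(0, 1), (0, 7), (0, 3), (2, 3), (3, 4), (4, 5), (5, 8), (0, 5), (7, 6), (6, 2), (1, 2), (4, 5), (4, 9), (0, 4), (8, 1), (0, 3), (9, 5), (6, 2)]
    ![(5, 1), (1, 2), (2, 8), (0, 2), (0, 3), (0, 7), (0, 5), (4, 5), (1, 2), (1, 9), (0, 1), (7, 6), (6, 4), (3, 4), (0, 5), (8, 3), (6, 4), (9, 2)]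
    ![((7, true), (10, true)), ((0, true), (8, true)), ((1, true), (15, false)), ((10, false), (2, false)), ((3, false), (13, false)), ((4, false), (11, false)), ((5, false), (14, true)), ((13, true), (6, true)), ((1, false), (17, true)), ((8, false), (17, false)), ((14, false), (9, false)), ((5, true), (16, false)), ((11, true), (16, true)), ((15, true), (12, true)), ((6, false), (0, false)), ((2, true), (4, true)), ((12, false), (7, false)), ((9, true), (3, true))]
    (by decide +kernel) (by decide +kernel) (by decide +kernel) (by decide +kernel)
    (by decide +kernel) (by decide +kernel) (by decide +kernel) (by decide +kernel)
    0 1 2 0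
    ![(0, 0), (1, 0), (0, 1), (-1, 26), (-4, -15), (5, -2), (0, -11), (0, 24), (3, -1), (-29, 21)]
    ![(0, 0), (1, -1), (1, -25), (3, -18), (7, -3), (2, -1), (-18, -26), (-9, -13), (2, 8), (1, -13)]
    (by decide +kernel) (by decide +kernel)
    ![-31, -6, -5, 10, 0, -2, -12, -7, -6, -3, 16, -2, -1, -5, -12, -5, -1, -3]
    ![-15, -14, -10, 25, 5, 0, -5, -5, -14, -7, -20, 0, 0, -5, -5, -10, 0, -7]
    ![![0, 0, 0, 0, 0, 0, 0, 0, 0, 0, 0, 0, 0, 0, 0, 0, 0, 0],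
      ![0, 0, 0, 0, 0, 0, 0, 0, 0, 0, 0, 0, 0, 0, 0, 0, 0, 0],
      ![0, 0, 0, 0, 0, 0, 0, 0, 0, 0, 0, 0, 0, 0, 0, 0, 0, 0],
      ![6, 6, 4, -11, -2, 0, 2, 2, 6, 3, 9, 0, 0, 2, 2, 4, 0, 3],
      ![-6, -4, -3, 7, 1, 0, -2, -2, -4, -2, -4, 0, 0, -2, -2, -3, 0, -2],
      ![2, 0, 0, 0, 0, 0, 1, 0, 0, 0, -2, 0, 0, 0, 1, 0, 0, 0],
      ![-3, -3, -2, 5, 1, 0, -1, -1, -3, -1, -4, 0, 0, -1, -1, -2, 0, -1],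
      ![6, 5, 4, -10, -2, 0, 2, 2, 6, 3, 8, 0, 0, 2, 2, 4, 0, 3],
      ![1, 0, 0, 0, 0, 0, 0, 0, 0, 0, -1, 0, 0, 0, 1, 0, 0, 0],
      ![-10, 2, 1, -4, -2, -1, -4, -2, 2, 1, 15, -1, -1, -1, -4, 1, 0, 1]]
    ![![0, 0, 0, 0, 0, 0, 0, 0, 0, 0, 0, 0, 0, 0, 0, 0, 0, 0],
      ![0, 0, 0, 0, 0, 0, 0, 0, 0, 0, -1, 0, 0, 0, 0, 0, 0, 0],
      ![-6, -6, -4, 10, 2, 0, -2, -2, -6, -3, -9, 0, 0, -2, -2, -4, 0, -3],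
      ![-3, -4, -3, 7, 1, 0, -1, -1, -4, -2, -7, 0, 0, -1, -1, -3, 0, -2],
      ![3, 0, 0, 0, 0, 0, 1, 1, 0, 0, -3, 0, 0, 0, 1, 0, 0, 0],
      ![1, 0, 0, 0, 0, 0, 0, 0, 0, 0, -1, 0, 0, 0, 0, 0, 0, 0],
      ![-16, -8, -6, 14, 2, -1, -6, -4, -8, -4, -4, -1, 0, -4, -6, -6, 0, -4],
      ![-8, -4, -3, 7, 1, -1, -3, -2, -4, -2, -2, 0, 0, -2, -3, -3, 0, -2],
      ![3, 2, 1, -4, -1, 0, 1, 1, 2, 1, 2, 0, 0, 1, 1, 2, 0, 1],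
      ![-3, -3, -2, 5, 1, 0, -1, -1, -3, -2, -5, 0, 0, -1, -1, -2, 0, -1]]
    (by decide +kernel) (by decide +kernel) (by decide +kernel) (by decide +kernel)
    (by decide +kernel) (by decide +kernel)

theorem case71 :
    ∃ T : SphericalLatinBitrade, Nonempty (CanonicalGroup T ≃+ (ZMod 71 × ZMod 71)) :=
  Concrete.main (nv := 10) (nf := 10) (m := 18) 71 (by decide) (by decide) (by decide)
    ![(0, 6), (0, 2), (0, 9), (0, 4), (0, 5), (4, 5), (5, 1), (1, 2), (2, 3), (3, 4), (6, 1), (3, 7), (7, 4), (6, 8), (8, 1), (7, 4), (9, 3), (5, 1)]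
    ![(5, 1), (1, 2), (2, 3), (3, 4), (4, 5), (0, 4), (0, 9), (0, 1), (0, 2), (0, 6), (5, 7), (6, 3), (6, 8), (7, 1), (7, 1), (8, 3), (2, 3), (9, 5)]
    ![((4, true), (13, true)), ((0, true), (8, true)), ((1, true), (16, true)), ((2, true), (5, true)), ((3, true), (17, true)), ((9, false), (4, false)), ((5, false), (17, false)), ((6, false), (1, false)), ((7, false), (16, false)), ((8, false), (12, false)), ((0, false), (14, false)), ((9, true), (15, true)), ((11, false), (15, false)), ((10, true), (14, true)), ((13, false), (7, true)), ((12, true), (3, false)), ((2, false), (11, true)), ((6, true), (10, false))]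
    (by decide +kernel) (by decide +kernel) (by decide +kernel) (by decide +kernel)
    (by decide +kernel) (by decide +kernel) (by decide +kernel) (by decide +kernel)
    0 1 2 0
    ![(0, 0), (1, 0), (0, 1), (-1, 3), (-9, -2), (16, 35), (29, 0), (-30, -24), (15, 0), (35, -34)]
    ![(0, 0), (1, -1), (1, -2), (-34, 32), (-25, 34), (30, -1), (8, 5), (-13, -1), (-13, -17), (15, 35)]
    (by decide +kernel) (by decide +kernel)
    ![-21, -15, -5, -10, -20, -10, -15, 20, 5, 0, -14, 0, 0, -7, -7, 0, -5, -15]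
    ![-9, -34, -8, -10, -10, 0, -5, -19, 18, 6, -6, 4, 2, -3, -3, 2, -8, -5]
    ![![0, 0, 0, 0, 0, 0, 0, 0, 0, 0, 0, 0, 0, 0, 0, 0, 0, 0],
      ![0, 0, 0, 0, 0, 0, 0, 0, 0, 0, 0, 0, 0, 0, 0, 0, 0, 0],
      ![0, 0, 0, 0, 0, 0, 0, 0, 0, 0, 0, 0, 0, 0, 0, 0, 0, 0],
      ![0, 1, 0, 0, 0, 0, 0, 1, -1, 0, 0, 0, 0, 0, 0, 0, 0, 0],
      ![-3, -3, -1, -2, -3, -1, -2, 2, 1, 0, -2, 0, 0, -1, -1, 0, -1, -2],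
      ![9, 20, 5, 7, 9, 2, 6, 5, -10, -3, 6, -2, -1, 3, 3, -1, 5, 6],
      ![8, 6, 2, 4, 8, 4, 6, -8, -2, 0, 6, 0, 0, 3, 3, 0, 2, 6],
      ![-12, -18, -5, -8, -12, -4, -8, 2, 8, 2, -8, 1, 1, -4, -4, 1, -5, -8],
      ![4, 3, 1, 2, 4, 2, 3, -4, -1, 0, 3, 0, 0, 1, 2, 0, 1, 3],
      ![6, -9, -2, 0, 5, 5, 5, -19, 6, 3, 4, 2, 1, 2, 2, 1, -1, 5]]
    ![![0, 0, 0, 0, 0, 0, 0, 0, 0, 0, 0, 0, 0, 0, 0, 0, 0, 0],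
      ![0, 0, 0, 0, 0, 0, 0, -1, 0, 0, 0, 0, 0, 0, 0, 0, 0, 0],
      ![0, -1, 0, 0, 0, 0, 0, -1, 0, 0, 0, 0, 0, 0, 0, 0, 0, 0],
      ![-6, 8, 1, 0, -5, -5, -5, 18, -6, -3, -4, -2, -1, -2, -2, -1, 1, -5],
      ![-3, 11, 2, 1, -2, -4, -3, 16, -7, -3, -2, -2, -1, -1, -1, -1, 2, -3],
      ![9, 6, 2, 4, 8, 4, 6, -9, -2, 0, 6, 0, 0, 3, 3, 0, 2, 6],
      ![3, 4, 1, 2, 3, 1, 2, -1, -2, -1, 2, 0, 0, 1, 1, 0, 1, 2],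
      ![-4, -3, -1, -2, -4, -2, -3, 3, 1, 0, -3, 0, 0, -1, -1, 0, -1, -3],
      ![-6, -11, -3, -4, -6, -2, -4, -1, 5, 1, -4, 1, 0, -2, -2, 1, -3, -4],
      ![9, 20, 5, 7, 9, 2, 5, 5, -10, -3, 6, -2, -1, 3, 3, -1, 5, 6]]
    (by decide +kernel) (by decide +kernel) (by decide +kernel) (by decide +kernel)
    (by decide +kernel) (by decide +kernel)

theorem case79 :
    ∃ T : SphericalLatinBitrade, Nonempty (CanonicalGroup T ≃+ (ZMod 79 × ZMod 79)) :=
  Concrete.main (nv := 11) (nf := 11) (m := 20) 79 (by decide) (by decide) (by decide)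
    ![(0, 1), (0, 2), (1, 2), (1, 2), (2, 3), (3, 4), (4, 8), (6, 4), (0, 6), (0, 5), (7, 1), (0, 3), (8, 5), (5, 9), (0, 10), (0, 3), (9, 7), (0, 3), (10, 2), (8, 5)]
    ![(5, 1), (1, 8), (6, 1), (0, 6), (0, 2), (0, 3), (0, 4), (3, 4), (3, 4), (4, 5), (0, 5), (7, 3), (0, 10), (0, 5), (8, 2), (2, 9), (0, 5), (9, 7), (8, 2), (10, 4)]
    ![((9, true), (2, true)), ((0, true), (18, false)), ((3, true), (1, false)), ((10, false), (2, false)), ((3, false), (15, false)), ((4, false), (7, false)), ((5, false), (19, true)), ((8, false), (6, true)), ((11, true), (7, true)), ((8, true), (13, true)), ((16, false), (0, false)), ((17, true), (5, true)), ((6, false), (19, false)), ((12, false), (16, true)), ((1, true), (18, true)), ((14, true), (17, false)), ((13, false), (10, true)), ((15, true), (11, false)), ((14, false), (4, true)), ((12, true), (9, false))]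
    (by decide +kernel) (by decide +kernel) (by decide +kernel) (by decide +kernel)
    (by decide +kernel) (by decide +kernel) (by decide +kernel) (by decide +kernel)
    0 1 2 0
    ![(0, 0), (1, 0), (0, 1), (-2, -35), (-10, -18), (10, -6), (-5, -9), (4, -2), (-23, -10), (7, -4), (0, -39)]
    ![(0, 0), (2, -2), (2, 36), (8, -17), (13, -8), (3, -2), (1, -1), (6, 27), (2, -3), (4, -8), (-33, -4)]
    (by decide +kernel) (by decide +kernel)
    ![-34, -16, 18, 18, 12, 0, -2, -2, -2, -7, -9, -4, -1, -9, -8, -4, -9, -4, -8, -1]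
    ![-16, -26, -10, -10, 20, 2, 0, -2, -2, -4, -4, -6, 0, -4, -13, -6, -4, -6, -13, 0]
    ![![0, 0, 0, 0, 0, 0, 0, 0, 0, 0, 0, 0, 0, 0, 0, 0, 0, 0, 0, 0],
      ![0, 0, 0, 0, 0, 0, 0, 0, 0, 0, 0, 0, 0, 0, 0, 0, 0, 0, 0, 0],
      ![0, 0, 0, 0, 0, 0, 0, 0, 0, 0, 0, 0, 0, 0, 0, 0, 0, 0, 0, 0],
      ![-8, -12, -4, -4, 9, 1, 0, -1, -1, -2, -2, -3, 0, -2, -6, -3, -2, -3, -6, 0],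
      ![-8, -8, 0, 0, 6, 0, 0, -1, -1, -2, -2, -2, 0, -2, -4, -2, -2, -2, -4, 0],
      ![3, 0, -3, -3, 0, 0, 0, 0, 0, 0, 1, 0, 0, 1, 0, 0, 1, 0, 0, 0],
      ![-4, -4, 0, 0, 3, 0, 0, 0, -1, -1, -1, -1, 0, -1, -2, -1, -1, -1, -2, 0],
      ![1, 0, -1, -1, 0, 0, 0, 0, 0, 0, 1, 0, 0, 0, 0, 0, 0, 0, 0, 0],
      ![-12, -8, 4, 4, 6, 0, -1, -1, -1, -3, -3, -2, 0, -3, -4, -2, -3, -2, -4, 0],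
      ![2, 0, -2, -2, 0, 0, 0, 0, 0, 0, 1, 0, 0, 0, 0, 0, 1, 0, 0, 0],
      ![-8, -13, -5, -5, 10, 1, 0, -1, -1, -2, -2, -3, 0, -2, -7, -3, -2, -3, -6, 0]]
    ![![0, 0, 0, 0, 0, 0, 0, 0, 0, 0, 0, 0, 0, 0, 0, 0, 0, 0, 0, 0],
      ![0, 0, -1, -1, 0, 0, 0, 0, 0, 0, 0, 0, 0, 0, 0, 0, 0, 0, 0, 0],
      ![8, 12, 4, 4, -10, -1, 0, 1, 1, 2, 2, 3, 0, 2, 6, 3, 2, 3, 6, 0],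
      ![0, -4, -4, -4, 3, 0, 0, 0, 0, 0, 0, -1, 0, 0, -2, -1, 0, -1, -2, 0],
      ![4, 0, -4, -4, 0, 0, 0, 0, 0, 1, 1, 0, 0, 1, 0, 0, 1, 0, 0, 0],
      ![1, 0, -1, -1, 0, 0, 0, 0, 0, 0, 0, 0, 0, 0, 0, 0, 0, 0, 0, 0],
      ![0, 0, 0, -1, 0, 0, 0, 0, 0, 0, 0, 0, 0, 0, 0, 0, 0, 0, 0, 0],
      ![8, 10, 2, 2, -8, -1, 0, 1, 1, 2, 2, 3, 0, 2, 5, 2, 2, 2, 5, 0],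
      ![0, -1, -1, -1, 0, 0, 0, 0, 0, 0, 0, 0, 0, 0, 0, 0, 0, 0, 0, 0],
      ![0, -2, -2, -2, 1, 0, 0, 0, 0, 0, 0, 0, 0, 0, -1, -1, 0, 0, -1, 0],
      ![-15, -8, 7, 7, 6, 0, -1, -1, -1, -3, -4, -2, -1, -4, -4, -2, -4, -2, -4, 0]]
    (by decide +kernel) (by decide +kernel) (by decide +kernel) (by decide +kernel)
    (by decide +kernel) (by decide +kernel)

theorem case103 :
    ∃ T : SphericalLatinBitrade, Nonempty (CanonicalGroup T ≃+ (ZMod 103 × ZMod 103)) :=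
  Concrete.main (nv := 11) (nf := 11) (m := 20) 103 (by decide) (by decide) (by decide)
    ![(0, 1), (0, 10), (0, 2), (0, 3), (0, 4), (2, 3), (3, 4), (4, 5), (5, 8), (8, 6), (6, 7), (0, 6), (0, 7), (7, 9), (9, 1), (1, 2), (0, 4), (0, 5), (10, 2), (5, 8)]
    ![(7, 1), (1, 8), (8, 2), (2, 3), (3, 9), (0, 2), (0, 3), (0, 4), (0, 10), (0, 5), (0, 6), (5, 6), (6, 7), (0, 7), (0, 7), (0, 1), (9, 4), (4, 5), (1, 8), (10, 5)]
    ![((12, true), (15, true)), ((0, true), (18, true)), ((1, true), (5, true)), ((2, true), (6, true)), ((3, true), (16, false)), ((15, false), (3, false)), ((5, false), (4, false)), ((6, false), (17, false)), ((7, false), (19, false)), ((8, false), (11, false)), ((9, false), (12, false)), ((17, true), (10, true)), ((11, true), (13, true)), ((10, false), (14, true)), ((13, false), (0, false)), ((14, false), (18, false)), ((4, true), (7, true)), ((16, true), (19, true)), ((1, false), (2, false)), ((8, true), (9, true))]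
    (by decide +kernel) (by decide +kernel) (by decide +kernel) (by decide +kernel)
    (by decide +kernel) (by decide +kernel) (by decide +kernel) (by decide +kernel)
    0 1 2 0
    ![(0, 0), (1, 0), (0, 1), (-1, -48), (-3, -42), (-11, -17), (12, -5), (5, -2), (31, -13), (3, -1), (0, -51)]
    ![(0, 0), (1, -1), (1, 49), (2, -6), (8, -25), (19, -8), (7, -3), (2, -1), (1, 50), (5, 36), (-42, -4)]
    (by decide +kernel) (by decide +kernel)
    ![-50, -8, -16, -6, -2, 10, 4, 0, -1, -2, -7, -5, -12, -19, -19, 34, -2, -2, -8, -1]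
    ![-16, -19, -38, -14, -4, 24, 10, 2, 0, 0, -2, -2, -4, -6, -6, -22, -4, -2, -19, 0]
    ![![0, 0, 0, 0, 0, 0, 0, 0, 0, 0, 0, 0, 0, 0, 0, 0, 0, 0, 0, 0],
      ![0, 0, 0, 0, 0, 0, 0, 0, 0, 0, 0, 0, 0, 0, 0, 0, 0, 0, 0, 0],
      ![0, 0, 0, 0, 0, 0, 0, 0, 0, 0, 0, 0, 0, 0, 0, 0, 0, 0, 0, 0],
      ![-8, -9, -18, -7, -2, 11, 5, 1, 0, 0, -1, -1, -2, -3, -3, -10, -2, -1, -9, 0],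
      ![-8, -8, -16, -6, -2, 10, 4, 1, 0, 0, -1, -1, -2, -3, -3, -8, -2, -1, -8, 0],
      ![-8, -4, -8, -3, -1, 5, 2, 0, 0, 0, -1, -1, -2, -3, -3, 0, -1, -1, -4, 0],
      ![5, 0, 0, 0, 0, 0, 0, 0, 0, 0, 1, 0, 1, 2, 2, -5, 0, 0, 0, 0],
      ![2, 0, 0, 0, 0, 0, 0, 0, 0, 0, 0, 0, 0, 1, 1, -2, 0, 0, 0, 0],
      ![13, 0, 0, 0, 0, 0, 0, 0, 0, 1, 2, 1, 3, 5, 5, -13, 0, 0, 0, 0],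
      ![1, 0, 0, 0, 0, 0, 0, 0, 0, 0, 0, 0, 0, 0, 1, -1, 0, 0, 0, 0],
      ![-8, -10, -19, -7, -2, 12, 5, 1, 0, 0, -1, -1, -2, -3, -3, -11, -2, -1, -9, 0]]
    ![![0, 0, 0, 0, 0, 0, 0, 0, 0, 0, 0, 0, 0, 0, 0, 0, 0, 0, 0, 0],
      ![0, 0, 0, 0, 0, 0, 0, 0, 0, 0, 0, 0, 0, 0, 0, -1, 0, 0, 0, 0],
      ![8, 9, 18, 7, 2, -12, -5, -1, 0, 0, 1, 1, 2, 3, 3, 10, 2, 1, 9, 0],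
      ![0, -1, -2, -1, 0, 1, 0, 0, 0, 0, 0, 0, 0, 0, 0, -2, 0, 0, -1, 0],
      ![0, -4, -8, -3, -1, 5, 2, 0, 0, 0, 0, 0, 0, 0, 0, -8, -1, 0, -4, 0],
      ![8, 0, 0, 0, 0, 0, 0, 0, 0, 0, 1, 1, 2, 3, 3, -8, 0, 0, 0, 0],
      ![3, 0, 0, 0, 0, 0, 0, 0, 0, 0, 0, 0, 1, 1, 1, -3, 0, 0, 0, 0],
      ![1, 0, 0, 0, 0, 0, 0, 0, 0, 0, 0, 0, 0, 0, 0, -1, 0, 0, 0, 0],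
      ![8, 9, 19, 7, 2, -12, -5, -1, 0, 0, 1, 1, 2, 3, 3, 10, 2, 1, 9, 0],
      ![8, 7, 14, 5, 1, -9, -4, -1, 0, 0, 1, 1, 2, 3, 3, 6, 2, 1, 7, 0],
      ![-21, -4, -8, -3, -1, 5, 2, 0, -1, -1, -3, -2, -5, -8, -8, 13, -1, -1, -4, 0]]
    (by decide +kernel) (by decide +kernel) (by decide +kernel) (by decide +kernel)
    (by decide +kernel) (by decide +kernel)

theorem case131 :
    ∃ T : SphericalLatinBitrade, Nonempty (CanonicalGroup T ≃+ (ZMod 131 × ZMod 131)) :=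
  Concrete.main (nv := 12) (nf := 12) (m := 22) 131 (by decide) (by decide) (by decide)
    ![(0, 1), (5, 1), (1, 2), (2, 3), (3, 11), (0, 3), (0, 4), (0, 9), (7, 5), (4, 5), (2, 3), (6, 2), (8, 6), (4, 5), (9, 7), (2, 3), (10, 5), (4, 10), (0, 8), (0, 8), (11, 4), (0, 1)]
    ![(5, 11), (0, 5), (0, 1), (0, 9), (0, 3), (2, 3), (3, 4), (4, 5), (4, 5), (6, 4), (7, 2), (1, 2), (1, 2), (8, 6), (4, 5), (9, 7), (0, 8), (0, 8), (10, 2), (1, 10), (0, 3), (11, 1)]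
    ![((7, true), (21, false)), ((16, false), (0, false)), ((1, false), (11, false)), ((2, false), (15, false)), ((3, false), (20, true)), ((18, true), (4, true)), ((5, true), (9, true)), ((6, true), (14, true)), ((14, false), (1, true)), ((13, true), (8, false)), ((15, true), (5, false)), ((12, false), (10, true)), ((19, false), (11, true)), ((17, true), (9, false)), ((7, false), (8, true)), ((3, true), (10, false)), ((17, false), (13, false)), ((20, false), (16, true)), ((19, true), (12, true)), ((21, true), (18, false)), ((4, false), (6, false)), ((0, true), (2, true))]
    (by decide +kernel) (by decide +kernel) (by decide +kernel) (by decide +kernel)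
    (by decide +kernel) (by decide +kernel) (by decide +kernel) (by decide +kernel)
    0 1 2 0
    ![(0, 0), (1, 0), (0, 1), (-44, -16), (-3, -19), (4, -1), (0, 53), (-41, 43), (0, -26), (45, -44), (-65, -10), (42, 48)]
    ![(0, 0), (1, -1), (1, 51), (45, -64), (48, -45), (3, -1), (55, -27), (-43, 34), (62, -9), (44, 17), (1, 25), (2, -1)]
    (by decide +kernel) (by decide +kernel)
    ![-43, -22, 23, 5, 0, -15, -15, -7, -7, -6, 5, -8, -8, -6, -7, 5, -3, -3, -4, -4, 0, -43]
    ![-20, -5, -45, 20, 15, -45, -15, -5, -5, 0, 20, -26, -26, 0, -5, 20, 0, 0, -13, -13, 15, -20]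
    ![![0, 0, 0, 0, 0, 0, 0, 0, 0, 0, 0, 0, 0, 0, 0, 0, 0, 0, 0, 0, 0, 0],
      ![0, 0, 0, 0, 0, 0, 0, 0, 0, 0, 0, 0, 0, 0, 0, 0, 0, 0, 0, 0, 0, 0],
      ![0, 0, 0, 0, 0, 0, 0, 0, 0, 0, 0, 0, 0, 0, 0, 0, 0, 0, 0, 0, 0, 0],
      ![-17, -8, 2, 4, 2, -11, -7, -3, -3, -2, 4, -6, -6, -2, -3, 4, -1, -1, -3, -3, 2, -17],
      ![-4, -1, -6, 3, 2, -7, -3, -1, -1, 0, 3, -4, -4, 0, -1, 3, 0, 0, -2, -2, 2, -4],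
      ![1, 1, -1, 0, 0, 0, 0, 0, 0, 0, 0, 0, 0, 0, 0, 0, 0, 0, 0, 0, 0, 1],
      ![8, 2, 18, -8, -6, 18, 6, 2, 2, 0, -8, 11, 10, 0, 2, -8, 0, 0, 5, 5, -6, 8],
      ![-7, -5, 22, -5, -5, 10, 0, -1, 0, -2, -5, 6, 6, -2, -1, -5, -1, -1, 3, 3, -5, -7],
      ![-4, -1, -9, 4, 3, -9, -3, -1, -1, 0, 4, -5, -5, 0, -1, 4, 0, 0, -3, -3, 3, -4],
      ![8, 6, -23, 5, 5, -10, 0, 0, 1, 2, 5, -6, -6, 2, 1, 5, 1, 1, -3, -3, 5, 8],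
      ![-23, -11, 8, 4, 1, -11, -9, -4, -4, -3, 4, -6, -6, -3, -4, 4, -1, -2, -3, -3, 1, -23],
      ![21, 9, 9, -9, -6, 21, 10, 4, 4, 2, -9, 12, 12, 2, 4, -9, 1, 1, 6, 6, -5, 21]]
    ![![0, 0, 0, 0, 0, 0, 0, 0, 0, 0, 0, 0, 0, 0, 0, 0, 0, 0, 0, 0, 0, 0],
      ![0, 0, -1, 0, 0, 0, 0, 0, 0, 0, 0, 0, 0, 0, 0, 0, 0, 0, 0, 0, 0, 0],
      ![8, 2, 17, -8, -6, 18, 6, 2, 2, 0, -8, 10, 10, 0, 2, -8, 0, 0, 5, 5, -6, 8],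
      ![5, 5, -30, 8, 7, -17, -2, 0, 0, 2, 8, -10, -10, 2, 0, 8, 1, 1, -5, -5, 7, 5],
      ![9, 6, -24, 5, 5, -10, 0, 1, 1, 2, 5, -6, -6, 2, 1, 5, 1, 1, -3, -3, 5, 9],
      ![1, 0, -1, 0, 0, 0, 0, 0, 0, 0, 0, 0, 0, 0, 0, 0, 0, 0, 0, 0, 0, 1],
      ![14, 8, -19, 2, 3, -3, 3, 2, 2, 3, 2, -2, -2, 2, 2, 2, 1, 1, -1, -1, 3, 14],
      ![-9, -6, 19, -4, -4, 7, -1, -1, -1, -2, -3, 4, 4, -2, -1, -4, -1, -1, 2, 2, -4, -9],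
      ![19, 10, -14, -1, 1, 4, 6, 3, 3, 3, -1, 2, 2, 3, 3, -1, 1, 1, 1, 1, 1, 19],
      ![17, 8, -2, -5, -2, 11, 7, 3, 3, 2, -4, 6, 6, 2, 3, -4, 1, 1, 3, 3, -2, 17],
      ![4, 1, 8, -4, -3, 9, 3, 1, 1, 0, -4, 5, 5, 0, 1, -4, 0, 0, 3, 2, -3, 4],
      ![0, 0, -1, 0, 0, 0, 0, 0, 0, 0, 0, 0, 0, 0, 0, 0, 0, 0, 0, 0, 0, 1]]
    (by decide +kernel) (by decide +kernel) (by decide +kernel) (by decide +kernel)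
    (by decide +kernel) (by decide +kernel)

theorem case191 :
    ∃ T : SphericalLatinBitrade, Nonempty (CanonicalGroup T ≃+ (ZMod 191 × ZMod 191)) :=
  Concrete.main (nv := 12) (nf := 12) (m := 22) 191 (by decide) (by decide) (by decide)
    ![(0, 1), (0, 8), (7, 1), (0, 7), (6, 7), (1, 2), (2, 10), (8, 2), (9, 6), (5, 6), (0, 5), (0, 9), (4, 5), (0, 4), (5, 11), (3, 4), (0, 3), (2, 3), (10, 3), (0, 9), (11, 6), (0, 8)]
    ![(7, 1), (1, 11), (0, 7), (6, 7), (0, 6), (0, 1), (0, 9), (1, 2), (5, 6), (8, 5), (4, 5), (5, 10), (0, 4), (3, 4), (0, 8), (0, 3), (2, 3), (9, 2), (0, 9), (10, 6), (0, 8), (11, 2)]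
    ![((3, true), (5, true)), ((0, true), (21, false)), ((4, false), (0, false)), ((19, true), (2, true)), ((20, false), (3, false)), ((2, false), (7, false)), ((5, false), (18, true)), ((1, false), (17, true)), ((11, false), (4, true)), ((14, true), (8, false)), ((13, true), (9, true)), ((10, true), (19, false)), ((15, false), (10, false)), ((16, true), (12, true)), ((12, false), (20, true)), ((18, false), (13, false)), ((21, true), (15, true)), ((6, true), (16, false)), ((6, false), (17, false)), ((11, true), (8, true)), ((14, false), (9, false)), ((1, true), (7, true))]
    (by decide +kernel) (by decide +kernel) (by decide +kernel) (by decide +kernel)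
    (by decide +kernel) (by decide +kernel) (by decide +kernel) (by decide +kernel)
    0 1 2 0
    ![(0, 0), (1, 0), (0, 1), (63, 87), (-66, -79), (-70, 58), (8, -3), (3, -1), (0, 64), (-61, -1), (-64, 44), (-31, -68)]
    ![(0, 0), (1, -1), (1, 62), (-62, -25), (4, 54), (74, -4), (5, -2), (2, -1), (-39, -65), (64, -43), (-56, -3), (1, -65)]
    (by decide +kernel) (by decide +kernel)
    ![-87, -12, -53, -34, -19, 51, 9, -24, -10, -6, -9, -5, 0, -9, -3, 9, -18, 18, 9, -5, -3, -12]
    ![-36, -31, -21, -15, -6, -57, 24, -62, -6, 0, -9, -3, 9, -18, 0, 27, -45, 48, 24, -3, 0, -31]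
    ![![0, 0, 0, 0, 0, 0, 0, 0, 0, 0, 0, 0, 0, 0, 0, 0, 0, 0, 0, 0, 0, 0],
      ![0, 0, 0, 0, 0, 0, 0, 0, 0, 0, 0, 0, 0, 0, 0, 0, 0, 0, 0, 0, 0, 0],
      ![0, 0, 0, 0, 0, 0, 0, 0, 0, 0, 0, 0, 0, 0, 0, 0, 0, 0, 0, 0, 0, 0],
      ![45, 18, 27, 18, 9, 9, -14, 36, 6, 2, 7, 3, -4, 11, 1, -15, 26, -28, -14, 3, 1, 18],
      ![-45, -17, -27, -18, -9, -6, 13, -34, -6, -2, -7, -3, 4, -11, -1, 14, -25, 26, 13, -3, -1, -17],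
      ![-21, 5, -13, -8, -5, 36, -4, 10, -2, -2, -1, -1, -3, 2, -1, -5, 7, -8, -4, -1, -1, 5],
      ![3, 0, 2, 1, 1, -3, 0, 0, 0, 0, 0, 0, 0, 0, 0, 0, 0, 0, 0, 0, 0, 0],
      ![1, 0, 1, 0, 0, -1, 0, 0, 0, 0, 0, 0, 0, 0, 0, 0, 0, 0, 0, 0, 0, 0],
      ![12, 10, 7, 5, 2, 19, -8, 21, 2, 0, 3, 1, -3, 6, 0, -9, 15, -16, -8, 1, 0, 10],
      ![-28, -4, -17, -11, -6, 16, 3, -8, -3, -2, -3, -2, 0, -3, -1, 3, -6, 6, 3, -2, -1, -4],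
      ![-21, 3, -13, -8, -5, 30, -3, 6, -2, -2, -1, -1, -2, 1, -1, -3, 4, -5, -2, -1, -1, 3],
      ![-27, -13, -16, -11, -5, -12, 10, -26, -4, -1, -5, -2, 3, -8, -1, 11, -19, 20, 10, -2, 0, -13]]
    ![![0, 0, 0, 0, 0, 0, 0, 0, 0, 0, 0, 0, 0, 0, 0, 0, 0, 0, 0, 0, 0, 0],
      ![0, 0, 0, 0, 0, -1, 0, 0, 0, 0, 0, 0, 0, 0, 0, 0, 0, 0, 0, 0, 0, 0],
      ![12, 10, 7, 5, 2, 18, -8, 20, 2, 0, 3, 1, -3, 6, 0, -9, 15, -16, -8, 1, 0, 10],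
      ![-33, -8, -20, -13, -7, 9, 6, -16, -4, -2, -4, -2, 1, -5, -1, 6, -12, 12, 6, -2, -1, -8],
      ![12, 9, 7, 5, 2, 15, -7, 18, 2, 0, 3, 1, -3, 5, 0, -8, 13, -14, -7, 1, 0, 9],
      ![33, 4, 20, 13, 7, -21, -3, 8, 4, 2, 3, 2, 0, 3, 1, -3, 6, -6, -3, 2, 1, 4],
      ![2, 0, 1, 1, 0, -2, 0, 0, 0, 0, 0, 0, 0, 0, 0, 0, 0, 0, 0, 0, 0, 0],
      ![1, 0, 0, 0, 0, -1, 0, 0, 0, 0, 0, 0, 0, 0, 0, 0, 0, 0, 0, 0, 0, 0],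
      ![-30, -13, -18, -12, -6, -9, 10, -26, -4, -1, -5, -2, 3, -8, -1, 11, -19, 20, 10, -2, -1, -13],
      ![21, -3, 13, 8, 5, -30, 2, -6, 2, 2, 1, 1, 2, -1, 1, 3, -4, 5, 2, 1, 1, -3],
      ![-26, -4, -16, -10, -6, 14, 3, -8, -3, -2, -3, -2, 0, -3, -1, 3, -6, 6, 3, -1, -1, -4],
      ![-12, -11, -7, -5, -2, -20, 8, -21, -2, 0, -3, -1, 3, -6, 0, 9, -15, 16, 8, -1, 0, -10]]
    (by decide +kernel) (by decide +kernel) (by decide +kernel) (by decide +kernel)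
    (by decide +kernel) (by decide +kernel)

theorem case211 :
    ∃ T : SphericalLatinBitrade, Nonempty (CanonicalGroup T ≃+ (ZMod 211 × ZMod 211)) :=
  Concrete.main (nv := 13) (nf := 13) (m := 24) 211 (by decide) (by decide) (by decide)
    ![(0, 1), (0, 2), (1, 2), (2, 3), (3, 4), (4, 6), (0, 4), (0, 5), (6, 5), (5, 8), (0, 9), (0, 11), (7, 2), (6, 5), (8, 1), (0, 10), (9, 7), (6, 5), (10, 3), (8, 1), (11, 12), (5, 8), (12, 3), (5, 8)]
    ![(5, 1), (1, 6), (0, 1), (0, 2), (0, 3), (0, 4), (3, 4), (4, 5), (0, 9), (0, 11), (6, 2), (2, 8), (6, 2), (7, 4), (0, 10), (8, 3), (6, 2), (9, 7), (8, 3), (10, 5), (2, 8), (11, 12), (2, 8), (12, 5)]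
    ![((7, true), (2, true)), ((0, true), (12, false)), ((14, false), (1, false)), ((2, false), (22, false)), ((3, false), (6, false)), ((4, false), (13, true)), ((15, true), (5, true)), ((6, true), (23, true)), ((5, false), (17, false)), ((8, false), (21, false)), ((1, true), (16, true)), ((10, true), (20, true)), ((16, false), (3, true)), ((17, true), (7, false)), ((9, false), (19, false)), ((11, true), (18, true)), ((10, false), (12, true)), ((8, true), (13, false)), ((15, false), (4, true)), ((14, true), (0, false)), ((11, false), (22, true)), ((9, true), (23, false)), ((20, false), (18, false)), ((21, true), (19, true))]
    (by decide +kernel) (by decide +kernel) (by decide +kernel) (by decide +kernel)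
    (by decide +kernel) (by decide +kernel) (by decide +kernel) (by decide +kernel)
    0 1 2 0
    ![(0, 0), (1, 0), (0, 1), (-1, -67), (-38, -15), (73, -36), (98, 22), (0, 71), (2, 105), (0, -70), (105, 72), (70, 48), (-71, 96)]
    ![(0, 0), (1, -1), (1, 68), (37, -52), (75, -37), (2, -1), (1, -2), (50, -95), (-69, 20), (25, 58), (1, 105), (71, 70), (-69, -71)]
    (by decide +kernel) (by decide +kernel)
    ![-92, -33, 59, 15, 0, -18, -18, -42, -6, -20, -11, -6, -11, -6, -30, -9, -11, -6, -9, -30, -6, -20, -6, -20]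
    ![-33, -84, -51, 48, 18, 0, -18, -18, 0, -6, -28, -12, -28, 0, -9, -18, -28, 0, -18, -9, -12, -6, -12, -6]
    ![![0, 0, 0, 0, 0, 0, 0, 0, 0, 0, 0, 0, 0, 0, 0, 0, 0, 0, 0, 0, 0, 0, 0, 0],
      ![0, 0, 0, 0, 0, 0, 0, 0, 0, 0, 0, 0, 0, 0, 0, 0, 0, 0, 0, 0, 0, 0, 0, 0],
      ![0, 0, 0, 0, 0, 0, 0, 0, 0, 0, 0, 0, 0, 0, 0, 0, 0, 0, 0, 0, 0, 0, 0, 0],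
      ![-11, -27, -16, 15, 6, 0, -6, -6, 0, -2, -9, -4, -9, 0, -3, -6, -9, 0, -6, -3, -4, -2, -4, -2],
      ![-19, -12, 7, 6, 1, -3, -5, -9, -1, -4, -4, -2, -4, -1, -6, -3, -4, -1, -3, -6, -2, -4, -2, -4],
      ![26, -3, -29, 3, 3, 6, 3, 11, 2, 6, -1, 0, -1, 2, 9, 0, -1, 2, 0, 9, 0, 6, 0, 6],
      ![46, 24, -22, -12, -2, 8, 10, 21, 3, 10, 8, 4, 8, 3, 15, 6, 8, 3, 6, 15, 4, 10, 4, 10],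
      ![11, 28, 17, -16, -6, 0, 6, 6, 0, 2, 9, 4, 10, 0, 3, 6, 9, 0, 6, 3, 4, 2, 4, 2],
      ![17, 42, 25, -24, -9, 0, 9, 9, 0, 3, 14, 6, 14, 0, 5, 9, 14, 0, 9, 5, 6, 3, 6, 3],
      ![-11, -28, -17, 16, 6, 0, -6, -6, 0, -2, -10, -4, -9, 0, -3, -6, -9, 0, -6, -3, -4, -2, -4, -2],
      ![57, 45, -12, -24, -6, 9, 15, 27, 3, 12, 15, 7, 15, 3, 18, 10, 15, 3, 11, 18, 7, 12, 7, 12],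
      ![38, 30, -8, -16, -4, 6, 10, 18, 2, 8, 10, 4, 10, 2, 12, 7, 10, 2, 7, 12, 5, 8, 5, 8],
      ![-16, 27, 43, -17, -8, -6, 2, -6, -2, -4, 9, 3, 9, -2, -6, 5, 9, -2, 5, -6, 3, -4, 4, -4]]
    ![![0, 0, 0, 0, 0, 0, 0, 0, 0, 0, 0, 0, 0, 0, 0, 0, 0, 0, 0, 0, 0, 0, 0, 0],
      ![0, 0, -1, 0, 0, 0, 0, 0, 0, 0, 0, 0, 0, 0, 0, 0, 0, 0, 0, 0, 0, 0, 0, 0],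
      ![11, 27, 16, -16, -6, 0, 6, 6, 0, 2, 9, 4, 9, 0, 3, 6, 9, 0, 6, 3, 4, 2, 4, 2],
      ![8, -15, -23, 9, 4, 3, -1, 3, 1, 2, -5, -2, -5, 1, 3, -3, -5, 1, -3, 3, -2, 2, -2, 2],
      ![27, -3, -30, 3, 3, 6, 3, 12, 2, 6, -1, 0, -1, 2, 9, 0, -1, 2, 0, 9, 0, 6, 0, 6],
      ![1, 0, -1, 0, 0, 0, 0, 0, 0, 0, 0, 0, 0, 0, 0, 0, 0, 0, 0, 0, 0, 0, 0, 0],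
      ![0, -1, -1, 0, 0, 0, 0, 0, 0, 0, 0, 0, 0, 0, 0, 0, 0, 0, 0, 0, 0, 0, 0, 0],
      ![7, -30, -37, 18, 8, 4, -4, 2, 1, 2, -10, -4, -10, 2, 3, -6, -10, 1, -6, 3, -4, 2, -4, 2],
      ![-27, -3, 24, 0, -2, -6, -4, -12, -2, -6, -1, -1, -1, -2, -9, -1, -1, -2, -1, -9, -1, -6, -1, -6],
      ![20, 27, 7, -15, -5, 2, 7, 10, 0, 4, 9, 4, 9, 1, 6, 6, 9, 1, 6, 6, 4, 4, 4, 4],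
      ![17, 42, 25, -24, -9, 0, 9, 9, 0, 3, 14, 6, 14, 0, 4, 9, 14, 0, 9, 5, 6, 3, 6, 3],
      ![42, 39, -3, -21, -6, 6, 12, 20, 2, 8, 13, 6, 13, 2, 13, 9, 13, 2, 9, 13, 6, 9, 6, 9],
      ![-41, -39, 2, 21, 6, -6, -12, -20, -2, -9, -13, -6, -13, -2, -13, -9, -13, -2, -9, -13, -6, -9, -6, -8]]
    (by decide +kernel) (by decide +kernel) (by decide +kernel) (by decide +kernel)
    (by decide +kernel) (by decide +kernel)

theorem case331 :
    ∃ T : SphericalLatinBitrade, Nonempty (CanonicalGroup T ≃+ (ZMod 331 × ZMod 331)) :=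
  Concrete.main (nv := 14) (nf := 14) (m := 26) 331 (by decide) (by decide) (by decide)
    ![(0, 1), (0, 2), (7, 1), (1, 2), (2, 13), (2, 8), (10, 8), (8, 3), (3, 11), (0, 3), (0, 4), (0, 5), (0, 9), (4, 5), (5, 12), (9, 6), (0, 9), (0, 6), (0, 7), (6, 7), (11, 4), (0, 7), (12, 6), (0, 2), (13, 10), (0, 9)]
    ![(7, 1), (1, 12), (0, 7), (0, 1), (0, 9), (9, 2), (0, 9), (0, 2), (0, 3), (2, 3), (3, 4), (4, 5), (5, 13), (0, 4), (0, 5), (5, 8), (10, 8), (8, 6), (6, 11), (0, 6), (0, 3), (11, 7), (0, 5), (12, 2), (0, 9), (13, 10)]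
    ![((21, true), (3, true)), ((0, true), (23, false)), ((19, false), (0, false)), ((2, false), (1, false)), ((3, false), (24, true)), ((4, true), (7, true)), ((24, false), (5, false)), ((6, false), (9, false)), ((7, false), (20, true)), ((23, true), (8, true)), ((9, true), (13, true)), ((10, true), (14, true)), ((11, true), (25, false)), ((20, false), (11, false)), ((13, false), (22, true)), ((12, false), (17, false)), ((25, true), (15, true)), ((16, true), (19, true)), ((17, true), (21, false)), ((22, false), (18, false)), ((8, false), (10, false)), ((18, true), (2, true)), ((14, false), (15, false)), ((1, true), (5, true)), ((4, false), (6, true)), ((12, true), (16, false))]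
    (by decide +kernel) (by decide +kernel) (by decide +kernel) (by decide +kernel)
    (by decide +kernel) (by decide +kernel) (by decide +kernel) (by decide +kernel)
    0 1 2 0
    ![(0, 0), (1, 0), (0, 1), (81, 89), (-90, -58), (-100, -24), (11, -4), (3, -1), (82, 86), (-80, -1), (165, -163), (161, -150), (121, -14), (-83, -81)]
    ![(0, 0), (1, -1), (1, -3), (-80, -92), (10, -34), (110, -10), (8, -3), (2, -1), (19, -7), (83, 82), (-61, -8), (5, -2), (1, -2), (-141, -9)]
    (by decide +kernel) (by decide +kernel)
    ![-136, -40, -99, 96, 4, 12, 4, 16, 4, -12, -4, -4, -3, 0, -4, -9, -3, -12, -37, -25, 4, -37, -4, -40, 4, -3]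
    ![-40, -109, -29, -69, 11, 33, 11, 44, 12, -32, -8, -4, -1, 4, 0, -3, -1, -4, -11, -7, 12, -11, 0, -109, 11, -1]
    ![![0, 0, 0, 0, 0, 0, 0, 0, 0, 0, 0, 0, 0, 0, 0, 0, 0, 0, 0, 0, 0, 0, 0, 0, 0, 0],
      ![0, 0, 0, 0, 0, 0, 0, 0, 0, 0, 0, 0, 0, 0, 0, 0, 0, 0, 0, 0, 0, 0, 0, 0, 0, 0],
      ![0, 0, 0, 0, 0, 0, 0, 0, 0, 0, 0, 0, 0, 0, 0, 0, 0, 0, 0, 0, 0, 0, 0, 0, 0, 0],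
      ![44, 39, 32, -5, -4, -12, -4, -16, -4, 11, 3, 2, 1, -1, 1, 3, 1, 4, 12, 8, -4, 12, 1, 39, -4, 1],
      ![-44, -30, -32, 14, 3, 9, 3, 12, 3, -9, -3, -2, -1, 1, -1, -3, -1, -4, -12, -8, 3, -12, -1, -30, 3, -1],
      ![-44, -20, -32, 24, 2, 6, 2, 8, 2, -6, -2, -2, -1, 0, -1, -3, -1, -4, -12, -8, 2, -12, -1, -20, 2, -1],
      ![4, 0, 3, -4, 0, 0, 0, 0, 0, 0, 0, 0, 0, 0, 0, 0, 0, 0, 1, 1, 0, 1, 0, 0, 0, 0],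
      ![1, 0, 1, -1, 0, 0, 0, 0, 0, 0, 0, 0, 0, 0, 0, 0, 0, 0, 0, 0, 0, 0, 0, 0, 0, 0],
      ![44, 38, 32, -6, -4, -12, -4, -15, -4, 11, 3, 2, 1, -1, 1, 3, 1, 4, 12, 8, -4, 12, 1, 38, -4, 1],
      ![-33, -10, -24, 23, 1, 3, 1, 4, 1, -3, -1, -1, -1, 0, -1, -2, -1, -3, -9, -6, 1, -9, -1, -10, 1, -1],
      ![48, -34, 35, -82, 3, 10, 4, 14, 4, -10, -2, 0, 1, 2, 2, 3, 1, 4, 13, 9, 4, 13, 2, -34, 3, 1],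
      ![48, -30, 35, -78, 3, 9, 3, 12, 3, -9, -2, 0, 1, 2, 2, 3, 1, 4, 13, 9, 4, 13, 2, -30, 3, 1],
      ![48, 10, 35, -38, -1, -3, -1, -4, -1, 3, 1, 1, 1, 0, 1, 3, 1, 4, 13, 9, -1, 13, 2, 10, -1, 1],
      ![-44, -37, -32, 7, 3, 11, 4, 15, 4, -11, -3, -2, -1, 1, -1, -3, -1, -4, -12, -8, 4, -12, -1, -37, 4, -1]]
    ![![0, 0, 0, 0, 0, 0, 0, 0, 0, 0, 0, 0, 0, 0, 0, 0, 0, 0, 0, 0, 0, 0, 0, 0, 0, 0],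
      ![0, 0, 0, -1, 0, 0, 0, 0, 0, 0, 0, 0, 0, 0, 0, 0, 0, 0, 0, 0, 0, 0, 0, 0, 0, 0],
      ![0, -1, 0, -1, 0, 0, 0, 0, 0, 0, 0, 0, 0, 0, 0, 0, 0, 0, 0, 0, 0, 0, 0, -1, 0, 0],
      ![-44, -40, -32, 4, 4, 12, 4, 16, 4, -12, -3, -2, -1, 1, -1, -3, -1, -4, -12, -8, 4, -12, -1, -40, 4, -1],
      ![0, -10, 0, -10, 1, 3, 1, 4, 1, -3, -1, 0, 0, 0, 0, 0, 0, 0, 0, 0, 1, 0, 0, -10, 1, 0],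
      ![44, 10, 32, -34, -1, -3, -1, -4, -1, 3, 1, 1, 1, 0, 1, 3, 1, 4, 12, 8, -1, 12, 1, 10, -1, 1],
      ![3, 0, 2, -3, 0, 0, 0, 0, 0, 0, 0, 0, 0, 0, 0, 0, 0, 0, 1, 0, 0, 1, 0, 0, 0, 0],
      ![1, 0, 0, -1, 0, 0, 0, 0, 0, 0, 0, 0, 0, 0, 0, 0, 0, 0, 0, 0, 0, 0, 0, 0, 0, 0],
      ![7, 0, 5, -7, 0, 0, 0, 0, 0, 0, 0, 0, 0, 0, 0, 0, 0, 1, 2, 1, 0, 2, 0, 0, 0, 0],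
      ![44, 37, 32, -7, -4, -11, -4, -15, -4, 11, 3, 2, 1, -1, 1, 3, 1, 4, 12, 8, -4, 12, 1, 37, -4, 1],
      ![-26, -10, -19, 16, 1, 3, 1, 4, 1, -3, -1, -1, -1, 0, -1, -2, 0, -2, -7, -5, 1, -7, -1, -10, 1, -1],
      ![2, 0, 1, -2, 0, 0, 0, 0, 0, 0, 0, 0, 0, 0, 0, 0, 0, 0, 0, 0, 0, 1, 0, 0, 0, 0],
      ![0, -1, 0, -1, 0, 0, 0, 0, 0, 0, 0, 0, 0, 0, 0, 0, 0, 0, 0, 0, 0, 0, 0, 0, 0, 0],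
      ![-59, -20, -43, 39, 2, 6, 2, 8, 2, -6, -2, -2, -2, 0, -2, -4, -1, -5, -16, -11, 2, -16, -2, -20, 2, -1]]
    (by decide +kernel) (by decide +kernel) (by decide +kernel) (by decide +kernel)
    (by decide +kernel) (by decide +kernel)

theorem case463 :
    ∃ T : SphericalLatinBitrade, Nonempty (CanonicalGroup T ≃+ (ZMod 463 × ZMod 463)) :=
  Concrete.main (nv := 14) (nf := 14) (m := 26) 463 (by decide) (by decide) (by decide)
    ![(0, 10), (0, 6), (0, 7), (7, 2), (1, 2), (2, 3), (3, 8), (8, 4), (4, 9), (4, 5), (0, 4), (0, 13), (9, 5), (5, 1), (0, 7), (0, 3), (10, 6), (6, 1), (3, 12), (3, 11), (11, 4), (6, 1), (12, 8), (10, 6), (13, 5), (2, 3)]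
    ![(5, 8), (8, 1), (1, 9), (1, 2), (0, 1), (0, 13), (0, 10), (0, 6), (0, 7), (7, 4), (3, 4), (4, 5), (0, 7), (0, 5), (9, 2), (2, 3), (5, 12), (5, 11), (10, 6), (6, 3), (6, 3), (11, 1), (10, 6), (12, 8), (4, 5), (13, 2)]
    ![((11, true), (23, true)), ((0, true), (21, true)), ((1, true), (14, false)), ((2, false), (25, true)), ((13, false), (3, false)), ((4, false), (25, false)), ((5, false), (22, false)), ((6, false), (20, false)), ((7, false), (12, true)), ((8, true), (24, false)), ((15, true), (9, true)), ((10, true), (24, true)), ((8, false), (9, false)), ((12, false), (17, false)), ((2, true), (3, true)), ((14, true), (19, true)), ((0, false), (23, false)), ((16, false), (21, false)), ((6, true), (22, true)), ((18, true), (20, true)), ((19, false), (10, false)), ((17, true), (4, true)), ((18, false), (7, true)), ((16, true), (1, false)), ((11, false), (13, true)), ((5, true), (15, false))]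
    (by decide +kernel) (by decide +kernel) (by decide +kernel) (by decide +kernel)
    (by decide +kernel) (by decide +kernel) (by decide +kernel) (by decide +kernel)
    0 1 2 0
    ![(0, 0), (1, 0), (0, 1), (231, 79), (-65, -2), (45, -1), (211, 0), (0, -154), (20, -46), (-10, 230), (-168, 0), (83, -193), (-106, -215), (-209, 231)]
    ![(0, 0), (1, -1), (1, -156), (-230, 228), (-165, 230), (44, -1), (85, -44), (-55, 231), (212, -1), (1, 153), (211, 125), (-209, -1), (128, -1), (-231, -78)]
    (by decide +kernel) (by decide +kernel)
    ![-84, -126, -33, -66, 132, 33, 0, 0, -22, -44, -66, -55, -22, -121, -33, -66, -42, -105, 0, 0, 0, -105, 0, -42, -55, 33]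
    ![-36, -54, -74, -148, -123, 96, 24, 36, 0, 0, -66, -33, 0, -33, -74, -126, -18, -45, 12, 30, 30, -45, 12, -18, -33, 96]
    ![![0, 0, 0, 0, 0, 0, 0, 0, 0, 0, 0, 0, 0, 0, 0, 0, 0, 0, 0, 0, 0, 0, 0, 0, 0, 0],
      ![0, 0, 0, 0, 0, 0, 0, 0, 0, 0, 0, 0, 0, 0, 0, 0, 0, 0, 0, 0, 0, 0, 0, 0, 0, 0],
      ![0, 0, 0, 0, 0, 0, 0, 0, 0, 0, 0, 0, 0, 0, 0, 0, 0, 0, 0, 0, 0, 0, 0, 0, 0, 0],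
      ![48, 72, 29, 58, -45, -33, -4, -6, 11, 22, 44, 33, 11, 66, 29, 54, 24, 60, -2, -5, -5, 60, -2, 24, 33, -33],
      ![-12, -18, -5, -10, 18, 5, 0, 0, -3, -6, -10, -8, -3, -17, -5, -10, -6, -15, 0, 0, 0, -15, 0, -6, -8, 5],
      ![8, 12, 3, 6, -13, -3, 0, 0, 2, 4, 6, 5, 2, 12, 3, 6, 4, 10, 0, 0, 0, 10, 0, 4, 5, -3],
      ![38, 57, 15, 30, -60, -15, 0, 0, 10, 20, 30, 25, 10, 55, 15, 30, 19, 48, 0, 0, 0, 48, 0, 19, 25, -15],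
      ![-12, -18, -25, -49, -41, 32, 8, 12, 0, 0, -22, -11, 0, -11, -25, -42, -6, -15, 4, 10, 10, -15, 4, -6, -11, 32],
      ![0, 0, -6, -12, -18, 8, 2, 4, 1, 2, -4, -1, 1, 2, -6, -10, 0, 0, 1, 3, 3, 0, 1, 0, -1, 8],
      ![16, 24, 36, 72, 64, -47, -12, -18, -1, -1, 31, 15, 0, 14, 36, 61, 8, 20, -6, -15, -15, 20, -6, 8, 15, -47],
      ![-31, -46, -12, -24, 48, 12, 0, 0, -8, -16, -24, -20, -8, -44, -12, -24, -15, -38, 0, 0, 0, -38, 0, -15, -20, 12],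
      ![0, 0, -25, -50, -75, 34, 10, 15, 4, 8, -16, -4, 4, 8, -25, -41, 0, 0, 5, 12, 13, 0, 5, 0, -4, 34],
      ![-36, -54, -42, -84, -27, 52, 11, 17, -5, -10, -46, -28, -5, -43, -42, -74, -18, -45, 5, 14, 14, -45, 6, -18, -28, 52],
      ![-20, -30, 22, 44, 121, -33, -12, -18, -10, -20, 3, -9, -10, -38, 22, 33, -10, -25, -6, -15, -15, -25, -6, -10, -8, -33]]
    ![![0, 0, 0, 0, 0, 0, 0, 0, 0, 0, 0, 0, 0, 0, 0, 0, 0, 0, 0, 0, 0, 0, 0, 0, 0, 0],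
      ![0, 0, 0, 0, -1, 0, 0, 0, 0, 0, 0, 0, 0, 0, 0, 0, 0, 0, 0, 0, 0, 0, 0, 0, 0, 0],
      ![-12, -18, -25, -50, -42, 32, 8, 12, 0, 0, -22, -11, 0, -11, -25, -42, -6, -15, 4, 10, 10, -15, 4, -6, -11, 32],
      ![-24, -36, 20, 40, 126, -31, -12, -18, -11, -22, 0, -11, -11, -44, 20, 29, -12, -30, -6, -15, -15, -30, -6, -12, -11, -31],
      ![-12, -18, 25, 50, 108, -36, -12, -18, -8, -16, 9, -3, -8, -27, 25, 39, -6, -15, -6, -15, -15, -15, -6, -6, -3, -36],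
      ![8, 12, 3, 6, -13, -3, 0, 0, 2, 4, 6, 5, 2, 11, 3, 6, 4, 10, 0, 0, 0, 10, 0, 4, 5, -3],
      ![12, 18, -1, -2, -36, 3, 2, 3, 4, 8, 6, 7, 4, 19, -1, 0, 6, 15, 1, 3, 3, 15, 1, 6, 7, 3],
      ![8, 12, 33, 66, 77, -44, -12, -18, -3, -5, 25, 10, -3, 2, 33, 55, 4, 10, -6, -15, -15, 10, -6, 4, 10, -44],
      ![38, 58, 15, 30, -61, -15, 0, 0, 10, 20, 30, 25, 10, 55, 15, 30, 19, 48, 0, 0, 0, 48, 0, 19, 25, -15],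
      ![12, 18, 24, 49, 40, -32, -8, -12, 0, 0, 22, 11, 0, 11, 25, 42, 6, 15, -4, -10, -10, 15, -4, 6, 11, -32],
      ![48, 72, 35, 70, -27, -41, -7, -10, 10, 20, 48, 34, 10, 64, 35, 64, 24, 60, -3, -8, -8, 60, -3, 24, 34, -41],
      ![-38, -57, -15, -30, 59, 15, 0, 0, -10, -20, -30, -25, -10, -55, -15, -30, -19, -48, 0, 0, 0, -47, 0, -19, -25, 15],
      ![23, 35, 9, 18, -37, -9, 0, 0, 6, 12, 18, 15, 6, 33, 9, 18, 11, 29, 0, 0, 0, 29, 0, 12, 15, -9],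
      ![-48, -72, -29, -58, 45, 32, 4, 6, -11, -22, -44, -33, -11, -66, -29, -54, -24, -60, 2, 5, 5, -60, 2, -24, -33, 33]]
    (by decide +kernel) (by decide +kernel) (by decide +kernel) (by decide +kernel)
    (by decide +kernel) (by decide +kernel)


/-- Let `n ≥ 2` be such that either `n = ab + bc + ca + 1` for some `a, b, c ≥ 1`, or `n`
is one of the exceptional values `7, 11, 19, 23, 31, 43, 59, 71, 79, 103, 131, 191, 211,
331, 463`.  Then there is a spherical latin bitrade whose canonical group is isomorphic to
`ℤ/n ⊕ ℤ/n`. -/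
theorem exists_spherical_bitrade_canonical_group_ZnZn
    (n : ℕ) (hn : 2 ≤ n)
    (h : (∃ a b c : ℕ, 1 ≤ a ∧ 1 ≤ b ∧ 1 ≤ c ∧ n = a * b + b * c + c * a + 1) ∨
      n ∈ [7, 11, 19, 23, 31, 43, 59, 71, 79, 103, 131, 191, 211, 331, 463]) :
    ∃ T : SphericalLatinBitrade,
      Nonempty (CanonicalGroup T ≃+ (ZMod n × ZMod n)) := by
  rcases h with ⟨a, b, c, ha, hb, hc, h⟩ | h
  · refine Family.main n ![a - 1, b - 1, c - 1] hn ?_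
    obtain ⟨a, rfl⟩ := Nat.exists_eq_add_of_le' ha
    obtain ⟨b, rfl⟩ := Nat.exists_eq_add_of_le' hb
    obtain ⟨c, rfl⟩ := Nat.exists_eq_add_of_le' hc
    simpa using h
  · simp at h
    rcases h with rfl | rfl | rfl | rfl | rfl | rfl | rfl | rfl | rfl | rfl | rfl | rfl | rfl | rfl | rfl
    exacts [case7, case11, case19, case23, case31, case43, case59, case71, case79, case103, case131, case191, case211, case331, case463]
end

section
/- Let p, a ≥ 2 and x, y, ℓ ≥ 0 and m ≥ 2 be integers, let r = p(x+1) + a − x − 1 and s = p(y+1) + a − y − 1, and let t_{i,j} be integers for 1 ≤ i ≤ m and 1 ≤ j ≤ ℓ. Let L be the (x+y+m+2) × (x+y+ℓ+3) integer matrix whose columns are grouped as: column 1, column 2, an X-block of x columns (columns 3 to x+2), a Y-block of y columns (columns x+3 to x+y+2), column x+y+3, and a T-block of ℓ columns; and whose rows are: Row 1 has entry p in column 1, −p+1 in column 2, −1 in column x+y+3, and zeros elsewhere; Row 2 has −p in column 1, r in column 2, −p in every X-column, x+1−a in column x+y+3, and zeros elsewhere; for 1 ≤ i ≤ x, Row 2+i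 has −p+1 in column 2, p in the i-th X-column, −1 in column x+y+3, and zeros elsewhere; for 1 ≤ j ≤ y, Row 2+x+j has −1 in column 2, p in the j-th Y-column, −p+1 in column x+y+3, and zeros elsewhere; Row x+y+3 has y+1−a in column 2, −p in every Y-column, s in column x+y+3, entries t_{1,1}, …, t_{1,ℓ} in the T-block, and zeros elsewhere; Row x+y+4 has −1 in column 2, −p+1 in column x+y+3, entries t_{2,1}, …, t_{2,ℓ} in the T-block, and zeros elsewhere; for 3 ≤ i ≤ m, Row x+y+i+2 has entries t_{i,1}, …, t_{i,ℓ} in the T-block and zeros elsewhere. Then L is equivalent over ℤ to the (x+y+m+2) × (x+y+ℓ+3) matrix L' whose only nonzero entries are: entry 1 in position (1, column 1); entry a·p in position (2, column 2); entry p in position (2+i, i-th X-column) for 1 ≤ i ≤ x and in position (2+x+j, j-th Y-column) for 1 ≤ j ≤ y; entry p in position (x+y+3, column x+y+3) together with t_{1,1}, …, t_{1,ℓ} in the T-block of row x+y+3; entry −p in position (x+y+4, column x+y+3) together with t_{2,1}, …, t_{2,ℓ} in the T-block of row x+y+4; and entries t_{i,1}, …, t_{i,ℓ} in the T-block of row x+y+i+2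 for 3 ≤ i ≤ m. -/
/-- Two integer matrices of the same shape are equivalent over `ℤ` if one is obtained from
the other by multiplying on the left and right by square integer matrices invertible
over `ℤ`. -/
def IntEquiv {m n : ℕ} (A B : Matrix (Fin m) (Fin n) ℤ) : Prop :=
  ∃ (U : Matrix (Fin m) (Fin m) ℤ) (V : Matrix (Fin n) (Fin n) ℤ),
    IsUnit U.det ∧ IsUnit V.det ∧ U * A * V = B

/-- The matrix `L` of Lemma 7 (the "prime plus composites" reduction lemma), with 0-based
indexing: column `0` is "column 1", column `1` is "column 2", columns `2, …, x+1` form the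
X-block, columns `x+2, …, x+y+1` form the Y-block, column `x+y+2` is "column x+y+3", and
columns `x+y+3, …, x+y+ℓ+2` form the T-block; rows `0` and `1` are "Row 1" and "Row 2",
rows `2, …, x+1` are the X-rows, rows `x+2, …, x+y+1` are the Y-rows, and rows
`x+y+2, …, x+y+m+1` carry the entries `t_{i,j}` in the T-block (rows `x+y+2` and `x+y+3`,
i.e. "Row x+y+3" and "Row x+y+4", also carry special entries). -/
def lemmaMatrixL (p a x y l m : ℕ) (t : Fin m → Fin l → ℤ) :
    Matrix (Fin (x + y + m + 2)) (Fin (x + y + l + 3)) ℤ :=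
  Matrix.of fun i j =>
    if hj : x + y + 3 ≤ (j : ℕ) then
      if hi : x + y + 2 ≤ (i : ℕ) then
        t ⟨(i : ℕ) - (x + y + 2), by have := i.isLt; omega⟩
          ⟨(j : ℕ) - (x + y + 3), by have := j.isLt; omega⟩
      else 0
    else
      if (i : ℕ) = 0 then
        if (j : ℕ) = 0 then (p : ℤ)
        else if (j : ℕ) = 1 then 1 - (p : ℤ)
        else if (j : ℕ) = x + y + 2 then -1
        else 0
      else if (i : ℕ) = 1 then
        if (j : ℕ) = 0 then -(p : ℤ)
        else if (j : ℕ) = 1 then (p : ℤ) * ((x : ℤ) + 1) + (a : ℤ) - (x : ℤ) - 1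
        else if 2 ≤ (j : ℕ) ∧ (j : ℕ) ≤ x + 1 then -(p : ℤ)
        else if (j : ℕ) = x + y + 2 then (x : ℤ) + 1 - (a : ℤ)
        else 0
      else if (i : ℕ) ≤ x + 1 then
        if (j : ℕ) = 1 then 1 - (p : ℤ)
        else if (j : ℕ) = (i : ℕ) then (p : ℤ)
        else if (j : ℕ) = x + y + 2 then -1
        else 0
      else if (i : ℕ) ≤ x + y + 1 then
        if (j : ℕ) = 1 then -1
        else if (j : ℕ) = (i : ℕ) then (p : ℤ)
        else if (j : ℕ) = x + y + 2 then 1 - (p : ℤ)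
        else 0
      else if (i : ℕ) = x + y + 2 then
        if (j : ℕ) = 1 then (y : ℤ) + 1 - (a : ℤ)
        else if x + 2 ≤ (j : ℕ) ∧ (j : ℕ) ≤ x + y + 1 then -(p : ℤ)
        else if (j : ℕ) = x + y + 2 then (p : ℤ) * ((y : ℤ) + 1) + (a : ℤ) - (y : ℤ) - 1
        else 0
      else if (i : ℕ) = x + y + 3 then
        if (j : ℕ) = 1 then -1
        else if (j : ℕ) = x + y + 2 then 1 - (p : ℤ)
        else 0
      else 0

/-- The reduced matrix `L'` of Lemma 7, with the same 0-based indexing conventions as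
`lemmaMatrixL`: its only nonzero entries are a `1` in position `(0,0)`, `a·p` in position
`(1,1)`, the diagonal block `p·I_{x+y}` on the X- and Y-rows/columns, `p` and `−p` in
column `x+y+2` on rows `x+y+2` and `x+y+3`, and the unchanged entries `t_{i,j}` in the
T-block. -/
def lemmaMatrixL' (p a x y l m : ℕ) (t : Fin m → Fin l → ℤ) :
    Matrix (Fin (x + y + m + 2)) (Fin (x + y + l + 3)) ℤ :=
  Matrix.of fun i j =>
    if hj : x + y + 3 ≤ (j : ℕ) then
      if hi : x + y + 2 ≤ (i : ℕ) then
        t ⟨(i : ℕ) - (x + y + 2), by have := i.isLt; omega⟩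
          ⟨(j : ℕ) - (x + y + 3), by have := j.isLt; omega⟩
      else 0
    else
      if (i : ℕ) = 0 ∧ (j : ℕ) = 0 then 1
      else if (i : ℕ) = 1 ∧ (j : ℕ) = 1 then (a : ℤ) * (p : ℤ)
      else if 2 ≤ (i : ℕ) ∧ (i : ℕ) ≤ x + y + 1 ∧ (j : ℕ) = (i : ℕ) then (p : ℤ)
      else if (i : ℕ) = x + y + 2 ∧ (j : ℕ) = x + y + 2 then (p : ℤ)
      else if (i : ℕ) = x + y + 3 ∧ (j : ℕ) = x + y + 2 then -(p : ℤ)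
      else 0


namespace LRed

/-- Row blocks. -/
abbrev RI (x y n : ℕ) := Unit ⊕ Unit ⊕ Fin x ⊕ Fin y ⊕ Unit ⊕ Unit ⊕ Fin n

/-- Column blocks. -/
abbrev CI (x y l : ℕ) := Unit ⊕ Unit ⊕ Fin x ⊕ Fin y ⊕ Unit ⊕ Fin l

/-- Position of a row. -/
def rpos (x y n : ℕ) : RI x y n → ℕ
  | .inl _ => 0
  | .inr (.inl _) => 1
  | .inr (.inr (.inl i)) => 2 + i
  | .inr (.inr (.inr (.inl i))) => x + 2 + i
  | .inr (.inr (.inr (.inr (.inl _)))) => x + y + 2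
  | .inr (.inr (.inr (.inr (.inr (.inl _))))) => x + y + 3
  | .inr (.inr (.inr (.inr (.inr (.inr i))))) => x + y + 4 + i

/-- Position of a column. -/
def cpos (x y l : ℕ) : CI x y l → ℕ
  | .inl _ => 0
  | .inr (.inl _) => 1
  | .inr (.inr (.inl i)) => 2 + i
  | .inr (.inr (.inr (.inl i))) => x + 2 + i
  | .inr (.inr (.inr (.inr (.inl _)))) => x + y + 2
  | .inr (.inr (.inr (.inr (.inr i)))) => x + y + 3 + i

lemma rpos_lt (x y n : ℕ) (r : RI x y n) : rpos x y n r < x + y + (n + 2) + 2 := by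
  rcases r with _ | _ | i | i | _ | _ | i <;> simp only [rpos] <;> omega

lemma cpos_lt (x y l : ℕ) (r : CI x y l) : cpos x y l r < x + y + l + 3 := by
  rcases r with _ | _ | i | i | _ | i <;> simp only [cpos] <;> omega

lemma rpos_inj (x y n : ℕ) : Function.Injective (rpos x y n) := by
  intro r s h
  rcases r with _ | _ | i | i | _ | _ | i <;> rcases s with _ | _ | j | j | _ | _ | j <;>
    simp only [rpos] at h <;> first | rfl | omega | (congr; omega)

lemma cpos_inj (x y l : ℕ) : Function.Injective (cpos x y l) := by
  intro r s h
  rcases r with _ | _ | i | i | _ | i <;> rcases s with _ | _ | j | j | _ | j <;>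
    simp only [cpos] at h <;> first | rfl | omega | (congr; omega)

/-- Row indexing. -/
noncomputable def re (x y n : ℕ) : RI x y n ≃ Fin (x + y + (n + 2) + 2) :=
  Equiv.ofBijective (fun r => ⟨rpos x y n r, rpos_lt x y n r⟩) <| by
    rw [Fintype.bijective_iff_injective_and_card]
    refine ⟨fun r s h => rpos_inj x y n (by simpa using h), ?_⟩
    simp; omega

/-- Column indexing. -/
noncomputable def ce (x y l : ℕ) : CI x y l ≃ Fin (x + y + l + 3) :=
  Equiv.ofBijective (fun r => ⟨cpos x y l r, cpos_lt x y l r⟩) <| by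
    rw [Fintype.bijective_iff_injective_and_card]
    refine ⟨fun r s h => cpos_inj x y l (by simpa using h), ?_⟩
    simp; omega

/-- A row with six column blocks. -/
def b6 {A B C D E F : Type} (f : A → ℤ) (g : B → ℤ) (h : C → ℤ) (k : D → ℤ) (u : E → ℤ)
    (v : F → ℤ) : A ⊕ B ⊕ C ⊕ D ⊕ E ⊕ F → ℤ :=
  Sum.elim f (Sum.elim g (Sum.elim h (Sum.elim k (Sum.elim u v))))

/-- A row with seven column blocks. -/
def b7 {A B C D E F G : Type} (f : A → ℤ) (g : B → ℤ) (h : C → ℤ) (k : D → ℤ) (u : E → ℤ)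
    (v : F → ℤ) (w : G → ℤ) : A ⊕ B ⊕ C ⊕ D ⊕ E ⊕ F ⊕ G → ℤ :=
  Sum.elim f (b6 g h k u v w)

/-- Block matrix. -/
def Lp (p a : ℤ) (x y l n : ℕ) (t0 t1 : Fin l → ℤ) (tk : Fin n → Fin l → ℤ) : Matrix (RI x y n) (CI x y l) ℤ :=
  Matrix.of (
    Sum.elim (fun _ => b6 (fun _ => p) (fun _ => 1 - p) 0 0 (fun _ => -1) 0) <|
    Sum.elim (fun _ => b6 (fun _ => -p) (fun _ => p * ((x : ℤ) + 1) + a - (x : ℤ) - 1) (fun _ => -p) 0 (fun _ => (x : ℤ) + 1 - a) 0) <|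
    Sum.elim (fun i => b6 0 (fun _ => 1 - p) (fun j => if i = j then p else 0) 0 (fun _ => -1) 0) <|
    Sum.elim (fun i => b6 0 (fun _ => -1) 0 (fun j => if i = j then p else 0) (fun _ => 1 - p) 0) <|
    Sum.elim (fun _ => b6 0 (fun _ => (y : ℤ) + 1 - a) 0 (fun _ => -p) (fun _ => p * ((y : ℤ) + 1) + a - (y : ℤ) - 1) (fun j => t0 j)) <|
    Sum.elim (fun _ => b6 0 (fun _ => -1) 0 0 (fun _ => 1 - p) (fun j => t1 j)) <|
    (fun i => b6 0 0 0 0 0 (fun j => tk i j)))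

/-- Block matrix. -/
def Lq (p a : ℤ) (x y l n : ℕ) (t0 t1 : Fin l → ℤ) (tk : Fin n → Fin l → ℤ) : Matrix (RI x y n) (CI x y l) ℤ :=
  Matrix.of (
    Sum.elim (fun _ => b6 (fun _ => 1) 0 0 0 0 0) <|
    Sum.elim (fun _ => b6 0 (fun _ => a * p) 0 0 0 0) <|
    Sum.elim (fun i => b6 0 0 (fun j => if i = j then p else 0) 0 0 0) <|
    Sum.elim (fun i => b6 0 0 0 (fun j => if i = j then p else 0) 0 0) <|
    Sum.elim (fun _ => b6 0 0 0 0 (fun _ => p) (fun j => t0 j)) <|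
    Sum.elim (fun _ => b6 0 0 0 0 (fun _ => -p) (fun j => t1 j)) <|
    (fun i => b6 0 0 0 0 0 (fun j => tk i j)))

/-- Block matrix. -/
def Um (a : ℤ) (x y n : ℕ) : Matrix (RI x y n) (RI x y n) ℤ :=
  Matrix.of (
    Sum.elim (fun _ => b7 (fun _ => 1) 0 0 0 0 0 0) <|
    Sum.elim (fun _ => b7 (fun _ => a - 1) (fun _ => -1) (fun _ => -1) 0 0 0 0) <|
    Sum.elim (fun i => b7 (fun _ => -1) 0 (fun j => if i = j then 1 else 0) 0 0 0 0) <|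
    Sum.elim (fun i => b7 (fun _ => 1) 0 0 (fun j => if i = j then 1 else 0) 0 0 0) <|
    Sum.elim (fun _ => b7 0 (fun _ => 1) (fun _ => 1) (fun _ => 1) (fun _ => 1) 0 0) <|
    Sum.elim (fun _ => b7 (fun _ => 1) 0 0 0 0 (fun _ => 1) 0) <|
    (fun i => b7 0 0 0 0 0 0 (fun j => if i = j then 1 else 0)))

/-- Block matrix. -/
def Ui (a : ℤ) (x y n : ℕ) : Matrix (RI x y n) (RI x y n) ℤ :=
  Matrix.of (
    Sum.elim (fun _ => b7 (fun _ => 1) 0 0 0 0 0 0) <|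
    Sum.elim (fun _ => b7 (fun _ => a - 1 - (x : ℤ)) (fun _ => -1) (fun _ => -1) 0 0 0 0) <|
    Sum.elim (fun i => b7 (fun _ => 1) 0 (fun j => if i = j then 1 else 0) 0 0 0 0) <|
    Sum.elim (fun i => b7 (fun _ => -1) 0 0 (fun j => if i = j then 1 else 0) 0 0 0) <|
    Sum.elim (fun _ => b7 (fun _ => (y : ℤ) - a + 1) (fun _ => 1) 0 (fun _ => -1) (fun _ => 1) 0 0) <|
    Sum.elim (fun _ => b7 (fun _ => -1) 0 0 0 0 (fun _ => 1) 0) <|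
    (fun i => b7 0 0 0 0 0 0 (fun j => if i = j then 1 else 0)))

/-- Block matrix. -/
def Wm (p : ℤ) (x y l : ℕ) : Matrix (CI x y l) (CI x y l) ℤ :=
  Matrix.of (
    Sum.elim (fun _ => b6 (fun _ => p) (fun _ => 1 - p) 0 0 (fun _ => -1) 0) <|
    Sum.elim (fun _ => b6 (fun _ => 1) (fun _ => -1) 0 0 0 0) <|
    Sum.elim (fun i => b6 (fun _ => -1) 0 (fun j => if i = j then 1 else 0) 0 0 0) <|
    Sum.elim (fun i => b6 (fun _ => 1) (fun _ => -1) 0 (fun j => if i = j then 1 else 0) (fun _ => -1) 0) <|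
    Sum.elim (fun _ => b6 (fun _ => -1) (fun _ => 1) 0 0 (fun _ => 1) 0) <|
    (fun i => b6 0 0 0 0 0 (fun j => if i = j then 1 else 0)))

/-- Block matrix. -/
def Vm (p : ℤ) (x y l : ℕ) : Matrix (CI x y l) (CI x y l) ℤ :=
  Matrix.of (
    Sum.elim (fun _ => b6 (fun _ => 1) (fun _ => 2 - p) 0 0 (fun _ => 1) 0) <|
    Sum.elim (fun _ => b6 (fun _ => 1) (fun _ => 1 - p) 0 0 (fun _ => 1) 0) <|
    Sum.elim (fun i => b6 (fun _ => 1) (fun _ => 2 - p) (fun j => if i = j then 1 else 0) 0 (fun _ => 1) 0) <|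
    Sum.elim (fun i => b6 0 0 0 (fun j => if i = j then 1 else 0) (fun _ => 1) 0) <|
    Sum.elim (fun _ => b6 0 (fun _ => 1) 0 0 (fun _ => 1) 0) <|
    (fun i => b6 0 0 0 0 0 (fun j => if i = j then 1 else 0)))


set_option maxHeartbeats 8000000 in
lemma Um_Ui (a : ℤ) (x y n : ℕ) : Um a x y n * Ui a x y n = 1 := by
  ext r c
  rcases r with _ | _ | i | i | _ | _ | i <;> rcases c with _ | _ | j | j | _ | _ | j <;>
    simp [Matrix.mul_apply, Fintype.sum_sum_type, Matrix.of_apply, Sum.elim_inl, Sum.elim_inr, b6, b7, Pi.zero_apply,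
      Um, Ui, Matrix.one_apply] <;> ring

set_option maxHeartbeats 8000000 in
lemma Wm_Vm (p : ℤ) (x y l : ℕ) : Wm p x y l * Vm p x y l = 1 := by
  ext r c
  rcases r with _ | _ | i | i | _ | i <;> rcases c with _ | _ | j | j | _ | j <;>
    simp [Matrix.mul_apply, Fintype.sum_sum_type, Matrix.of_apply, Sum.elim_inl, Sum.elim_inr, b6, b7, Pi.zero_apply,
      Wm, Vm, Matrix.one_apply] <;> ring

set_option maxHeartbeats 8000000 in
lemma Um_Lp (p a : ℤ) (x y l n : ℕ) (t0 t1 : Fin l → ℤ) (tk : Fin n → Fin l → ℤ) :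
    Um a x y n * Lp p a x y l n t0 t1 tk = Lq p a x y l n t0 t1 tk * Wm p x y l := by
  ext r c
  rcases r with _ | _ | i | i | _ | _ | i <;> rcases c with _ | _ | j | j | _ | j <;>
    simp [Matrix.mul_apply, Fintype.sum_sum_type, Matrix.of_apply, Sum.elim_inl, Sum.elim_inr, b6, b7, Pi.zero_apply,
      Um, Lp, Lq, Wm] <;> ring

set_option maxHeartbeats 8000000 in
lemma L_eq (p a x y l n : ℕ) (t : Fin (n + 2) → Fin l → ℤ) :
    (lemmaMatrixL p a x y l (n + 2) t).submatrix (re x y n) (ce x y l) =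
      Lp p a x y l n (t 0) (t 1) (fun i => t i.succ.succ) := by
  ext r c
  rcases r with _ | _ | i | i | _ | _ | i <;> rcases c with _ | _ | j | j | _ | j <;>
    simp only [Matrix.submatrix_apply, lemmaMatrixL, re, ce, rpos, cpos, Lp, Sum.elim_inl, Sum.elim_inr, b6, b7, Pi.zero_apply,
      Matrix.of_apply,
      Equiv.ofBijective_apply, Fin.ext_iff] <;> first
      | ((repeat' first
            | refine Eq.trans (dif_neg (by omega)) ?_
            | refine Eq.trans (dif_pos (by omega)) ?_
            | refine Eq.trans (if_neg (by omega)) ?_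
            | refine Eq.trans (if_pos (by first | omega | trivial)) ?_) <;>
         first
          | rfl
          | (refine congrArg₂ t (Fin.ext ?_) (Fin.ext ?_) <;> simp <;> omega)
          | (split_ifs <;> first | rfl | (exfalso; omega)))
      | (split_ifs <;> first | rfl | (exfalso; omega))

set_option maxHeartbeats 8000000 in
lemma L'_eq (p a x y l n : ℕ) (t : Fin (n + 2) → Fin l → ℤ) :
    (lemmaMatrixL' p a x y l (n + 2) t).submatrix (re x y n) (ce x y l) =
      Lq p a x y l n (t 0) (t 1) (fun i => t i.succ.succ) := by
  ext r c
  rcases r with _ | _ | i | i | _ | _ | i <;> rcases c with _ | _ | j | j | _ | j <;>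
    simp only [Matrix.submatrix_apply, lemmaMatrixL', re, ce, rpos, cpos, Lq, Sum.elim_inl, Sum.elim_inr, b6, b7, Pi.zero_apply,
      Matrix.of_apply,
      Equiv.ofBijective_apply, Fin.ext_iff] <;> first
      | ((repeat' first
            | refine Eq.trans (dif_neg (by omega)) ?_
            | refine Eq.trans (dif_pos (by omega)) ?_
            | refine Eq.trans (if_neg (by omega)) ?_
            | refine Eq.trans (if_pos (by first | omega | trivial)) ?_) <;>
         first
          | rfl
          | (refine congrArg₂ t (Fin.ext ?_) (Fin.ext ?_) <;> simp <;> omega)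
          | (split_ifs <;> first | rfl | (exfalso; omega)))
      | (split_ifs <;> first | rfl | (exfalso; omega))

end LRed

/-- Lemma 7: the matrix `L` is equivalent over `ℤ` to the reduced matrix `L'`. -/
theorem lemmaMatrix_reduction (p a x y l m : ℕ) (hp : 2 ≤ p) (ha : 2 ≤ a) (hm : 2 ≤ m)
    (t : Fin m → Fin l → ℤ) :
    IntEquiv (lemmaMatrixL p a x y l m t) (lemmaMatrixL' p a x y l m t) := by
  obtain ⟨n, rfl⟩ : ∃ n, m = n + 2 := ⟨m - 2, by omega⟩
  refine ⟨(LRed.Um a x y n).submatrix (LRed.re x y n).symm (LRed.re x y n).symm,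
    (LRed.Vm p x y l).submatrix (LRed.ce x y l).symm (LRed.ce x y l).symm, ?_, ?_, ?_⟩
  · rw [Matrix.det_submatrix_equiv_self]
    exact Matrix.isUnit_det_of_right_inverse (LRed.Um_Ui a x y n)
  · rw [Matrix.det_submatrix_equiv_self]
    exact Matrix.isUnit_det_of_left_inverse (LRed.Wm_Vm p x y l)
  · have h1 : lemmaMatrixL p a x y l (n + 2) t =
        (LRed.Lp p a x y l n (t 0) (t 1) (fun i => t i.succ.succ)).submatrix
          (LRed.re x y n).symm (LRed.ce x y l).symm := by
      rw [← LRed.L_eq]; simp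
    have h2 : lemmaMatrixL' p a x y l (n + 2) t =
        (LRed.Lq p a x y l n (t 0) (t 1) (fun i => t i.succ.succ)).submatrix
          (LRed.re x y n).symm (LRed.ce x y l).symm := by
      rw [← LRed.L'_eq]; simp
    rw [h1, h2, Matrix.submatrix_mul_equiv, Matrix.submatrix_mul_equiv, LRed.Um_Lp,
      Matrix.mul_assoc, LRed.Wm_Vm, Matrix.mul_one]
end

section
/- Let k ≥ 1 and m, a_1, a_2, …, a_k ≥ 2 be integers. Let L be the 2k × 2k integer matrix whose only nonzero entries are (indices 1-based, entries only where the column index is between 1 and 2k): L[1,1] = m, L[1,2] = −m+1, L[1,3] = −1; L[2,1] = −m, L[2,2] = m + a_k − 1, L[2,3] = −(a_k − 1); and for each 1 ≤ j ≤ k−1: L[2j+1, 2j] = −(a_{k−j+1} − 1), L[2j+1, 2j+1] = m + a_{k−j+1} − 1, L[2j+1, 2j+2] = −m+1, L[2j+1, 2j+3] = −1 (if 2j+3 ≤ 2k); L[2j+2, 2j] = −1, L[2j+2, 2j+1] = −m+1, L[2j+2, 2j+2] = m + a_{k−j} − 1, L[2j+2, 2j+3] = −(a_{k−j} − 1) (if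 2j+3 ≤ 2k). Then the cokernel of L is isomorphic to Z_{m·a_1} ⊕ Z_{m·a_2} ⊕ … ⊕ Z_{m·a_k}. -/
/-- The cokernel of a square integer matrix `L`: the group `ℤ^n` modulo the subgroup
generated by the rows of `L`. -/
abbrev Matrix.cokernel {n : ℕ} (L : Matrix (Fin n) (Fin n) ℤ) : Type :=
  (Fin n → ℤ) ⧸ AddSubgroup.closure (Set.range fun i => L i)

/-- The reduced asymmetric Laplacian of the digraph `D_{m;a_1,…,a_k}` (0-based indexing;
the sequence `a` is taken 1-based, i.e. `a 1, …, a k` are the relevant values): row `0` has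
entries `m, −m+1, −1` in columns `0, 1, 2`; row `1` has `−m, m+a_k−1, −(a_k−1)` in columns
`0, 1, 2`; for `1 ≤ j ≤ k−1`, row `2j` has entries `−(a_{k−j+1}−1), m+a_{k−j+1}−1, −m+1, −1`
in columns `2j−1, 2j, 2j+1, 2j+2`, and row `2j+1` has entries `−1, −m+1, m+a_{k−j}−1,
−(a_{k−j}−1)` in columns `2j−1, 2j, 2j+1, 2j+2` (entries only where the column index is
in range). -/
def laplacianDma (k m : ℕ) (a : ℕ → ℕ) : Matrix (Fin (2 * k)) (Fin (2 * k)) ℤ :=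
  Matrix.of fun i j =>
    if (i : ℕ) = 0 then
      if (j : ℕ) = 0 then (m : ℤ)
      else if (j : ℕ) = 1 then 1 - (m : ℤ)
      else if (j : ℕ) = 2 then -1
      else 0
    else if (i : ℕ) = 1 then
      if (j : ℕ) = 0 then -(m : ℤ)
      else if (j : ℕ) = 1 then (m : ℤ) + (a k : ℤ) - 1
      else if (j : ℕ) = 2 then -((a k : ℤ) - 1)
      else 0
    else if (i : ℕ) % 2 = 0 then
      if (j : ℕ) = 2 * ((i : ℕ) / 2) - 1 then -((a (k - (i : ℕ) / 2 + 1) : ℤ) - 1)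
      else if (j : ℕ) = 2 * ((i : ℕ) / 2) then (m : ℤ) + (a (k - (i : ℕ) / 2 + 1) : ℤ) - 1
      else if (j : ℕ) = 2 * ((i : ℕ) / 2) + 1 then 1 - (m : ℤ)
      else if (j : ℕ) = 2 * ((i : ℕ) / 2) + 2 then -1
      else 0
    else
      if (j : ℕ) = 2 * (((i : ℕ) - 1) / 2) - 1 then -1
      else if (j : ℕ) = 2 * (((i : ℕ) - 1) / 2) then 1 - (m : ℤ)
      else if (j : ℕ) = 2 * (((i : ℕ) - 1) / 2) + 1 then
        (m : ℤ) + (a (k - ((i : ℕ) - 1) / 2) : ℤ) - 1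
      else if (j : ℕ) = 2 * (((i : ℕ) - 1) / 2) + 2 then
        -((a (k - ((i : ℕ) - 1) / 2) : ℤ) - 1)
      else 0

/-- Standard basis vector of `ℤ^n` at position `p` (zero when `p` is out of range). -/
def stdS (n p : ℕ) : Fin n → ℤ := fun q => if (q : ℕ) = p then 1 else 0

theorem stdS_ge (n p : ℕ) (h : n ≤ p) : stdS n p = 0 := by
  ext q
  have := q.2
  simp only [stdS, Pi.zero_apply]
  rw [if_neg (by omega)]

theorem sum_stdS (n : ℕ) (v : Fin n → ℤ) : v = ∑ q : Fin n, v q • stdS n q := by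
  ext r
  simp [stdS, Finset.sum_apply, Fin.val_inj]

theorem row_zero (k m : ℕ) (a : ℕ → ℕ) (h : 0 < 2 * k) :
    laplacianDma k m a ⟨0, h⟩ = (m : ℤ) • stdS (2 * k) 0 + (1 - (m : ℤ)) • stdS (2 * k) 1
      - stdS (2 * k) 2 := by
  ext ⟨q, hq⟩
  simp only [laplacianDma, Matrix.of_apply, stdS, Pi.add_apply, Pi.sub_apply, Pi.smul_apply,
    smul_eq_mul]
  split_ifs <;> first | omega | contradiction | simp

theorem row_one (k m : ℕ) (a : ℕ → ℕ) (h : 1 < 2 * k) :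
    laplacianDma k m a ⟨1, h⟩ = (-(m : ℤ)) • stdS (2 * k) 0
      + ((m : ℤ) + (a k : ℤ) - 1) • stdS (2 * k) 1
      + (-((a k : ℤ) - 1)) • stdS (2 * k) 2 := by
  ext ⟨q, hq⟩
  simp only [laplacianDma, Matrix.of_apply, stdS, Pi.add_apply, Pi.sub_apply, Pi.smul_apply,
    smul_eq_mul]
  split_ifs <;> first | omega | contradiction | simp

theorem row_even (k m : ℕ) (a : ℕ → ℕ) (j : ℕ) (h : 2 * (j + 1) < 2 * k) :
    laplacianDma k m a ⟨2 * (j + 1), h⟩ =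
      (-((a (k - (j + 1) + 1) : ℤ) - 1)) • stdS (2 * k) (2 * j + 1)
      + ((m : ℤ) + (a (k - (j + 1) + 1) : ℤ) - 1) • stdS (2 * k) (2 * (j + 1))
      + (1 - (m : ℤ)) • stdS (2 * k) (2 * (j + 1) + 1)
      - stdS (2 * k) (2 * (j + 2)) := by
  have e1 : 2 * (j + 1) / 2 = j + 1 := by omega
  ext ⟨q, hq⟩
  simp only [laplacianDma, Matrix.of_apply, stdS, Pi.add_apply, Pi.sub_apply, Pi.smul_apply,
    smul_eq_mul, e1]
  split_ifs <;> first | omega | contradiction | simp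

theorem row_odd (k m : ℕ) (a : ℕ → ℕ) (j : ℕ) (h : 2 * (j + 1) + 1 < 2 * k) :
    laplacianDma k m a ⟨2 * (j + 1) + 1, h⟩ =
      - stdS (2 * k) (2 * j + 1)
      + (1 - (m : ℤ)) • stdS (2 * k) (2 * (j + 1))
      + ((m : ℤ) + (a (k - (j + 1)) : ℤ) - 1) • stdS (2 * k) (2 * (j + 1) + 1)
      + (-((a (k - (j + 1)) : ℤ) - 1)) • stdS (2 * k) (2 * (j + 2)) := by
  have e1 : (2 * (j + 1) + 1 - 1) / 2 = j + 1 := by omega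
  ext ⟨q, hq⟩
  simp only [laplacianDma, Matrix.of_apply, stdS, Pi.add_apply, Pi.sub_apply, Pi.smul_apply,
    Pi.neg_apply, smul_eq_mul, e1]
  split_ifs <;> first | omega | contradiction | simp

/-- Alternating partial sums of the differences `x (2j) - x (2j+1)`. -/
def altF {A : Type*} [AddCommGroup A] (x : ℕ → A) : ℕ → A
  | 0 => 0
  | j + 1 => x (2 * j) - x (2 * j + 1) - altF x j

theorem map_altF {A B : Type*} [AddCommGroup A] [AddCommGroup B] (g : A →+ B) (x : ℕ → A) (j : ℕ) :
    g (altF x j) = altF (fun p => g (x p)) j := by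
  induction j with
  | zero => simp [altF]
  | succ j ih => simp [altF, ih]

/-- In a group where the row relations hold, consequences for the `altF` elements. -/
theorem rel_forward {A : Type*} [AddCommGroup A] (k m : ℕ) (a : ℕ → ℕ)
    (g : (Fin (2 * k) → ℤ) →+ A) (hg : ∀ i, g (laplacianDma k m a i) = 0) :
    ∀ j, j < k →
      (g (stdS _ (2 * j + 1)) - g (stdS _ (2 * (j + 1)))
          = -((m : ℤ) • altF (fun p => g (stdS (2 * k) p)) (j + 1))) ∧
      ((a (k - j) : ℤ) • (g (stdS _ (2 * j + 1)) - g (stdS _ (2 * (j + 1)))) = 0) := by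
  intro j
  induction j with
  | zero =>
    intro hj
    have h0 := hg ⟨0, by omega⟩
    have h1 := hg ⟨1, by omega⟩
    rw [row_zero] at h0
    rw [row_one] at h1
    simp only [map_add, map_sub, map_zsmul] at h0 h1
    simp only [altF, Nat.mul_zero, Nat.zero_add, Nat.mul_one, Nat.sub_zero]
    constructor
    · rw [← sub_eq_zero]
      linear_combination (norm := module) h0
    · rw [← add_zero (0 : A)]
      nth_rewrite 1 [← h0]
      rw [← h1]; module
  | succ j ih =>
    intro hj
    obtain ⟨i1, i2⟩ := ih (by omega)
    have h0 := hg ⟨2 * (j + 1), by omega⟩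
    have h1 := hg ⟨2 * (j + 1) + 1, by omega⟩
    rw [row_even] at h0
    rw [row_odd] at h1
    rw [show k - (j + 1) + 1 = k - j by omega] at h0
    simp only [map_add, map_sub, map_zsmul, map_neg] at h0 h1
    rw [altF]
    simp only [show j + 1 + 1 = j + 2 from rfl]
    generalize altF (fun p => g (stdS (2 * k) p)) (j + 1) = F at *
    generalize g (stdS (2 * k) (2 * j + 1)) = x1 at *
    generalize g (stdS (2 * k) (2 * (j + 1))) = x2 at *
    generalize g (stdS (2 * k) (2 * (j + 1) + 1)) = x3 at *
    generalize g (stdS (2 * k) (2 * (j + 2))) = x4 at *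
    have i1' : x1 - x2 + (m : ℤ) • F = 0 := by rw [i1]; simp
    constructor
    · rw [← sub_eq_zero]
      linear_combination (norm := module) h0 + i2 - i1'
    · linear_combination (norm := module) h0 + i2 + h1

theorem rel_forward_tors {A : Type*} [AddCommGroup A] (k m : ℕ) (a : ℕ → ℕ)
    (g : (Fin (2 * k) → ℤ) →+ A) (hg : ∀ i, g (laplacianDma k m a i) = 0) (i : ℕ) (hi : i < k) :
    ((m * a (i + 1) : ℕ) : ℤ) • altF (fun p => g (stdS (2 * k) p)) (k - i) = 0 := by
  obtain ⟨h1, h2⟩ := rel_forward k m a g hg (k - 1 - i) (by omega)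
  rw [h1, show k - 1 - i + 1 = k - i by omega,
    show k - (k - 1 - i) = i + 1 by omega] at h2
  rw [smul_neg, neg_eq_zero, smul_smul] at h2
  rw [Nat.cast_mul, mul_comm]
  exact h2

/-- Converse. -/
theorem rel_backward {A : Type*} [AddCommGroup A] (k m : ℕ) (a : ℕ → ℕ)
    (g : (Fin (2 * k) → ℤ) →+ A) (f : ℕ → A) (hf0 : f 0 = 0)
    (hf : ∀ j, j < k → ((m * a (k - j) : ℕ) : ℤ) • f (j + 1) = 0)
    (he : ∀ j, j < k → g (stdS _ (2 * j)) = f (j + 1) + f j + g (stdS _ (2 * j + 1)))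
    (hd : ∀ j, j < k → g (stdS _ (2 * j + 1)) = -((m : ℤ) • f (j + 1)) + g (stdS _ (2 * (j + 1)))) :
    ∀ i, g (laplacianDma k m a i) = 0 := by
  rintro ⟨i, hi⟩
  have hcase : i = 0 ∨ i = 1 ∨ (∃ j, i = 2 * (j + 1)) ∨ (∃ j, i = 2 * (j + 1) + 1) := by
    rcases Nat.even_or_odd' i with ⟨c, rfl | rfl⟩
    · rcases c with _ | c
      · simp
      · exact Or.inr (Or.inr (Or.inl ⟨c, rfl⟩))
    · rcases c with _ | c
      · simp
      · exact Or.inr (Or.inr (Or.inr ⟨c, rfl⟩))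
  rcases hcase with rfl | rfl | ⟨j, rfl⟩ | ⟨j, rfl⟩
  · have e := he 0 (by omega)
    have d := hd 0 (by omega)
    rw [row_zero]
    simp only [map_add, map_sub, map_zsmul, map_neg]
    simp only [Nat.mul_zero, Nat.zero_add, Nat.mul_one, hf0] at e d
    rw [e, d]; module
  · have e := he 0 (by omega)
    have d := hd 0 (by omega)
    have r := hf 0 (by omega)
    rw [row_one]
    simp only [map_add, map_sub, map_zsmul, map_neg]
    simp only [Nat.mul_zero, Nat.zero_add, Nat.mul_one, hf0, Nat.sub_zero, Nat.cast_mul] at e d r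
    rw [e, d]
    linear_combination (norm := module) - r
  · have d0 := hd j (by omega)
    have e := he (j + 1) (by omega)
    have d := hd (j + 1) (by omega)
    have r := hf j (by omega)
    rw [row_even]
    rw [show k - (j + 1) + 1 = k - j by omega]
    simp only [map_add, map_sub, map_zsmul, map_neg]
    simp only [Nat.cast_mul] at r
    rw [d0, e, d]
    linear_combination (norm := module) r
  · have d0 := hd j (by omega)
    have e := he (j + 1) (by omega)
    have d := hd (j + 1) (by omega)
    have r := hf (j + 1) (by omega)
    rw [row_odd]
    simp only [map_add, map_sub, map_zsmul, map_neg]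
    simp only [Nat.cast_mul] at r
    rw [d0, e, d]
    linear_combination (norm := module) - r

/-- The differences. -/
def dlt {A : Type*} [AddCommGroup A] (m : ℕ) (f : ℕ → A) (q : ℕ) : A :=
  if q % 2 = 0 then f (q / 2 + 1) + f (q / 2) else -((m : ℤ) • f (q / 2 + 1))

theorem exists_phi {A : Type*} [AddCommGroup A] (k m : ℕ) (f : ℕ → A) :
    ∃ g : (Fin (2 * k) → ℤ) →+ A,
      (∀ j, j < k → g (stdS _ (2 * j)) = f (j + 1) + f j + g (stdS _ (2 * j + 1))) ∧
      (∀ j, j < k →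
        g (stdS _ (2 * j + 1)) = -((m : ℤ) • f (j + 1)) + g (stdS _ (2 * (j + 1)))) := by
  let X : ℕ → A := fun p => ∑ q ∈ Finset.Ico p (2 * k), dlt m f q
  let g : (Fin (2 * k) → ℤ) →+ A :=
    { toFun := fun v => ∑ q, v q • X q
      map_zero' := by simp
      map_add' := by intro u v; simp [add_smul, Finset.sum_add_distrib] }
  have hX : ∀ p, g (stdS _ p) = X p := by
    intro p
    change ∑ q, stdS (2 * k) p q • X q = X p
    by_cases hp : p < 2 * k
    · rw [Finset.sum_eq_single ⟨p, hp⟩]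
      · simp [stdS]
      · intro b _ hb
        have : (b : ℕ) ≠ p := fun h => hb (Fin.ext h)
        simp [stdS, this]
      · simp
    · rw [stdS_ge _ _ (by omega)]
      simp only [Pi.zero_apply, zero_smul, Finset.sum_const_zero, X]
      rw [Finset.Ico_eq_empty (by omega)]; simp
  have hrec : ∀ p, p < 2 * k → X p = dlt m f p + X (p + 1) := by
    intro p hp
    exact Finset.sum_eq_sum_Ico_succ_bot hp _
  refine ⟨g, ?_, ?_⟩
  · intro j hj
    rw [hX, hX, hrec _ (by omega), dlt, if_pos (by omega), show 2 * j / 2 = j by omega]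
  · intro j hj
    rw [hX, hX, hrec _ (by omega), dlt, if_neg (by omega), show (2 * j + 1) / 2 = j by omega]
    rfl

/-- Homomorphism out of a product of `ZMod`s. -/
theorem exists_psi {A : Type*} [AddCommGroup A] (k : ℕ) (n : Fin k → ℕ) (F : Fin k → A)
    (hF : ∀ i, (n i : ℤ) • F i = 0) :
    ∃ ψ : ((i : Fin k) → ZMod (n i)) →+ A, ∀ i, ψ (Pi.single i 1) = F i := by
  let l : ∀ i, ZMod (n i) →+ A := fun i =>
    ZMod.lift (n i) ⟨zmultiplesHom A (F i), by simpa using hF i⟩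
  have hl : ∀ i, l i 1 = F i := by
    intro i
    have := ZMod.lift_coe (n i) ⟨zmultiplesHom A (F i), by simpa using hF i⟩ 1
    simpa [l] using this
  refine ⟨∑ i, (l i).comp (Pi.evalAddMonoidHom _ i), ?_⟩
  intro i
  rw [AddMonoidHom.finsetSum_apply, Finset.sum_eq_single i]
  · simp [hl]
  · intro b _ hb
    simp [Pi.single_eq_of_ne hb]
  · simp

theorem hom_ext_zmod {A : Type*} [AddCommGroup A] (k : ℕ) (n : Fin k → ℕ)
    (u v : ((i : Fin k) → ZMod (n i)) →+ A) (h : ∀ i, u (Pi.single i 1) = v (Pi.single i 1)) :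
    u = v := by
  apply AddMonoidHom.functions_ext
  intro i x
  obtain ⟨z, rfl⟩ := ZMod.intCast_surjective x
  have : (Pi.single i (z : ZMod (n i)) : (i : Fin k) → ZMod (n i)) = z • Pi.single i 1 := by
    rw [← Pi.single_smul]; simp
  rw [this, map_zsmul, map_zsmul, h]

/-- The cokernel of the reduced asymmetric Laplacian of `D_{m;a_1,…,a_k}` is isomorphic to
`ℤ/(m·a_1) ⊕ ⋯ ⊕ ℤ/(m·a_k)`. -/
theorem cokernel_laplacianDma (k m : ℕ) (hk : 1 ≤ k) (hm : 2 ≤ m) (a : ℕ → ℕ)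
    (ha : ∀ i, 1 ≤ i → i ≤ k → 2 ≤ a i) :
    Nonempty ((laplacianDma k m a).cokernel ≃+
      ((i : Fin k) → ZMod (m * a ((i : ℕ) + 1)))) := by
  let n : Fin k → ℕ := fun i => m * a ((i : ℕ) + 1)
  let H := AddSubgroup.closure (Set.range fun i => laplacianDma k m a i)
  let π : (Fin (2 * k) → ℤ) →+ (laplacianDma k m a).cokernel := QuotientAddGroup.mk' H
  have hπ : ∀ i, π (laplacianDma k m a i) = 0 := by
    intro i
    exact (QuotientAddGroup.eq_zero_iff _).2 (AddSubgroup.subset_closure ⟨i, rfl⟩)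
  -- generators on the product side
  let f : ℕ → ((i : Fin k) → ZMod (n i)) := fun j =>
    if h : 1 ≤ j ∧ j ≤ k then Pi.single ⟨k - j, by omega⟩ 1 else 0
  have hf0 : f 0 = 0 := by simp [f]
  have hfi : ∀ i : Fin k, f (k - i) = Pi.single i 1 := by
    intro i
    have := i.2
    have hi : (⟨k - (k - i), by omega⟩ : Fin k) = i := Fin.ext (by simp; omega)
    simp only [f]
    rw [dif_pos (by omega), hi]
  have hf : ∀ j, j < k → ((m * a (k - j) : ℕ) : ℤ) • f (j + 1) = 0 := by
    intro j hj
    have h := hfi ⟨k - 1 - j, by omega⟩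
    simp only [show k - (k - 1 - j) = j + 1 by omega] at h
    rw [h, ← Pi.single_smul]
    have : m * a (k - j) = n ⟨k - 1 - j, by omega⟩ := by
      simp only [n]; rw [show k - 1 - j + 1 = k - j by omega]
    rw [this]
    simp
  obtain ⟨g, he, hd⟩ := exists_phi k m f
  have hgr := rel_backward k m a g f hf0 hf he hd
  have hH : H ≤ g.ker := by
    rw [AddSubgroup.closure_le]
    rintro _ ⟨i, rfl⟩
    exact hgr i
  let Φ : (laplacianDma k m a).cokernel →+ ((i : Fin k) → ZMod (n i)) :=
    QuotientAddGroup.lift H g hH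
  have hΦ : ∀ v, Φ (π v) = g v := fun v => rfl
  have hrel := rel_forward k m a π hπ
  let F := altF (fun p => π (stdS (2 * k) p))
  obtain ⟨ψ, hψ⟩ := exists_psi k n (fun i => F (k - i)) 
    (fun i => rel_forward_tors k m a π hπ i i.2)
  have hψf : ∀ j, j ≤ k → ψ (f j) = F j := by
    intro j hj
    rcases j with _ | j
    · rw [hf0, map_zero]; rfl
    · have h := hfi ⟨k - 1 - j, by omega⟩
      have h' := hψ ⟨k - 1 - j, by omega⟩
      simp only [show k - (k - 1 - j) = j + 1 by omega] at h h'
      rw [h, h']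
  have hΦF : ∀ j, j ≤ k → Φ (F j) = f j := by
    intro j
    induction j with
    | zero => intro _; rw [hf0]; exact map_zero Φ
    | succ j ih =>
      intro hj
      have e : F (j + 1) = π (stdS _ (2 * j)) - π (stdS _ (2 * j + 1)) - F j := rfl
      rw [e, map_sub, map_sub, ih (by omega), hΦ, hΦ, he j (by omega)]
      abel
  have hback : ∀ t, t ≤ k → ψ (g (stdS _ (2 * (k - t)))) = π (stdS _ (2 * (k - t))) ∧
      (1 ≤ t → ψ (g (stdS _ (2 * (k - t) + 1))) = π (stdS _ (2 * (k - t) + 1))) := by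
    intro t
    induction t with
    | zero =>
      intro _
      rw [stdS_ge _ _ (by omega)]
      simp
    | succ t ih =>
      intro ht
      obtain ⟨i1, -⟩ := ih (by omega)
      have hs : k - t = k - (t + 1) + 1 := by omega
      rw [hs] at i1
      generalize hj : k - (t + 1) = j at *
      have hjk : j < k := by omega
      have hodd : ψ (g (stdS _ (2 * j + 1))) = π (stdS _ (2 * j + 1)) := by
        rw [hd j hjk, map_add, map_neg, map_zsmul, hψf _ (by omega), i1, ← (hrel j hjk).1]
        abel
      refine ⟨?_, fun _ => hodd⟩
      rw [he j hjk, map_add, map_add, hψf _ (by omega), hψf _ (by omega), hodd]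
      have e : F (j + 1) = π (stdS _ (2 * j)) - π (stdS _ (2 * j + 1)) - F j := rfl
      rw [e]; abel
  have hall : ∀ p, p < 2 * k → ψ (g (stdS _ p)) = π (stdS _ p) := by
    intro p hp
    have hb := hback (k - p / 2) (by omega)
    rw [show k - (k - p / 2) = p / 2 by omega] at hb
    rcases Nat.even_or_odd' p with ⟨c, rfl | rfl⟩
    · rw [show 2 * c / 2 = c by omega] at hb
      exact hb.1
    · rw [show (2 * c + 1) / 2 = c by omega] at hb
      exact hb.2 (by omega)
  refine ⟨AddMonoidHom.toAddEquiv Φ ψ ?_ ?_⟩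
  · refine AddMonoidHom.ext fun x => ?_
    obtain ⟨v, rfl⟩ := QuotientAddGroup.mk'_surjective H x
    change ψ (g v) = π v
    rw [sum_stdS _ v]
    simp only [map_sum, map_zsmul]
    exact Finset.sum_congr rfl fun q _ => by rw [hall q q.2]
  · apply hom_ext_zmod
    intro i
    change Φ (ψ (Pi.single i 1)) = Pi.single i 1
    rw [hψ, hΦF _ (by omega), hfi]
end

section
/- Let a, b, c ≥ 2 be integers and set t = a + b + c + 1. Then the cokernel of the 6 × 6 integer matrix [[c, 1−c, 0, 0, 0, 0], [−1, t−c, 0, −a, 0, −b], [0, 0, b, 1−b, 0, 0], [0, −a, −1, t−b, 0, −c], [0, 0, 0, 0, a, 1−a], [0, −b, 0, −c, −1, t−a]] is isomorphic to Z_{ab+bc+ac+1} ⊕ Z_{ab+bc+ac+1}. -/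
/-- The explicit map to the product of cyclic groups. -/
def cokMap (a b c : ℤ) (N : ℕ) : (Fin 6 → ℤ) →+ ZMod N × ZMod N where
  toFun z := (((z 0 * (a * b + a + b + 1) + z 1 * (a * b + 1) + z 2 * (a * b - a) + z 3 * (a * b)
      + z 4 * (a * b - b) + z 5 * (a * b) : ℤ) : ZMod N),
    ((z 0 * (a * c - a) + z 1 * (a * c) + z 2 * (a * c + a + c + 1) + z 3 * (a * c + 1)
      + z 4 * (a * c - c) + z 5 * (a * c) : ℤ) : ZMod N))
  map_zero' := by simp
  map_add' x y := by
    ext <;> simp only [Pi.add_apply, Prod.mk_add_mk] <;> push_cast <;> ring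

/-- For integers `a, b, c ≥ 2` and `t = a + b + c + 1`, the cokernel of the displayed
`6 × 6` matrix is isomorphic to `ℤ/(ab+bc+ac+1) ⊕ ℤ/(ab+bc+ac+1)`. -/
theorem cokernel_rank_two_matrix (a b c : ℕ) (ha : 2 ≤ a) (hb : 2 ≤ b) (hc : 2 ≤ c) :
    Nonempty
      ((!![(c : ℤ), 1 - (c : ℤ), 0, 0, 0, 0;
           -1, ((a : ℤ) + b + c + 1) - (c : ℤ), 0, -(a : ℤ), 0, -(b : ℤ);
           0, 0, (b : ℤ), 1 - (b : ℤ), 0, 0;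
           0, -(a : ℤ), -1, ((a : ℤ) + b + c + 1) - (b : ℤ), 0, -(c : ℤ);
           0, 0, 0, 0, (a : ℤ), 1 - (a : ℤ);
           0, -(b : ℤ), 0, -(c : ℤ), -1, ((a : ℤ) + b + c + 1) - (a : ℤ)]).cokernel ≃+
        (ZMod (a * b + b * c + a * c + 1) × ZMod (a * b + b * c + a * c + 1))) := by
  set L : Matrix (Fin 6) (Fin 6) ℤ := _ with hL
  change Nonempty (L.cokernel ≃+ _)
  set N := a * b + b * c + a * c + 1 with hN
  have hNz : (N : ℤ) = a * b + b * c + a * c + 1 := by simp [hN]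
  have hsurj : Function.Surjective (cokMap a b c N) := by
    rintro ⟨u, v⟩
    obtain ⟨u, rfl⟩ := ZMod.intCast_surjective u
    obtain ⟨v, rfl⟩ := ZMod.intCast_surjective v
    refine ⟨![0, u, 0, v, 0, - u - v], ?_⟩
    ext <;> simp [cokMap] <;> ring
  have hker : AddSubgroup.closure (Set.range fun i => L i) = (cokMap a b c N).ker := by
    apply le_antisymm
    · rw [AddSubgroup.closure_le]
      rintro _ ⟨i, rfl⟩
      rw [SetLike.mem_coe, AddMonoidHom.mem_ker]
      refine Prod.ext ((ZMod.intCast_zmod_eq_zero_iff_dvd _ _).2 ?_)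
        ((ZMod.intCast_zmod_eq_zero_iff_dvd _ _).2 ?_)
      · rw [hNz]
        refine ⟨(![(1 : ℤ), 0, 0, 0, 0, 0] : Fin 6 → ℤ) i, ?_⟩
        fin_cases i <;> simp [hL] <;> ring
      · rw [hNz]
        refine ⟨(![(0 : ℤ), 0, 1, 0, 0, 0] : Fin 6 → ℤ) i, ?_⟩
        fin_cases i <;> simp [hL] <;> ring
    · intro z hz
      rw [AddMonoidHom.mem_ker] at hz
      obtain ⟨k, hk⟩ := (ZMod.intCast_zmod_eq_zero_iff_dvd _ _).1 (congrArg Prod.fst hz)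
      obtain ⟨l, hl⟩ := (ZMod.intCast_zmod_eq_zero_iff_dvd _ _).1 (congrArg Prod.snd hz)
      rw [hNz] at hk hl
      have hmem : ∀ i, L i ∈ AddSubgroup.closure (Set.range fun i => L i) := fun i =>
        AddSubgroup.subset_closure ⟨i, rfl⟩
      obtain ⟨m, hm⟩ : ∃ m : ℤ, m = z 0 + z 1 + z 2 + z 3 + z 4 + z 5 - k - l := ⟨_, rfl⟩
      have hzeq : z = k • L 0 + (c * k - z 0) • L 1 + l • L 2 + (b * l - z 2) • L 3
          + m • L 4 + (a * m - z 4) • L 5 := by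
        ext i
        fin_cases i <;> simp [hL] <;> subst hm
        · ring
        · linear_combination hk
        · ring
        · linear_combination hl
        · ring
        · linear_combination -hk - hl
      rw [hzeq]
      have hs : ∀ (q : ℤ) i, q • L i ∈ AddSubgroup.closure (Set.range fun i => L i) :=
        fun q i => AddSubgroup.zsmul_mem _ (hmem i) q
      exact add_mem (add_mem (add_mem (add_mem (add_mem (hs _ _) (hs _ _)) (hs _ _)) (hs _ _))
        (hs _ _)) (hs _ _)
  exact ⟨(QuotientAddGroup.quotientAddEquivOfEq hker).trans
    (QuotientAddGroup.quotientKerEquivOfSurjective _ hsurj)⟩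
end

section
/- Let p, a ≥ 2 and x, y ≥ 0 be integers, and set r = p(x+1) + a − x − 1 and N = x + y + 3. Let L be the N × N integer matrix whose only nonzero entries are: L[1,1] = p, L[1,2] = −p+1; L[2,1] = −p, L[2,2] = r, and L[2, 2+i] = −p for 1 ≤ i ≤ x; for 1 ≤ i ≤ x, L[2+i, 2] = −p+1 and L[2+i, 2+i] = p; for 1 ≤ j ≤ y, L[2+x+j, 2] = −1 and L[2+x+j, 2+x+j] = p; and L[N, 2] = −1, L[N, N] = p. Then the cokernel of L is isomorphic to (Z_p)^{x+y+1} ⊕ Z_{p·a}. -/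
/-- The reduced asymmetric Laplacian of the digraph `D^{x+y+1}_{p;a}` (0-based indexing,
`N = x+y+3`): row `0` has `p, 1−p` in columns `0, 1`; row `1` has `−p` in column `0`,
`r = p(x+1)+a−x−1` in column `1` and `−p` in columns `2, …, x+1`; for `1 ≤ i ≤ x`, row
`1+i` has `1−p` in column `1` and `p` on the diagonal; for `1 ≤ j ≤ y`, row `1+x+j` has
`−1` in column `1` and `p` on the diagonal; row `N−1` has `−1` in column `1` and `p` in
column `N−1`. -/
def laplacianDpa (p a x y : ℕ) : Matrix (Fin (x + y + 3)) (Fin (x + y + 3)) ℤ :=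
  Matrix.of fun i j =>
    if (i : ℕ) = 0 then
      if (j : ℕ) = 0 then (p : ℤ)
      else if (j : ℕ) = 1 then 1 - (p : ℤ)
      else 0
    else if (i : ℕ) = 1 then
      if (j : ℕ) = 0 then -(p : ℤ)
      else if (j : ℕ) = 1 then (p : ℤ) * ((x : ℤ) + 1) + (a : ℤ) - (x : ℤ) - 1
      else if 2 ≤ (j : ℕ) ∧ (j : ℕ) ≤ x + 1 then -(p : ℤ)
      else 0
    else if (i : ℕ) ≤ x + 1 then
      if (j : ℕ) = 1 then 1 - (p : ℤ)
      else if (j : ℕ) = (i : ℕ) then (p : ℤ)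
      else 0
    else if (i : ℕ) ≤ x + y + 1 then
      if (j : ℕ) = 1 then -1
      else if (j : ℕ) = (i : ℕ) then (p : ℤ)
      else 0
    else
      if (j : ℕ) = 1 then -1
      else if (j : ℕ) = x + y + 2 then (p : ℤ)
      else 0

namespace DpaAux

/-- Indicator of the vertices of the first type. -/
def ep (x : ℕ) (k : ℕ) : ℤ := if k = 0 ∨ (2 ≤ k ∧ k ≤ x + 1) then 1 else 0

/-- Coefficients of the map to the big cyclic factor. -/
def co (p x : ℕ) (k : ℕ) : ℤ :=
  if k = 1 then (p : ℤ) else if k = 0 ∨ (2 ≤ k ∧ k ≤ x + 1) then (p : ℤ) - 1 else 1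

/-- Column index one. -/
def one (x y : ℕ) : Fin (x + y + 3) := ⟨1, by omega⟩

/-- The rows `p e_i - c_i e_1`. -/
def row (p x y : ℕ) (i : Fin (x + y + 3)) : Fin (x + y + 3) → ℤ :=
  fun j => (if j = i then (p : ℤ) else 0) - (if j = one x y then co p x i else 0)

/-- Indices of the `ℤ/p` factors. -/
def idx (x y : ℕ) (k : Fin (x + y + 1)) : Fin (x + y + 3) :=
  ⟨if (k : ℕ) = 0 then 0 else (k : ℕ) + 1, by split_ifs <;> omega⟩

lemma row_one (p x y : ℕ) : row p x y (one x y) = 0 := by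
  funext j
  have : co p x (one x y) = p := by simp [co, one]
  simp [row, this]

lemma row_eq (p a x y : ℕ) (i : Fin (x + y + 3)) (hi : i ≠ one x y) :
    laplacianDpa p a x y i = row p x y i := by
  funext j
  have hi' : (i : ℕ) ≠ 1 := fun h => hi (Fin.ext h)
  have h1 := i.2
  have h2 := j.2
  simp only [laplacianDpa, row, co, one, Matrix.of_apply, Fin.ext_iff]
  split_ifs <;> first | omega | grind

lemma sum_ep (x y : ℕ) : ∑ i : Fin (x + y + 3), ep x i = x + 1 := by
  rw [Fin.sum_univ_eq_sum_range (fun k => ep x k) (x + y + 3)]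
  simp only [ep]
  rw [Finset.sum_boole]
  have : (Finset.range (x + y + 3)).filter (fun k => k = 0 ∨ (2 ≤ k ∧ k ≤ x + 1))
      = insert 0 (Finset.Icc 2 (x + 1)) := by
    ext k
    simp only [Finset.mem_filter, Finset.mem_range, Finset.mem_insert, Finset.mem_Icc]
    omega
  rw [this, Finset.card_insert_of_notMem (by simp)]
  simp

lemma row1_eq (p a x y : ℕ) :
    laplacianDpa p a x y (one x y)
      = Pi.single (one x y) (a : ℤ) - ∑ i : Fin (x + y + 3), ep x i • row p x y i := by
  funext j
  simp only [Pi.sub_apply, Finset.sum_apply, Pi.smul_apply, smul_eq_mul, row, mul_sub,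
    Finset.sum_sub_distrib, mul_ite, mul_zero, Finset.sum_ite_eq, Finset.mem_univ, if_true]
  by_cases hj : j = one x y
  · subst hj
    have h : ∑ i : Fin (x + y + 3), ep x i * co p x i = ((p : ℤ) - 1) * (x + 1) := by
      rw [← sum_ep x y, Finset.mul_sum]
      refine Finset.sum_congr rfl fun i _ => ?_
      simp only [ep, co]
      split_ifs <;> first | omega | ring
    simp only [if_true, h]
    simp [laplacianDpa, one, ep]
    ring
  · have hj' : (j : ℕ) ≠ 1 := fun h => hj (Fin.ext h)
    simp only [hj, if_false, Pi.single_apply, Finset.sum_const_zero]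
    simp only [laplacianDpa, one, ep, Matrix.of_apply]
    split_ifs <;> first | omega | grind

/-- The map to the target. -/
def phi (p a x y : ℕ) :
    (Fin (x + y + 3) → ℤ) →+ ((Fin (x + y + 1) → ZMod p) × ZMod (p * a)) where
  toFun v := (fun k => (v (idx x y k) : ZMod p), ((∑ i : Fin (x + y + 3), co p x i * v i : ℤ) : ZMod (p * a)))
  map_zero' := by
    ext <;> simp
  map_add' u v := by
    ext <;> simp [mul_add, Finset.sum_add_distrib]

lemma idx_ne (x y : ℕ) (k : Fin (x + y + 1)) : idx x y k ≠ one x y := by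
  intro h
  have h' : (idx x y k : ℕ) = (one x y : ℕ) := congrArg Fin.val h
  simp only [idx, one] at h'
  split_ifs at h' <;> omega

lemma phi_row (p a x y : ℕ) (i : Fin (x + y + 3)) : phi p a x y (row p x y i) = 0 := by
  ext k
  · simp only [phi, row, AddMonoidHom.coe_mk, ZeroHom.coe_mk, idx_ne, if_false]
    split_ifs <;> simp
  · simp only [phi, row, AddMonoidHom.coe_mk, ZeroHom.coe_mk, mul_sub,
    Finset.sum_sub_distrib, mul_ite, mul_zero, Finset.sum_ite_eq', Finset.mem_univ, if_true]
    have : co p x (one x y) = p := by simp [co, one]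
    rw [this, mul_comm (p : ℤ), sub_self]
    simp

lemma phi_single (p a x y : ℕ) : phi p a x y (Pi.single (one x y) (a : ℤ)) = 0 := by
  ext k
  · simp [phi, Pi.single_apply, idx_ne]
  · have : co p x (one x y) = p := by simp [co, one]
    simp only [phi, AddMonoidHom.coe_mk, ZeroHom.coe_mk, Pi.single_apply, mul_ite, mul_zero,
      Finset.sum_ite_eq', Finset.mem_univ, if_true, this]
    have := ZMod.natCast_self (p * a)
    push_cast at this ⊢
    exact this

lemma ker_le (p a x y : ℕ) (hp : 2 ≤ p) (v : Fin (x + y + 3) → ℤ) (hv : phi p a x y v = 0) :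
    v ∈ AddSubgroup.closure (Set.range fun i => laplacianDpa p a x y i) := by
  set H := AddSubgroup.closure (Set.range fun i => laplacianDpa p a x y i) with hH
  have hL : ∀ i, laplacianDpa p a x y i ∈ H := fun i =>
    AddSubgroup.subset_closure ⟨i, rfl⟩
  have hR : ∀ i, row p x y i ∈ H := by
    intro i
    by_cases hi : i = one x y
    · rw [hi, row_one]; exact H.zero_mem
    · rw [← row_eq p a x y i hi]; exact hL i
  have hA : Pi.single (one x y) (a : ℤ) ∈ H := by
    have := H.add_mem (hL (one x y)) (H.sum_mem (t := Finset.univ)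
      (f := fun i : Fin (x + y + 3) => ep x i • row p x y i)
      (fun i _ => H.zsmul_mem (hR i) _))
    rw [row1_eq, sub_add_cancel] at this
    exact this
  have hp0 : (p : ℤ) ≠ 0 := by positivity
  have h1 : ∀ k, (p : ℤ) ∣ v (idx x y k) := fun k => by
    have := congrFun (congrArg Prod.fst hv) k
    exact (ZMod.intCast_zmod_eq_zero_iff_dvd _ _).1 this
  have h2 : ((p * a : ℕ) : ℤ) ∣ ∑ i : Fin (x + y + 3), co p x i * v i := by
    have := congrArg Prod.snd hv
    exact (ZMod.intCast_zmod_eq_zero_iff_dvd _ _).1 this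
  have h3 : ∀ i : Fin (x + y + 3), i ≠ one x y → i ≠ Fin.last _ → (p : ℤ) ∣ v i := by
    intro i hi hl
    have hi' : (i : ℕ) ≠ 1 := fun h => hi (Fin.ext h)
    have hl' : (i : ℕ) ≠ x + y + 2 := fun h => hl (Fin.ext h)
    have := i.2
    have h : idx x y ⟨(i : ℕ) - 1, by omega⟩ = i := by
      apply Fin.ext
      simp only [idx]
      split_ifs <;> omega
    rw [← h]; exact h1 _
  have h4 : (p : ℤ) ∣ v (Fin.last _) := by
    have hd : (p : ℤ) ∣ ∑ i : Fin (x + y + 3), co p x i * v i :=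
      dvd_trans ⟨(a : ℤ), by push_cast; rfl⟩ h2
    rw [← Finset.add_sum_erase _ _ (Finset.mem_univ (Fin.last (x + y + 2)))] at hd
    have he : (p : ℤ) ∣ ∑ i ∈ Finset.univ.erase (Fin.last (x + y + 2)), co p x i * v i := by
      refine Finset.dvd_sum fun i hi => ?_
      by_cases h : i = one x y
      · subst h
        exact Dvd.dvd.mul_right (by simp [co, one]) _
      · exact Dvd.dvd.mul_left (h3 i h (Finset.ne_of_mem_erase hi)) _
    have := (dvd_add_left he).1 hd
    have hc : co p x (Fin.last (x + y + 2)) = 1 := by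
      rw [co, Fin.val_last, if_neg (by omega), if_neg (by omega)]
    rwa [hc, one_mul] at this
  have h5 : ∀ i, ∃ w : ℤ, v i - (if i = one x y then v (one x y) else 0) = p * w := by
    intro i
    by_cases h : i = one x y
    · exact ⟨0, by simp [h]⟩
    · simp only [h, if_false, sub_zero]
      by_cases hl : i = Fin.last _
      · rw [hl]; exact h4
      · exact h3 i h hl
  choose w hw using h5
  obtain ⟨t, ht⟩ := h2
  have h6 : v (one x y) + ∑ i : Fin (x + y + 3), w i * co p x i = a * t := by
    apply mul_left_cancel₀ hp0
    have e : ∑ i : Fin (x + y + 3), co p x i * v i = p * v (one x y) + p * ∑ i : Fin (x + y + 3), w i * co p x i := by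
      have : ∀ i : Fin (x + y + 3), co p x i * v i
          = (if i = one x y then co p x i * v (one x y) else 0) + p * (w i * co p x i) := by
        intro i
        have := hw i
        split_ifs at this ⊢ <;> linear_combination (co p x i) * this
      rw [Finset.sum_congr rfl (fun i _ => this i), Finset.sum_add_distrib, Finset.mul_sum]
      simp [co, one]
    rw [mul_add, ← e, ht]
    push_cast; ring
  have h7 : v = (∑ i : Fin (x + y + 3), w i • row p x y i) + t • Pi.single (one x y) (a : ℤ) := by
    funext j
    simp only [Pi.add_apply, Finset.sum_apply, Pi.smul_apply, smul_eq_mul, row, mul_sub,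
      Finset.sum_sub_distrib, mul_ite, mul_zero, Finset.sum_ite_eq, Finset.mem_univ, if_true,
      Pi.single_apply]
    have := hw j
    by_cases hj : j = one x y
    · subst hj
      simp only [if_true] at this ⊢
      linear_combination h6 + this
    · simp only [hj, if_false, Finset.sum_const_zero] at this ⊢
      linear_combination this
  rw [h7]
  exact H.add_mem (H.sum_mem fun i _ => H.zsmul_mem (hR i) _) (H.zsmul_mem hA _)

lemma ker_eq (p a x y : ℕ) (hp : 2 ≤ p) :
    AddSubgroup.closure (Set.range fun i => laplacianDpa p a x y i) = (phi p a x y).ker := by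
  apply le_antisymm
  · rw [AddSubgroup.closure_le]
    rintro _ ⟨i, rfl⟩
    change phi p a x y (laplacianDpa p a x y i) = 0
    by_cases hi : i = one x y
    · rw [hi, row1_eq, map_sub, map_sum, phi_single]
      simp only [map_zsmul, phi_row, smul_zero, Finset.sum_const_zero, sub_zero]
    · rw [row_eq p a x y i hi, phi_row]
  · intro v hv
    exact ker_le p a x y hp v hv

lemma idx_inj (x y : ℕ) : Function.Injective (idx x y) := by
  intro k l h
  simp only [idx, Fin.ext_iff] at h ⊢
  split_ifs at h <;> omega

lemma phi_surj (p a x y : ℕ) : Function.Surjective (phi p a x y) := by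
  rintro ⟨f, z⟩
  choose g hg using fun k => ZMod.intCast_surjective (f k)
  obtain ⟨n, rfl⟩ := ZMod.intCast_surjective z
  set u : Fin (x + y + 3) → ℤ := Function.extend (idx x y) g 0 with hu
  set m : ℤ := n - ∑ i : Fin (x + y + 3), co p x i * u i with hm
  have hne : ∀ k, idx x y k ≠ Fin.last (x + y + 2) := by
    intro k
    intro h
    have h' : (idx x y k : ℕ) = x + y + 2 := congrArg Fin.val h
    simp only [idx] at h'
    have := k.2
    split_ifs at h' <;> omega
  have hc : co p x (Fin.last (x + y + 2)) = 1 := by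
    rw [co, Fin.val_last, if_neg (by omega), if_neg (by omega)]
  refine ⟨u + Pi.single (Fin.last (x + y + 2)) m, ?_⟩
  ext k
  · simp only [phi, AddMonoidHom.coe_mk, ZeroHom.coe_mk, Pi.add_apply, Pi.single_apply, hne,
      if_false, add_zero, hu, (idx_inj x y).extend_apply, hg]
  · simp only [phi, AddMonoidHom.coe_mk, ZeroHom.coe_mk, Pi.add_apply, Pi.single_apply, mul_add,
      Finset.sum_add_distrib, mul_ite, mul_zero, Finset.sum_ite_eq', Finset.mem_univ, if_true,
      hc, one_mul, hm, add_sub_cancel]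

end DpaAux

/-- The cokernel of the reduced asymmetric Laplacian of `D^{x+y+1}_{p;a}` is isomorphic to
`(ℤ/p)^{x+y+1} ⊕ ℤ/(p·a)`. -/
theorem cokernel_laplacianDpa (p a x y : ℕ) (hp : 2 ≤ p) (ha : 2 ≤ a) :
    Nonempty ((laplacianDpa p a x y).cokernel ≃+
      ((Fin (x + y + 1) → ZMod p) × ZMod (p * a))) := by
  exact ⟨(QuotientAddGroup.quotientAddEquivOfEq (DpaAux.ker_eq p a x y hp)).trans
    (QuotientAddGroup.quotientKerEquivOfSurjective _ (DpaAux.phi_surj p a x y))⟩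
end

section
/- Let m ≥ 1 be an integer and let L be the 3 × 3 integer matrix with every diagonal entry equal to 2m+1 and every off-diagonal entry equal to −m (i.e. L = (3m+1)·I_3 − m·J_3, where J_3 is the all-ones matrix). Then the cokernel of L is isomorphic to Z_{3m+1} ⊕ Z_{3m+1}. -/
/-- For `m ≥ 1`, the cokernel of the `3 × 3` matrix with diagonal entries `2m+1` and
off-diagonal entries `−m` (i.e. `(3m+1)·I₃ − m·J₃`) is isomorphic to
`ℤ/(3m+1) ⊕ ℤ/(3m+1)`. -/
theorem cokernel_three_by_three (m : ℕ) (hm : 1 ≤ m) :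
    Nonempty
      ((Matrix.of fun i j : Fin 3 =>
          if i = j then 2 * (m : ℤ) + 1 else -(m : ℤ)).cokernel ≃+
        (ZMod (3 * m + 1) × ZMod (3 * m + 1))) := by
  set r : Fin 3 → Fin 3 → ℤ := (Matrix.of fun i j : Fin 3 =>
          if i = j then 2 * (m : ℤ) + 1 else -(m : ℤ)) with hr
  let f : (Fin 3 → ℤ) →+ (ZMod (3 * m + 1) × ZMod (3 * m + 1)) :=
    { toFun := fun x => (((x 0 - x 2 : ℤ) : ZMod (3 * m + 1)), ((x 1 - x 2 : ℤ) : ZMod (3 * m + 1)))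
      map_zero' := by simp
      map_add' := by
        intro x y
        ext <;> simp <;> ring }
  have hf : Function.Surjective f := by
    rintro ⟨a, b⟩
    obtain ⟨a, rfl⟩ := ZMod.intCast_surjective a
    obtain ⟨b, rfl⟩ := ZMod.intCast_surjective b
    exact ⟨![a, b, 0], by simp [f]⟩
  have hfx : ∀ x, x ∈ f.ker ↔
      ((3 * m + 1 : ℤ) ∣ x 0 - x 2) ∧ ((3 * m + 1 : ℤ) ∣ x 1 - x 2) := by
    intro x
    have e : ((3 * m + 1 : ℕ) : ℤ) = 3 * m + 1 := by push_cast; rfl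
    rw [AddMonoidHom.mem_ker, ← e, ← ZMod.intCast_zmod_eq_zero_iff_dvd,
      ← ZMod.intCast_zmod_eq_zero_iff_dvd]
    exact Prod.ext_iff
  have hker : AddSubgroup.closure (Set.range fun i => r i) = f.ker := by
    apply le_antisymm
    · rw [AddSubgroup.closure_le]
      rintro _ ⟨i, rfl⟩
      rw [SetLike.mem_coe, hfx]
      fin_cases i
      · exact ⟨⟨1, by simp [hr]; ring⟩, ⟨0, by simp [hr]⟩⟩
      · exact ⟨⟨0, by simp [hr]⟩, ⟨1, by simp [hr]; ring⟩⟩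
      · exact ⟨⟨-1, by simp [hr]; ring⟩, ⟨-1, by simp [hr]; ring⟩⟩
    · intro x hx
      obtain ⟨⟨a, ha⟩, ⟨b, hb⟩⟩ := (hfx x).1 hx
      have hmem : ∀ i, r i ∈ AddSubgroup.closure (Set.range fun i => r i) :=
        fun i => AddSubgroup.subset_closure ⟨i, rfl⟩
      have hx' : x = (a + ((a + b) * m + x 2)) • r 0 + (b + ((a + b) * m + x 2)) • r 1
          + ((a + b) * m + x 2) • r 2 := by
        ext j
        fin_cases j
        · simp [hr]; linear_combination ha
        · simp [hr]; linear_combination hb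
        · simp [hr]; ring
      rw [hx']
      exact add_mem (add_mem (zsmul_mem (hmem 0) _) (zsmul_mem (hmem 1) _)) (zsmul_mem (hmem 2) _)
  exact ⟨(QuotientAddGroup.quotientAddEquivOfEq hker).trans
    (QuotientAddGroup.quotientKerEquivOfSurjective f hf)⟩
end
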